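/- Suppose that s and k are natural numbers with k ≥ 3 and s > s₁(k). Then there exist a positive number δ = δ(k,s) and a constant C = C(k,s) such that for all sufficiently large X one has ∫_𝔪 |g_k(α;X)|^s dα ≤ C·X^{s−k−δ}. -/

import Mathlib

/-- Number of integral solutions of the Vinogradov system of degree k
in 2s variables from [1,X]. -/
noncomputable def Jcount (s k : ℕ) (X : ℝ) : ℕ :=
  Set.ncard {xy : (Fin s → ℤ) × (Fin s → ℤ) |
    (∀ i, 1 ≤ xy.1 i ∧ (xy.1 i : ℝ) ≤ X) ∧
    (∀ i, 1 ≤ xy.2 i ∧ (xy.2 i : ℝ) ≤ X) ∧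
    ∀ j ∈ Finset.Icc 1 k, ∑ i, ((xy.1 i) ^ j - (xy.2 i) ^ j) = 0}

/-- η(s,k): the least positive η such that, for each ε > 0,
J_{s,k}(X) ≤ C X^{2s - k(k+1)/2 + η + ε} for all sufficiently large X. -/
noncomputable def etaExp (s k : ℕ) : ℝ :=
  sInf {η : ℝ | 0 < η ∧ ∀ ε : ℝ, 0 < ε → ∃ C X₀ : ℝ, 0 < C ∧ ∀ X : ℝ, X₀ ≤ X →
    (Jcount s k X : ℝ) ≤ C * X ^ (2*(s:ℝ) - (k:ℝ)*((k:ℝ)+1)/2 + η + ε)}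

/-- e(z) = exp(2πiz). -/
noncomputable def ec (z : ℝ) : ℂ := Complex.exp (2 * Real.pi * Complex.I * z)

/-- The Weyl sum g_k(α;X) = ∑_{1 ≤ x ≤ X} e(α x^k). -/
noncomputable def gk (k : ℕ) (X : ℝ) (α : ℝ) : ℂ :=
  ∑ x ∈ Finset.Icc 1 ⌊X⌋₊, ec (α * (x:ℝ)^k)

/-- Δ*_v = max(η(v,k) - 1, η(v,k-1)). -/
noncomputable def DstarC (k v : ℕ) : ℝ := max (etaExp v k - 1) (etaExp v (k-1))

/-- s₀(k,v,w) = 2k² - 2 - (2k² - 2 - (2v + w² - w))/(1 + Δ*_v/w). -/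
noncomputable def s0C (k v w : ℕ) : ℝ :=
  2*(k:ℝ)^2 - 2 - (2*(k:ℝ)^2 - 2 - (2*(v:ℝ) + (w:ℝ)^2 - (w:ℝ))) / (1 + DstarC k v / (w:ℝ))

/-- s₁(k): the minimum of s₀(k,v,w) over 1 ≤ w ≤ k-1 and v ≥ 1 with
2v + w² - w < 2k² - 2. -/
noncomputable def s1C (k : ℕ) : ℝ :=
  sInf {x : ℝ | ∃ v w : ℕ, 1 ≤ w ∧ w ≤ k-1 ∧ 1 ≤ v ∧
    2*(v:ℝ) + (w:ℝ)^2 - (w:ℝ) < 2*(k:ℝ)^2 - 2 ∧ x = s0C k v w}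

/-- The minor arcs 𝔪 = 𝔪_k: α ∈ [0,1) such that whenever (a,q) = 1 and
|qα - a| ≤ (2k)⁻¹ X^{1-k} one has q > (2k)⁻¹ X. -/
def minorArcs (k : ℕ) (X : ℝ) : Set ℝ :=
  {α | α ∈ Set.Ico (0:ℝ) 1 ∧ ∀ a : ℤ, ∀ q : ℕ, 0 < q → Int.gcd a q = 1 →
    |(q:ℝ) * α - (a:ℝ)| ≤ (2*(k:ℝ))⁻¹ * X ^ (1 - (k:ℝ)) → (2*(k:ℝ))⁻¹ * X < (q:ℝ)}

section meanValue

open Finset Polynomial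

/-- Minkowski's inequality for finite sums, with a natural exponent. -/
theorem sum_pow_sum_le {ι Y : Type*} [Fintype ι] [Fintype Y] (F : Y → ι → ℝ)
    (hF : ∀ y i, 0 ≤ F y i) {s : ℕ} (hs : 1 ≤ s) :
    ∑ i, (∑ y, F y i) ^ s ≤ (∑ y, (∑ i, F y i ^ s) ^ ((s : ℝ)⁻¹)) ^ s := by
  have : Fact (1 ≤ (s : ENNReal)) := ⟨by exact_mod_cast hs⟩
  have hs0 : s ≠ 0 := by omega
  have key : ∀ v : ι → ℝ, (∀ i, 0 ≤ v i) →
      ‖(WithLp.toLp (s : ENNReal) v : PiLp (s : ENNReal) (fun _ : ι => ℝ))‖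
        = (∑ i, v i ^ s) ^ ((s : ℝ)⁻¹) := by
    intro v hv
    rw [PiLp.norm_eq_sum (by simp; omega)]
    simp only [ENNReal.toReal_natCast, one_div, Real.rpow_natCast, Real.norm_eq_abs]
    congr 1
    exact Finset.sum_congr rfl fun i _ => by rw [abs_of_nonneg (hv i)]
  have h := norm_sum_le (Finset.univ : Finset Y)
    (fun y => (WithLp.toLp (s : ENNReal) (F y) : PiLp (s : ENNReal) (fun _ : ι => ℝ)))
  rw [← WithLp.toLp_sum, key] at h
  · simp only [key _ (hF _)] at h
    have hnn : 0 ≤ ∑ i, (∑ y, F y) i ^ s := Finset.sum_nonneg fun i _ => pow_nonneg (by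
        simp only [Finset.sum_apply]; exact Finset.sum_nonneg fun y _ => hF y i) _
    have h2 := pow_le_pow_left₀ (Real.rpow_nonneg hnn _) h s
    rw [Real.rpow_inv_natCast_pow hnn hs0] at h2
    simpa using h2
  · intro i
    simp only [Finset.sum_apply]; exact Finset.sum_nonneg fun y _ => hF y i

/-- Hölder's inequality for finite sums, in a form that involves only natural exponents. -/
theorem sum_pow_le_of_pow_le {ι : Type*} (I : Finset ι) (f U V : ι → ℝ)
    (hf : ∀ i, 0 ≤ f i) (hU : ∀ i, 0 ≤ U i) (hV : ∀ i, 0 ≤ V i) {m n : ℕ} (hmn : 1 ≤ n + m)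
    (h : ∀ i, f i ^ (n + m) ≤ U i ^ n * V i ^ m) :
    (∑ i ∈ I, f i) ^ (n + m) ≤ (∑ i ∈ I, U i) ^ n * (∑ i ∈ I, V i) ^ m := by
  have hne : n + m ≠ 0 := by omega
  rcases Nat.eq_zero_or_pos n with rfl | hn
  · simp only [zero_add, pow_zero, one_mul] at *
    exact pow_le_pow_left₀ (Finset.sum_nonneg fun i _ => hf i)
      (Finset.sum_le_sum fun i _ => le_of_pow_le_pow_left₀ hne (hV i) (h i)) _
  rcases Nat.eq_zero_or_pos m with rfl | hm
  · simp only [add_zero, pow_zero, mul_one] at *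
    exact pow_le_pow_left₀ (Finset.sum_nonneg fun i _ => hf i)
      (Finset.sum_le_sum fun i _ => le_of_pow_le_pow_left₀ hne (hU i) (h i)) _
  have hn' : (0 : ℝ) < n := by exact_mod_cast hn
  have hm' : (0 : ℝ) < m := by exact_mod_cast hm
  set a : ℝ := n / (n + m) with ha
  set b : ℝ := m / (n + m) with hb
  have hpq : (a⁻¹).HolderConjugate b⁻¹ := by
    rw [Real.holderConjugate_iff]
    constructor
    · rw [ha, inv_div, one_lt_div hn']; linarith
    · rw [inv_inv, inv_inv, ha, hb]; field_simp
  have ha0 : 0 < a := by positivity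
  have hb0 : 0 < b := by positivity
  have hH := Real.inner_le_Lp_mul_Lq_of_nonneg I (f := fun i => U i ^ a) (g := fun i => V i ^ b)
    hpq (fun i _ => Real.rpow_nonneg (hU i) _) (fun i _ => Real.rpow_nonneg (hV i) _)
  have e1 : ∀ i, (U i ^ a) ^ a⁻¹ = U i := fun i => by
    rw [← Real.rpow_mul (hU i), mul_inv_cancel₀ ha0.ne', Real.rpow_one]
  have e2 : ∀ i, (V i ^ b) ^ b⁻¹ = V i := fun i => by
    rw [← Real.rpow_mul (hV i), mul_inv_cancel₀ hb0.ne', Real.rpow_one]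
  simp only [e1, e2, one_div, inv_inv] at hH
  have pow_a : ∀ x : ℝ, 0 ≤ x → (x ^ a) ^ (n + m) = x ^ n := fun x hx => by
    rw [← Real.rpow_natCast, ← Real.rpow_mul hx, ← Real.rpow_natCast x n]
    congr 1; rw [ha]; push_cast; field_simp
  have pow_b : ∀ x : ℝ, 0 ≤ x → (x ^ b) ^ (n + m) = x ^ m := fun x hx => by
    rw [← Real.rpow_natCast, ← Real.rpow_mul hx, ← Real.rpow_natCast x m]
    congr 1; rw [hb]; push_cast; field_simp
  have hle : ∑ i ∈ I, f i ≤ ∑ i ∈ I, U i ^ a * V i ^ b := by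
    refine Finset.sum_le_sum fun i _ => ?_
    refine le_of_pow_le_pow_left₀ hne
      (mul_nonneg (Real.rpow_nonneg (hU i) _) (Real.rpow_nonneg (hV i) _)) ?_
    rw [mul_pow, pow_a _ (hU i), pow_b _ (hV i)]
    exact h i
  have hU' : 0 ≤ ∑ i ∈ I, U i := Finset.sum_nonneg fun i _ => hU i
  have hV' : 0 ≤ ∑ i ∈ I, V i := Finset.sum_nonneg fun i _ => hV i
  calc _ ≤ ((∑ i ∈ I, U i) ^ a * (∑ i ∈ I, V i) ^ b) ^ (n + m) :=
        pow_le_pow_left₀ (Finset.sum_nonneg fun i _ => hf i) (hle.trans hH) _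
    _ = _ := by rw [mul_pow, pow_a _ hU', pow_b _ hV']

theorem sum_pow_le_pow_sum {Y : Type*} (I : Finset Y) (F : Y → ℝ) (hF : ∀ y, 0 ≤ F y) {s : ℕ}
    (hs : 1 ≤ s) : ∑ y ∈ I, F y ^ s ≤ (∑ y ∈ I, F y) ^ s := by
  obtain ⟨t, rfl⟩ : ∃ t, s = t + 1 := ⟨s - 1, by omega⟩
  have hle : ∀ y ∈ I, F y ≤ ∑ y ∈ I, F y := fun y hy =>
    Finset.single_le_sum (fun y _ => hF y) hy
  calc ∑ y ∈ I, F y ^ (t + 1) ≤ ∑ y ∈ I, (∑ y ∈ I, F y) ^ t * F y :=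
        Finset.sum_le_sum fun y hy => by
          rw [pow_succ]
          exact mul_le_mul_of_nonneg_right (pow_le_pow_left₀ (hF y) (hle y hy) _) (hF y)
    _ = _ := by rw [← Finset.mul_sum, pow_succ]

/-- The exponential sum with frequencies `ψ i`, `i ∈ S`, and coefficients `a`. -/
noncomputable def oscSum {q : ℕ} [NeZero q] {k : ℕ} (ψ : ℤ → Fin k → ZMod q) (a : ℤ → ℂ)
    (S : Finset ℤ) (α : Fin k → ZMod q) : ℂ :=
  ∑ i ∈ S, a i * ZMod.stdAddChar (∑ m, α m * ψ i m)

/-- A weighted moment of the exponential sum `oscSum`. -/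
noncomputable def wMoment {q : ℕ} [NeZero q] {k : ℕ} (w : (Fin k → ZMod q) → ℝ)
    (ψ : ℤ → Fin k → ZMod q) (a : ℤ → ℂ) (s : ℕ) (S : Finset ℤ) : ℝ :=
  ∑ α, w α * ‖oscSum ψ a S α‖ ^ (2 * s)

/-- The moment of order `2 * s` of the exponential sum `oscSum`. -/
noncomputable def moment {q : ℕ} [NeZero q] {k : ℕ}
    (ψ : ℤ → Fin k → ZMod q) (a : ℤ → ℂ) (s : ℕ) (S : Finset ℤ) : ℝ :=
  ∑ α, ‖oscSum ψ a S α‖ ^ (2 * s)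

section osc
variable {q : ℕ} [NeZero q] {k : ℕ} (ψ : ℤ → Fin k → ZMod q) (a : ℤ → ℂ)

theorem moment_nonneg (s : ℕ) (S : Finset ℤ) : 0 ≤ moment ψ a s S :=
  Finset.sum_nonneg fun _ _ => by positivity

theorem wMoment_nonneg {w : (Fin k → ZMod q) → ℝ} (hw : ∀ α, 0 ≤ w α) (s : ℕ) (S : Finset ℤ) :
    0 ≤ wMoment w ψ a s S :=
  Finset.sum_nonneg fun α _ => mul_nonneg (hw α) (by positivity)

theorem norm_stdAddChar (x : ZMod q) : ‖(ZMod.stdAddChar x : ℂ)‖ = 1 := by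
  exact AddChar.norm_apply _ _

theorem oscSum_empty (α : Fin k → ZMod q) : oscSum ψ a ∅ α = 0 := by simp [oscSum]

theorem moment_empty {s : ℕ} (hs : 1 ≤ s) : moment ψ a s ∅ = 0 := by
  simp [moment, oscSum_empty]; omega

theorem sum_oscSum_filter {Y : Type*} [Fintype Y] [DecidableEq Y] (π : ℤ → Y) (S : Finset ℤ)
    (α : Fin k → ZMod q) : ∑ y, oscSum ψ a (S.filter fun i => π i = y) α = oscSum ψ a S α :=
  Finset.sum_fiberwise S π _

/-- A decoupling inequality for the frequencies `ψ'`, applied along translates of the image of a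
homomorphism `T` that pulls `ψ` back to `ψ'` up to constants, gives a weighted decoupling
inequality for `ψ`, whenever the weight is invariant under these translations. -/
theorem wMoment_le_of_decoupling {l : ℕ} (ψ' : ℤ → Fin l → ZMod q)
    (T : (Fin l → ZMod q) → Fin k → ZMod q) (c : (Fin l → ZMod q) → ZMod q) (S : Finset ℤ)
    (hT : ∀ i ∈ S, ∀ β, ∑ j, T β j * ψ i j = c β + ∑ m, β m * ψ' i m)
    (w : (Fin k → ZMod q) → ℝ) (hw : ∀ α, 0 ≤ w α) (hwT : ∀ α β, w (α + T β) = w α)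
    {Y : Type*} [Fintype Y] [DecidableEq Y] (π : ℤ → Y) {s : ℕ} (hs : 1 ≤ s) {D : ℝ} (hD : 0 ≤ D)
    (hdec : ∀ a' : ℤ → ℂ, moment ψ' a' s S
      ≤ D * (∑ y, moment ψ' a' s (S.filter fun i => π i = y) ^ ((s : ℝ)⁻¹)) ^ s) :
    wMoment w ψ a s S
      ≤ D * (∑ y, wMoment w ψ a s (S.filter fun i => π i = y) ^ ((s : ℝ)⁻¹)) ^ s := by
  have hs0 : s ≠ 0 := by omega
  set twist : (Fin k → ZMod q) → ℤ → ℂ := fun α i => a i * ZMod.stdAddChar (∑ m, α m * ψ i m)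
    with htwist
  set G : ℝ := ((Fintype.card (Fin l → ZMod q) : ℕ) : ℝ) with hG
  have hG0 : 0 < G := by rw [hG]; exact_mod_cast Fintype.card_pos
  have hshift : ∀ S' ⊆ S, ∀ α β, ‖oscSum ψ a S' (α + T β)‖ = ‖oscSum ψ' (twist α) S' β‖ := by
    intro S' hS' α β
    have : oscSum ψ a S' (α + T β) = ZMod.stdAddChar (c β) * oscSum ψ' (twist α) S' β := by
      unfold oscSum
      rw [Finset.mul_sum]
      refine Finset.sum_congr rfl fun i hi => ?_
      have : ∑ m, (α + T β) m * ψ i m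
          = (∑ m, α m * ψ i m) + (c β + ∑ m, β m * ψ' i m) := by
        rw [← hT i (hS' hi) β, ← Finset.sum_add_distrib]
        exact Finset.sum_congr rfl fun m _ => by simp [add_mul]
      rw [this, AddChar.map_add_eq_mul, AddChar.map_add_eq_mul, htwist]
      ring
    rw [this, norm_mul, norm_stdAddChar, one_mul]
  have havg : ∀ S' ⊆ S, G * wMoment w ψ a s S' = ∑ α, w α * moment ψ' (twist α) s S' := by
    intro S' hS'
    calc G * wMoment w ψ a s S' = ∑ _β : Fin l → ZMod q, wMoment w ψ a s S' := by
          simp [hG]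
      _ = ∑ β : Fin l → ZMod q, ∑ α, w (α + T β) * ‖oscSum ψ a S' (α + T β)‖ ^ (2 * s) :=
          Finset.sum_congr rfl fun β _ =>
            (Equiv.sum_comp (Equiv.addRight (T β))
              (fun α => w α * ‖oscSum ψ a S' α‖ ^ (2 * s))).symm
      _ = ∑ α, ∑ β : Fin l → ZMod q, w α * ‖oscSum ψ' (twist α) S' β‖ ^ (2 * s) := by
          rw [Finset.sum_comm]
          refine Finset.sum_congr rfl fun α _ => Finset.sum_congr rfl fun β _ => ?_
          rw [hwT, hshift S' hS']
      _ = _ := by simp only [moment, Finset.mul_sum]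
  set F : Y → (Fin k → ZMod q) → ℝ := fun y α =>
    (w α * moment ψ' (twist α) s (S.filter fun i => π i = y)) ^ ((s : ℝ)⁻¹) with hF
  have hnn : ∀ y α, 0 ≤ w α * moment ψ' (twist α) s (S.filter fun i => π i = y) := fun y α =>
    mul_nonneg (hw α) (moment_nonneg _ _ _ _)
  have hM := sum_pow_sum_le F (fun y α => Real.rpow_nonneg (hnn y α) _) hs
  have h1 : ∀ y, ∑ α, F y α ^ s = G * wMoment w ψ a s (S.filter fun i => π i = y) := by
    intro y
    rw [havg _ (Finset.filter_subset _ _)]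
    exact Finset.sum_congr rfl fun α _ => Real.rpow_inv_natCast_pow (hnn y α) hs0
  simp only [h1] at hM
  have h2 : (∑ y, (G * wMoment w ψ a s (S.filter fun i => π i = y)) ^ ((s : ℝ)⁻¹)) ^ s
      = G * (∑ y, wMoment w ψ a s (S.filter fun i => π i = y) ^ ((s : ℝ)⁻¹)) ^ s := by
    have : ∀ y, (G * wMoment w ψ a s (S.filter fun i => π i = y)) ^ ((s : ℝ)⁻¹)
        = G ^ ((s : ℝ)⁻¹) * wMoment w ψ a s (S.filter fun i => π i = y) ^ ((s : ℝ)⁻¹) := fun y =>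
      Real.mul_rpow hG0.le (wMoment_nonneg ψ a hw _ _)
    simp only [this]
    rw [← Finset.mul_sum, mul_pow, Real.rpow_inv_natCast_pow hG0.le hs0]
  rw [h2] at hM
  refine le_of_mul_le_mul_left ?_ hG0
  calc G * wMoment w ψ a s S = ∑ α, w α * moment ψ' (twist α) s S := havg S subset_rfl
    _ ≤ ∑ α, D * (∑ y, F y α) ^ s := by
        refine Finset.sum_le_sum fun α _ => ?_
        refine (mul_le_mul_of_nonneg_left (hdec (twist α)) (hw α)).trans (le_of_eq ?_)
        have : ∑ y, F y α = (w α) ^ ((s : ℝ)⁻¹) *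
            ∑ y, moment ψ' (twist α) s (S.filter fun i => π i = y) ^ ((s : ℝ)⁻¹) := by
          rw [Finset.mul_sum]
          exact Finset.sum_congr rfl fun y _ => Real.mul_rpow (hw α) (moment_nonneg _ _ _ _)
        rw [this, mul_pow, Real.rpow_inv_natCast_pow (hw α) hs0]
        ring
    _ = D * ∑ α, (∑ y, F y α) ^ s := by rw [Finset.mul_sum]
    _ ≤ D * (G * (∑ y, wMoment w ψ a s (S.filter fun i => π i = y) ^ ((s : ℝ)⁻¹)) ^ s) :=
        mul_le_mul_of_nonneg_left hM hD
    _ = _ := by ring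

end osc

theorem isUnit_of_castHom_ne_zero {p N : ℕ} (hp : p.Prime) (hN : p ∣ p ^ N) (x : ZMod (p ^ N))
    (h : ZMod.castHom hN (ZMod p) x ≠ 0) : IsUnit x := by
  have : NeZero (p ^ N) := ⟨pow_ne_zero _ hp.ne_zero⟩
  obtain ⟨n, rfl⟩ := ZMod.natCast_zmod_surjective x
  rw [map_natCast, Ne, ZMod.natCast_eq_zero_iff] at h
  rw [ZMod.isUnit_iff_coprime]
  exact Nat.Coprime.pow_right _ ((Nat.Prime.coprime_iff_not_dvd hp).2 h).symm

theorem X_pow_dvd_derivative {F : Type*} [CommRing F] {P : F[X]} {n : ℕ} {r : F}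
    (h : ∀ i < n, (taylor r P).coeff (i + 1) = 0) : (X - C r) ^ n ∣ derivative P := by
  have h1 : X ^ n ∣ taylor r (derivative P) := by
    rw [X_pow_dvd_iff]
    intro d hd
    have : taylor r (derivative P) = derivative (taylor r P) := by
      simp [taylor_apply, derivative_comp]
    rw [this, coeff_derivative, h d hd, zero_mul]
  obtain ⟨Q, hQ⟩ := h1
  refine ⟨taylor (-r) Q, ?_⟩
  have := congrArg (taylor (-r)) hQ
  rw [taylor_taylor, neg_add_cancel, taylor_zero] at this
  rw [this, taylor_mul, taylor_pow, taylor_X, C_neg, ← sub_eq_add_neg]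

/-- A polynomial without constant term, of degree at most `k < p`, is determined modulo `p` by
Taylor coefficients of positive degree at two points, `k` in total. -/
theorem eq_zero_of_taylor_coeff_eq_zero {p k l : ℕ} [Fact p.Prime] (hk : k < p) (hl : l ≤ k)
    {x y : ZMod p} (hxy : l < k → x ≠ y) (v : Fin k → ZMod p)
    (hy : ∀ i < k - l, (taylor y (∑ j, C (v j) * X ^ (j.1 + 1))).coeff (i + 1) = 0)
    (hx : ∀ i < l, (taylor x (∑ j, C (v j) * X ^ (j.1 + 1))).coeff (i + 1) = 0) : v = 0 := by
  set P : (ZMod p)[X] := ∑ j, C (v j) * X ^ (j.1 + 1) with hP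
  have h1 := X_pow_dvd_derivative hy
  have h2 := X_pow_dvd_derivative hx
  have hcop : IsCoprime ((X - C y) ^ (k - l)) ((X - C x) ^ l) := by
    rcases hl.lt_or_eq with h | h
    · exact (isCoprime_X_sub_C_of_isUnit_sub
        (sub_ne_zero.2 (hxy h).symm).isUnit).pow
    · subst h; simp [isCoprime_one_left]
  have h3 := hcop.mul_dvd h1 h2
  have hdeg : (derivative P).natDegree < k ∨ derivative P = 0 := by
    by_cases hk0 : k = 0
    · right; subst hk0; simp [hP]
    · left
      have : P.natDegree ≤ k := by
        refine natDegree_sum_le_of_forall_le _ _ fun j _ => ?_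
        exact (natDegree_C_mul_X_pow_le _ _).trans j.2
      have := natDegree_derivative_le P
      omega
  have h0 : derivative P = 0 := by
    rcases hdeg with hdeg | h
    · by_contra hne
      have := natDegree_le_of_dvd h3 hne
      rw [Monic.natDegree_mul ((monic_X_sub_C _).pow _) ((monic_X_sub_C _).pow _),
        (monic_X_sub_C _).natDegree_pow, (monic_X_sub_C _).natDegree_pow, natDegree_X_sub_C,
        natDegree_X_sub_C] at this
      omega
    · exact h
  funext j
  have := congrArg (fun Q => coeff Q j.1) h0
  simp only [coeff_derivative, coeff_zero] at this
  have hc : P.coeff (j.1 + 1) = v j := by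
    rw [hP, finsetSum_coeff, Finset.sum_eq_single j]
    · simp
    · intro b _ hb
      rw [coeff_C_mul_X_pow, if_neg]
      intro h; exact hb (Fin.ext (by omega))
    · simp
  rw [hc] at this
  rcases mul_eq_zero.1 this with h | h
  · exact h
  · exfalso
    have h' : ((j.1 + 1 : ℕ) : ZMod p) = 0 := by push_cast; exact h
    rw [ZMod.natCast_eq_zero_iff] at h'
    have := Nat.le_of_dvd (by omega) h'
    have := j.2
    omega

/-- The polynomial `X ^ (m + 1) + p * g`. -/
noncomputable def momentPoly (p : ℕ) {q : ℕ} {k : ℕ} (g : Fin k → (ZMod q)[X]) (m : Fin k) :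
    (ZMod q)[X] := X ^ (m.1 + 1) + C (p : ZMod q) * g m

/-- Linear combinations of the components of a curve close to the moment curve that are flat to
order `k - l` at `y` and look like a moment curve of dimension `l` near `x`. -/
theorem exists_adapted_combinations {p k l N : ℕ} [Fact p.Prime] (hk : k < p) (hl : l ≤ k)
    (g : Fin k → (ZMod (p ^ N))[X]) {x y : ℤ} (hxy : l < k → ¬ x ≡ y [ZMOD p]) :
    ∃ T : Fin l → Fin k → ZMod (p ^ N), ∀ m : Fin l,
      (∀ i < k - l, (taylor (y : ZMod (p ^ N))
        (∑ j, C (T m j) * momentPoly p g j)).coeff (i + 1) = 0) ∧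
      (∀ i < l, (taylor (x : ZMod (p ^ N))
        (∑ j, C (T m j) * momentPoly p g j)).coeff (i + 1) = if i = m.1 then 1 else 0) := by
  have hp : p.Prime := Fact.out
  rcases Nat.eq_zero_or_pos N with rfl | hN
  · have : Subsingleton (ZMod (p ^ 0)) := by rw [pow_zero]; infer_instance
    exact ⟨0, fun m => ⟨fun i _ => Subsingleton.elim _ _, fun i _ => Subsingleton.elim _ _⟩⟩
  have hd : p ∣ p ^ N := dvd_pow_self p hN.ne'
  let e : Fin (k - l) ⊕ Fin l ≃ Fin k := finSumFinEquiv.trans (finCongr (by omega))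
  let A : Matrix (Fin (k - l) ⊕ Fin l) (Fin k) (ZMod (p ^ N)) := fun r j =>
    Sum.elim (fun i => (taylor (y : ZMod (p ^ N)) (momentPoly p g j)).coeff (i.1 + 1))
      (fun i => (taylor (x : ZMod (p ^ N)) (momentPoly p g j)).coeff (i.1 + 1)) r
  let B : Matrix (Fin k) (Fin k) (ZMod (p ^ N)) := A.submatrix e.symm id
  have hcomb : ∀ (z : ZMod (p ^ N)) (v : Fin k → ZMod (p ^ N)) (i : ℕ),
      (taylor z (∑ j, C (v j) * momentPoly p g j)).coeff (i + 1)
        = ∑ j, (taylor z (momentPoly p g j)).coeff (i + 1) * v j := by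
    intro z v i
    rw [map_sum, finsetSum_coeff]
    refine Finset.sum_congr rfl fun j _ => ?_
    rw [taylor_mul, taylor_C, coeff_C_mul, mul_comm]
  have hdet : IsUnit B.det := by
    refine isUnit_of_castHom_ne_zero hp hd _ ?_
    set ρ := ZMod.castHom hd (ZMod p) with hρ
    rw [RingHom.map_det]
    intro h0
    obtain ⟨v, hv, hv0⟩ := Matrix.exists_mulVec_eq_zero_iff.2 h0
    apply hv
    have hred : ∀ (z : ℤ) (i : ℕ) (j : Fin k),
        ρ ((taylor (z : ZMod (p ^ N)) (momentPoly p g j)).coeff (i + 1))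
          = (taylor (z : ZMod p) (X ^ (j.1 + 1))).coeff (i + 1) := by
      intro z i j
      rw [← coeff_map, map_taylor, momentPoly]
      simp
    have hcombp : ∀ (z : ZMod p) (i : ℕ),
        (taylor z (∑ j, C (v j) * X ^ (j.1 + 1))).coeff (i + 1)
          = ∑ j : Fin k, (taylor z (X ^ (j.1 + 1))).coeff (i + 1) * v j := by
      intro z i
      rw [map_sum, finsetSum_coeff]
      refine Finset.sum_congr rfl fun j _ => ?_
      rw [taylor_mul, taylor_C, coeff_C_mul, mul_comm]
    have hrow : ∀ r : Fin (k - l) ⊕ Fin l, ∑ j, ρ (A r j) * v j = 0 := by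
      intro r
      have := congrFun hv0 (e r)
      simpa [Matrix.mulVec, dotProduct, B] using this
    refine eq_zero_of_taylor_coeff_eq_zero hk hl (x := (x : ZMod p)) (y := (y : ZMod p)) ?_ v ?_ ?_
    · intro h hh
      exact hxy h ((ZMod.intCast_eq_intCast_iff _ _ _).1 hh)
    · intro i hi
      rw [hcombp, ← hrow (Sum.inl ⟨i, hi⟩)]
      exact Finset.sum_congr rfl fun j _ => by rw [← hred]; rfl
    · intro i hi
      rw [hcombp, ← hrow (Sum.inr ⟨i, hi⟩)]
      exact Finset.sum_congr rfl fun j _ => by rw [← hred]; rfl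
  have hmul : B * B⁻¹ = 1 := Matrix.mul_nonsing_inv _ hdet
  have hrow : ∀ (r r' : Fin (k - l) ⊕ Fin l), ∑ j, A r j * B⁻¹ j (e r') = if r = r' then 1 else 0 := by
    intro r r'
    have := congrFun (congrFun hmul (e r)) (e r')
    rw [Matrix.mul_apply, Matrix.one_apply] at this
    simpa [B] using this
  refine ⟨fun m j => B⁻¹ j (e (Sum.inr m)), fun m => ⟨fun i hi => ?_, fun i hi => ?_⟩⟩
  · rw [hcomb]
    have := hrow (Sum.inl ⟨i, hi⟩) (Sum.inr m)
    rw [if_neg (by simp)] at this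
    exact this
  · rw [hcomb]
    have := hrow (Sum.inr ⟨i, hi⟩) (Sum.inr m)
    simp only [Sum.inr.injEq, Fin.ext_iff] at this
    exact this

theorem eq_C_add_X_pow_mul {F : Type*} [CommRing F] {Q : F[X]} {n : ℕ}
    (h : ∀ i < n, Q.coeff (i + 1) = 0) : ∃ R : F[X], Q = C (Q.coeff 0) + X ^ (n + 1) * R := by
  have : X ^ (n + 1) ∣ Q - C (Q.coeff 0) := by
    rw [X_pow_dvd_iff]
    rintro (_ | d) hd
    · simp
    · rw [coeff_sub, h d (by omega), coeff_C_succ, sub_zero]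
  obtain ⟨R, hR⟩ := this
  exact ⟨R, by rw [← hR]; ring⟩

/-- The combinations of `exists_adapted_combinations`, in terms of values at integers. -/
theorem exists_adapted_frequencies {p k l N : ℕ} [Fact p.Prime] (hk : k < p) (hl : l ≤ k)
    (g : Fin k → (ZMod (p ^ N))[X]) {x y : ℤ} (hxy : l < k → ¬ x ≡ y [ZMOD p]) :
    ∃ T : Fin l → Fin k → ZMod (p ^ N),
      (∀ (m : Fin l) (b ρ : ℕ) (z : ℤ), N ≤ ρ + (k - l + 1) * b → z ≡ y [ZMOD (p : ℤ) ^ b] →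
        (p : ZMod (p ^ N)) ^ ρ * ∑ j, T m j * (momentPoly p g j).eval (z : ZMod (p ^ N))
          = (p : ZMod (p ^ N)) ^ ρ * ∑ j, T m j * (momentPoly p g j).eval (y : ZMod (p ^ N))) ∧
      (∀ a : ℕ, 1 ≤ a → ∃ (g' : Fin l → (ZMod (p ^ N))[X]) (c : Fin l → ZMod (p ^ N)),
        ∀ (m : Fin l) (u : ℤ),
          ∑ j, T m j * (momentPoly p g j).eval ((x + (p : ℤ) ^ a * u : ℤ) : ZMod (p ^ N))
            = c m + (p : ZMod (p ^ N)) ^ (a * (m.1 + 1))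
                * (momentPoly p g' m).eval (u : ZMod (p ^ N))) := by
  obtain ⟨T, hT⟩ := exists_adapted_combinations hk hl g hxy
  have hval : ∀ (m : Fin l) (w z : ZMod (p ^ N)),
      ∑ j, T m j * (momentPoly p g j).eval z
        = (taylor w (∑ j, C (T m j) * momentPoly p g j)).eval (z - w) := by
    intro m w z
    rw [taylor_eval, sub_add_cancel, eval_finsetSum]
    simp
  refine ⟨T, fun m b ρ z hN hz => ?_, fun a ha => ?_⟩
  · obtain ⟨h, hh⟩ := eq_C_add_X_pow_mul (hT m).1
    rw [hval m y z, hval m y y, hh, sub_self]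
    obtain ⟨v, hv⟩ := hz.symm.dvd
    have hz' : (z : ZMod (p ^ N)) - (y : ZMod (p ^ N)) = (p : ZMod (p ^ N)) ^ b * (v : ZMod (p ^ N)) := by
      have := congrArg (Int.cast : ℤ → ZMod (p ^ N)) hv
      push_cast at this
      exact this
    rw [hz']
    simp only [eval_add, eval_C, eval_mul, eval_pow, eval_X]
    have h0 : (p : ZMod (p ^ N)) ^ (ρ + (k - l + 1) * b) = 0 := by
      have hpN : (p : ZMod (p ^ N)) ^ N = 0 := by
        rw [← Nat.cast_pow]; exact ZMod.natCast_self _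
      exact pow_eq_zero_of_le hN hpN
    rw [pow_add] at h0
    have : (p : ZMod (p ^ N)) ^ ρ * ((p : ZMod (p ^ N)) ^ b * (v : ZMod (p ^ N))) ^ (k - l + 1) = 0 := by
      rw [mul_pow, ← pow_mul, mul_comm b, ← mul_assoc, h0, zero_mul]
    rw [mul_add, ← mul_assoc, this]
    simp
  · have hex : ∀ m : Fin l, ∃ h : (ZMod (p ^ N))[X],
        taylor (x : ZMod (p ^ N)) (∑ j, C (T m j) * momentPoly p g j) =
          C ((taylor (x : ZMod (p ^ N)) (∑ j, C (T m j) * momentPoly p g j)).coeff 0)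
            + X ^ (m.1 + 1) + X ^ (l + 1) * h := by
      intro m
      set Q := taylor (x : ZMod (p ^ N)) (∑ j, C (T m j) * momentPoly p g j) with hQ
      obtain ⟨h, hh⟩ := eq_C_add_X_pow_mul (Q := Q - X ^ (m.1 + 1)) (n := l) (by
        intro i hi
        rw [coeff_sub, (hT m).2 i hi, coeff_X_pow]
        simp)
      refine ⟨h, ?_⟩
      rw [coeff_sub, coeff_X_pow, if_neg (by omega), sub_zero] at hh
      linear_combination hh
    choose h hh using hex
    refine ⟨fun m => C ((p : ZMod (p ^ N)) ^ (a * (l - m.1) - 1)) * X ^ (l + 1) *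
        (h m).comp (C ((p : ZMod (p ^ N)) ^ a) * X),
      fun m => (taylor (x : ZMod (p ^ N)) (∑ j, C (T m j) * momentPoly p g j)).coeff 0,
      fun m u => ?_⟩
    rw [hval m x, hh m, momentPoly]
    simp only [eval_add, eval_C, eval_mul, eval_pow, eval_X, eval_comp]
    have hsub : ((x + (p : ℤ) ^ a * u : ℤ) : ZMod (p ^ N)) - (x : ZMod (p ^ N))
        = (p : ZMod (p ^ N)) ^ a * (u : ZMod (p ^ N)) := by push_cast; ring
    rw [hsub, add_assoc]
    congr 1
    have hm := m.2
    have hexp : a * (l + 1) = a * (m.1 + 1) + 1 + (a * (l - m.1) - 1) := by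
      have h1 : 1 ≤ a * (l - m.1) := Nat.mul_pos ha (by omega)
      have h2 : a * (l + 1) = a * (m.1 + 1) + a * (l - m.1) := by
        rw [← Nat.mul_add]; congr 1; omega
      omega
    rw [mul_pow, mul_pow, ← pow_mul, ← pow_mul, hexp, pow_add, pow_add, pow_one]
    ring

/-- The triangular numbers. -/
def tri : ℕ → ℕ
  | 0 => 0
  | k + 1 => tri k + (k + 1)

theorem two_mul_tri (k : ℕ) : 2 * tri k = k * (k + 1) := by
  induction k with
  | zero => rfl
  | succ k ih => rw [tri, mul_add, ih]; ring

theorem tri_mono : Monotone tri := monotone_nat_of_le_succ fun k => by rw [tri]; omega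

theorem le_tri (k : ℕ) : k ≤ tri k := by
  cases k with
  | zero => simp
  | succ k => rw [tri]; omega

/-- The frequencies `p ^ r m * φ m (u i)`, with `φ = momentPoly p g`. -/
noncomputable def polyFreq (p : ℕ) {N k : ℕ} (r : Fin k → ℕ) (g : Fin k → (ZMod (p ^ N))[X])
    (u : ℤ → ℤ) (i : ℤ) (m : Fin k) : ZMod (p ^ N) :=
  (p : ZMod (p ^ N)) ^ r m * (momentPoly p g m).eval (u i : ZMod (p ^ N))

/-- The sum, over residue classes modulo `Q`, of the normalised moments of the part of the
exponential sum on which `u` lies in the given class. -/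
noncomputable def classSum {q : ℕ} [NeZero q] {k : ℕ} (ψ : ℤ → Fin k → ZMod q) (a : ℤ → ℂ)
    (s : ℕ) (Q : ℕ) [NeZero Q] (u : ℤ → ℤ) (S : Finset ℤ) : ℝ :=
  ∑ y : ZMod Q, moment ψ a s (S.filter fun i => (u i : ZMod Q) = y) ^ ((s : ℝ)⁻¹)

section classes
variable {q : ℕ} [NeZero q] {k : ℕ} (ψ : ℤ → Fin k → ZMod q) (a : ℤ → ℂ)

theorem classSum_nonneg (s Q : ℕ) [NeZero Q] (u : ℤ → ℤ) (S : Finset ℤ) :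
    0 ≤ classSum ψ a s Q u S :=
  Finset.sum_nonneg fun _ _ => Real.rpow_nonneg (moment_nonneg _ _ _ _) _

theorem sum_filter_filter_of_refines {Y Z : Type*} [Fintype Y] [Fintype Z] [DecidableEq Y]
    [DecidableEq Z] (F : Finset ℤ → ℝ) (hF : F ∅ = 0) (S : Finset ℤ) (π : ℤ → Y) (σ : ℤ → Z)
    (h : ∀ i ∈ S, ∀ j ∈ S, σ i = σ j → π i = π j) :
    ∑ y, ∑ z, F ((S.filter fun i => π i = y).filter fun i => σ i = z)
      = ∑ z, F (S.filter fun i => σ i = z) := by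
  rw [Finset.sum_comm]
  refine Finset.sum_congr rfl fun z _ => ?_
  rcases (S.filter fun i => σ i = z).eq_empty_or_nonempty with he | ⟨i, hi⟩
  · rw [he, hF]
    refine Finset.sum_eq_zero fun y _ => ?_
    rw [Finset.filter_comm, he, Finset.filter_empty, hF]
  · rw [Finset.mem_filter] at hi
    rw [Finset.sum_eq_single (π i)]
    · rw [Finset.filter_filter]
      congr 1
      refine Finset.filter_congr fun j hj => ⟨fun hh => hh.2, fun hh => ⟨?_, hh⟩⟩
      exact h j hj i hi.1 (hh.trans hi.2.symm)
    · intro y _ hy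
      rw [Finset.filter_filter, Finset.filter_false_of_mem, hF]
      rintro j hj ⟨h1, h2⟩
      exact hy (h1 ▸ h j hj i hi.1 (h2.trans hi.2.symm))
    · simp

theorem moment_rpow_empty {s : ℕ} (hs : 1 ≤ s) : moment ψ a s ∅ ^ ((s : ℝ)⁻¹) = 0 := by
  rw [moment_empty _ _ hs, Real.zero_rpow]
  have : (0 : ℝ) < s := by exact_mod_cast hs
  positivity

theorem sum_classSum_filter {s : ℕ} (hs : 1 ≤ s) (Q : ℕ) [NeZero Q] (u : ℤ → ℤ) (S : Finset ℤ)
    {Y : Type*} [Fintype Y] [DecidableEq Y] (π : ℤ → Y)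
    (h : ∀ i ∈ S, ∀ j ∈ S, (u i : ZMod Q) = (u j : ZMod Q) → π i = π j) :
    ∑ y, classSum ψ a s Q u (S.filter fun i => π i = y) = classSum ψ a s Q u S :=
  sum_filter_filter_of_refines (fun S => moment ψ a s S ^ ((s : ℝ)⁻¹))
    (moment_rpow_empty ψ a hs) S π (fun i => (u i : ZMod Q)) h

theorem classSum_eq_of_same_fibers {s : ℕ} (hs : 1 ≤ s) (Q : ℕ) [NeZero Q] (u : ℤ → ℤ)
    (S : Finset ℤ) {Y : Type*} [Fintype Y] [DecidableEq Y] (π : ℤ → Y)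
    (h : ∀ i ∈ S, ∀ j ∈ S, (u i : ZMod Q) = (u j : ZMod Q) ↔ π i = π j) :
    ∑ y, moment ψ a s (S.filter fun i => π i = y) ^ ((s : ℝ)⁻¹) = classSum ψ a s Q u S := by
  rw [← sum_classSum_filter ψ a hs Q u S π fun i hi j hj hij => (h i hi j hj).1 hij]
  rw [← sum_filter_filter_of_refines (fun S => moment ψ a s S ^ ((s : ℝ)⁻¹))
    (moment_rpow_empty ψ a hs) S (fun i => (u i : ZMod Q)) π
    fun i hi j hj hij => (h i hi j hj).2 hij]
  rw [Finset.sum_comm]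
  unfold classSum
  refine Finset.sum_congr rfl fun y _ => Finset.sum_congr rfl fun z _ => ?_
  rw [Finset.filter_comm]

theorem norm_sq_oscSum_le {Y : Type*} [Fintype Y] [DecidableEq Y] (π : ℤ → Y) (S : Finset ℤ)
    (α : Fin k → ZMod q) :
    ‖oscSum ψ a S α‖ ^ 2
      ≤ Fintype.card Y * ∑ y, ‖oscSum ψ a (S.filter fun i => π i = y) α‖ ^ 2 := by
  rw [← sum_oscSum_filter ψ a π S α]
  refine (pow_le_pow_left₀ (norm_nonneg _) (norm_sum_le _ _) 2).trans ?_
  exact sq_sum_le_card_mul_sum_sq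

theorem moment_le_card_pow_mul {s : ℕ} (hs : 1 ≤ s) {Y : Type*} [Fintype Y] [DecidableEq Y]
    (π : ℤ → Y) (S : Finset ℤ) :
    moment ψ a s S ≤ (Fintype.card Y : ℝ) ^ s
      * (∑ y, moment ψ a s (S.filter fun i => π i = y) ^ ((s : ℝ)⁻¹)) ^ s := by
  have h := sum_pow_sum_le (fun y α => ‖oscSum ψ a (S.filter fun i => π i = y) α‖ ^ 2)
    (fun _ _ => by positivity) hs
  simp only [← pow_mul] at h
  calc moment ψ a s S
      ≤ ∑ α, (Fintype.card Y : ℝ) ^ s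
          * (∑ y, ‖oscSum ψ a (S.filter fun i => π i = y) α‖ ^ 2) ^ s := by
        refine Finset.sum_le_sum fun α _ => ?_
        rw [pow_mul, ← mul_pow]
        exact pow_le_pow_left₀ (by positivity) (norm_sq_oscSum_le ψ a π S α) _
    _ ≤ _ := by
        rw [← Finset.mul_sum]
        exact mul_le_mul_of_nonneg_left h (by positivity)

end classes

theorem addChar_map_sum {A M ι : Type*} [AddCommMonoid A] [CommMonoid M] (ψ : AddChar A M)
    (S : Finset ι) (f : ι → A) : ψ (∑ i ∈ S, f i) = ∏ i ∈ S, ψ (f i) := by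
  classical
  induction S using Finset.induction_on with
  | empty => simp
  | insert i S hi ih => rw [Finset.sum_insert hi, Finset.prod_insert hi, AddChar.map_add_eq_mul, ih]

/-- Orthogonality for additive characters of `(ℤ/q)^k`. -/
theorem sum_stdAddChar_dot {q : ℕ} [NeZero q] {k : ℕ} (v : Fin k → ZMod q) :
    ∑ α : Fin k → ZMod q, (ZMod.stdAddChar (∑ m, α m * v m) : ℂ)
      = if v = 0 then ((Fintype.card (Fin k → ZMod q) : ℕ) : ℂ) else 0 := by
  split_ifs with h
  · simp [h]
  · obtain ⟨j, hj⟩ := Function.ne_iff.1 h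
    have h1 : ∀ α : Fin k → ZMod q, (ZMod.stdAddChar (∑ m, α m * v m) : ℂ)
        = ∏ m, ZMod.stdAddChar (α m * v m) := fun α => by
      exact addChar_map_sum _ _ _
    simp only [h1]
    rw [← Fintype.piFinset_univ,
      ← Finset.prod_univ_sum (fun _ => Finset.univ) (fun m x => (ZMod.stdAddChar (x * v m) : ℂ))]
    refine Finset.prod_eq_zero (Finset.mem_univ j) ?_
    rw [AddChar.sum_mulShift _ (ZMod.isPrimitive_stdAddChar q)]
    rw [if_neg (by simpa using hj), Nat.cast_zero]

/-- The mean square of an exponential sum over `(ℤ/q)^k`. -/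
theorem sum_norm_sq_stdAddChar {q : ℕ} [NeZero q] {k : ℕ} {ι : Type*} (S : Finset ι)
    (ψ : ι → Fin k → ZMod q) (a : ι → ℂ) :
    ((∑ α : Fin k → ZMod q, ‖∑ i ∈ S, a i * ZMod.stdAddChar (∑ m, α m * ψ i m)‖ ^ 2 : ℝ) : ℂ)
      = (Fintype.card (Fin k → ZMod q) : ℕ) *
        ∑ i ∈ S, ∑ j ∈ S, if ψ i = ψ j then a i * (starRingEnd ℂ) (a j) else 0 := by
  have h1 : ∀ α : Fin k → ZMod q,
      ((‖∑ i ∈ S, a i * ZMod.stdAddChar (∑ m, α m * ψ i m)‖ ^ 2 : ℝ) : ℂ)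
      = ∑ i ∈ S, ∑ j ∈ S, a i * (starRingEnd ℂ) (a j)
          * ZMod.stdAddChar (∑ m, α m * (ψ i - ψ j) m) := by
    intro α
    push_cast
    rw [← Complex.mul_conj', map_sum, Finset.sum_mul_sum]
    refine Finset.sum_congr rfl fun i _ => Finset.sum_congr rfl fun j _ => ?_
    have : ∑ m, α m * (ψ i - ψ j) m = (∑ m, α m * ψ i m) + -(∑ m, α m * ψ j m) := by
      rw [← sub_eq_add_neg, ← Finset.sum_sub_distrib]
      exact Finset.sum_congr rfl fun m _ => by rw [Pi.sub_apply]; ring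
    rw [this, AddChar.map_add_eq_mul, AddChar.map_neg_eq_conj, map_mul]
    ring
  rw [Complex.ofReal_sum]
  simp only [h1]
  rw [Finset.sum_comm, Finset.mul_sum]
  refine Finset.sum_congr rfl fun i _ => ?_
  rw [Finset.sum_comm, Finset.mul_sum]
  refine Finset.sum_congr rfl fun j _ => ?_
  rw [← Finset.mul_sum, sum_stdAddChar_dot]
  simp only [sub_eq_zero]
  split_ifs <;> ring

theorem sum_norm_sq_eq_of_separated {q : ℕ} [NeZero q] {k : ℕ} (S : Finset ℤ)
    (ψ : ℤ → Fin k → ZMod q) (a : ℤ → ℂ) {Y : Type*} [Fintype Y] [DecidableEq Y] (π : ℤ → Y)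
    (h : ∀ i ∈ S, ∀ j ∈ S, ψ i = ψ j → π i = π j) :
    moment ψ a 1 S = ∑ y, moment ψ a 1 (S.filter fun i => π i = y) := by
  have e : ∀ S' : Finset ℤ, ((moment ψ a 1 S' : ℝ) : ℂ) = (Fintype.card (Fin k → ZMod q) : ℕ) *
        ∑ i ∈ S', ∑ j ∈ S', if ψ i = ψ j then a i * (starRingEnd ℂ) (a j) else 0 := fun S' => by
    rw [← sum_norm_sq_stdAddChar]; rfl
  rw [← Complex.ofReal_inj, Complex.ofReal_sum]
  simp only [e]
  rw [← Finset.mul_sum, ← Finset.sum_fiberwise S π]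
  congr 1
  refine Finset.sum_congr rfl fun y _ => Finset.sum_congr rfl fun i hi => ?_
  rw [Finset.sum_filter]
  refine Finset.sum_congr rfl fun j hj => ?_
  rw [Finset.mem_filter] at hi
  by_cases hij : ψ i = ψ j
  · rw [if_pos hij, if_pos (by rw [← h i hi.1 j hj hij, hi.2])]
  · simp [hij]

/-- A decoupling inequality into residue classes modulo `p ^ n`, with constant `D`, for all
perturbed moment curves of degree `k`. -/
def DecBound (p k n : ℕ) [NeZero p] (D : ℝ) : Prop :=
  0 ≤ D ∧ ∀ (N : ℕ) (r : Fin k → ℕ) (g : Fin k → (ZMod (p ^ N))[X]) (u : ℤ → ℤ) (a : ℤ → ℂ)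
    (S : Finset ℤ), (∀ m, r m + k * n ≤ N) →
    moment (polyFreq p r g u) a (tri k) S
      ≤ D * classSum (polyFreq p r g u) a (tri k) (p ^ n) u S ^ tri k

/-- A bilinear decoupling inequality into residue classes modulo `p ^ n`, with constant `M`, for
two sums supported on transverse residue classes modulo `p ^ a` and `p ^ b`. -/
def BilBound (p k n l a b : ℕ) [NeZero p] (M : ℝ) : Prop :=
  0 ≤ M ∧ ∀ (N : ℕ) (r : Fin k → ℕ) (g : Fin k → (ZMod (p ^ N))[X]) (u : ℤ → ℤ) (co : ℤ → ℂ)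
    (S S' : Finset ℤ) (ξ η : ℤ), (∀ m, r m + k * n ≤ N) → ¬ ξ ≡ η [ZMOD p] →
    (∀ i ∈ S, u i ≡ ξ [ZMOD (p : ℤ) ^ a]) → (∀ i ∈ S', u i ≡ η [ZMOD (p : ℤ) ^ b]) →
    wMoment (fun α => ‖oscSum (polyFreq p r g u) co S' α‖ ^ (2 * (tri k - tri l)))
        (polyFreq p r g u) co (tri l) S
      ≤ M * (classSum (polyFreq p r g u) co (tri k) (p ^ n) u S ^ tri l
        * classSum (polyFreq p r g u) co (tri k) (p ^ n) u S' ^ (tri k - tri l))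

theorem DecBound.mono {p k n : ℕ} [NeZero p] {D D' : ℝ} (h : DecBound p k n D) (hD : D ≤ D') :
    DecBound p k n D' :=
  ⟨h.1.trans hD, fun N r g u a S hr => (h.2 N r g u a S hr).trans
    (mul_le_mul_of_nonneg_right hD (pow_nonneg (classSum_nonneg _ _ _ _ _ _) _))⟩

theorem BilBound.mono {p k n l a b : ℕ} [NeZero p] {D D' : ℝ} (h : BilBound p k n l a b D)
    (hD : D ≤ D') : BilBound p k n l a b D' :=
  ⟨h.1.trans hD, fun N r g u co S S' ξ η h1 h2 h3 h4 =>
    (h.2 N r g u co S S' ξ η h1 h2 h3 h4).trans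
      (mul_le_mul_of_nonneg_right hD (mul_nonneg (pow_nonneg (classSum_nonneg _ _ _ _ _ _) _)
        (pow_nonneg (classSum_nonneg _ _ _ _ _ _) _)))⟩

theorem decBound_trivial (p n : ℕ) [NeZero p] {k : ℕ} (hk : 1 ≤ k) :
    DecBound p k n (((p : ℝ) ^ n) ^ tri k) := by
  refine ⟨by positivity, fun N r g u a S _ => ?_⟩
  refine (moment_le_card_pow_mul _ _ (hk.trans (le_tri k)) (fun i => (u i : ZMod (p ^ n))) S).trans
    (le_of_eq ?_)
  rw [ZMod.card, Nat.cast_pow]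
  rfl

theorem decBound_one (p n : ℕ) [Fact p.Prime] : DecBound p 1 n 1 := by
  have hp : p.Prime := Fact.out
  refine ⟨zero_le_one, fun N r g u a S hr => ?_⟩
  have h1 : tri 1 = 1 := rfl
  rw [h1, classSum, pow_one, one_mul]
  simp only [Nat.cast_one, inv_one, Real.rpow_one]
  refine (sum_norm_sq_eq_of_separated S _ a _ ?_).le
  intro i _ j _ hij
  have h0 := congrFun hij 0
  have hr0 := hr 0
  rw [one_mul] at hr0
  simp only [polyFreq, momentPoly, eval_add, eval_mul, eval_pow, eval_X, eval_C] at h0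
  obtain ⟨z, hz⟩ := sub_dvd_eval_sub (u i : ZMod (p ^ N)) (u j : ZMod (p ^ N)) (g 0)
  have h2 : (p : ZMod (p ^ N)) ^ r 0 * (((u i - u j : ℤ) : ZMod (p ^ N)) * (1 + p * z)) = 0 := by
    push_cast
    have : ((0 : Fin 1) : ℕ) + 1 = 1 := rfl
    rw [this, pow_one, pow_one] at h0
    linear_combination h0 - (p : ZMod (p ^ N)) ^ r 0 * p * hz
  rcases Nat.eq_zero_or_pos n with rfl | hn
  · exact Subsingleton.elim (α := ZMod 1) _ _
  have hN : N ≠ 0 := by omega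
  have hu : IsUnit (1 + (p : ZMod (p ^ N)) * z) := by
    refine isUnit_of_castHom_ne_zero hp (dvd_pow_self p hN) _ ?_
    rw [map_add, map_one, map_mul, map_natCast, CharP.cast_eq_zero, zero_mul, add_zero]
    exact one_ne_zero
  rw [← mul_assoc, hu.mul_left_eq_zero] at h2
  have h3 : ((p : ℤ) ^ N) ∣ (p : ℤ) ^ r 0 * (u i - u j) := by
    rw [← Nat.cast_pow, ← ZMod.intCast_zmod_eq_zero_iff_dvd, ← h2]; push_cast; ring
  have h4 : (p : ℤ) ^ n ∣ u i - u j := by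
    have h5 : (p : ℤ) ^ r 0 * (p : ℤ) ^ n ∣ (p : ℤ) ^ r 0 * (u i - u j) := by
      rw [← pow_add]; exact (pow_dvd_pow _ hr0).trans h3
    exact Int.dvd_of_mul_dvd_mul_left (pow_ne_zero _ (by exact_mod_cast hp.ne_zero)) h5
  rw [← sub_eq_zero, ← Int.cast_sub, ZMod.intCast_zmod_eq_zero_iff_dvd]
  exact_mod_cast h4

/-- A decoupling inequality of degree `l` yields, on a residue class modulo `p ^ a`, a weighted
decoupling inequality for sums of degree `k`. -/
theorem wMoment_le_of_decBound {p k l a b c : ℕ} [Fact p.Prime] (hk : k < p) (hl1 : 1 ≤ l)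
    (hl : l ≤ k) (ha : 1 ≤ a) (hac : a ≤ c) {D : ℝ} (hD : DecBound p l (c - a) D) {N : ℕ}
    (r : Fin k → ℕ) (g : Fin k → (ZMod (p ^ N))[X]) (u : ℤ → ℤ) (co : ℤ → ℂ) (S S' : Finset ℤ)
    {ξ η : ℤ} (hxy : l < k → ¬ ξ ≡ η [ZMOD p]) (hS : ∀ i ∈ S, u i ≡ ξ [ZMOD (p : ℤ) ^ a])
    (hS' : ∀ i ∈ S', u i ≡ η [ZMOD (p : ℤ) ^ b]) {ρ : ℕ} (hρ : ∀ m, r m ≤ ρ)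
    (hρc : ρ + l * c ≤ N) (hρb : N ≤ ρ + (k - l + 1) * b) (t : ℕ) :
    wMoment (fun α => ‖oscSum (polyFreq p r g u) co S' α‖ ^ t) (polyFreq p r g u) co (tri l) S
      ≤ D * (∑ y : ZMod (p ^ (c - a)),
          wMoment (fun α => ‖oscSum (polyFreq p r g u) co S' α‖ ^ t) (polyFreq p r g u) co (tri l)
            (S.filter fun i => (((u i - ξ) / (p : ℤ) ^ a : ℤ) : ZMod (p ^ (c - a))) = y)
              ^ ((tri l : ℝ)⁻¹)) ^ tri l := by
  obtain ⟨T, hT1, hT2⟩ := exists_adapted_frequencies hk hl g hxy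
  obtain ⟨g', c', hc⟩ := hT2 a ha
  have hcomb : ∀ (β : Fin l → ZMod (p ^ N)) (i : ℤ),
      ∑ j, (∑ m, β m * T m j * (p : ZMod (p ^ N)) ^ (ρ - r j)) * polyFreq p r g u i j
        = ∑ m, β m * ((p : ZMod (p ^ N)) ^ ρ
          * ∑ j, T m j * (momentPoly p g j).eval (u i : ZMod (p ^ N))) := by
    intro β i
    simp only [Finset.sum_mul, Finset.mul_sum]
    rw [Finset.sum_comm]
    refine Finset.sum_congr rfl fun m _ => Finset.sum_congr rfl fun j _ => ?_
    rw [polyFreq, ← Nat.sub_add_cancel (hρ j), pow_add, Nat.add_sub_cancel]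
    ring
  refine wMoment_le_of_decoupling _ co
    (polyFreq p (fun m : Fin l => ρ + a * (m.1 + 1)) g' fun i => (u i - ξ) / (p : ℤ) ^ a)
    (fun β j => ∑ m, β m * T m j * (p : ZMod (p ^ N)) ^ (ρ - r j))
    (fun β => ∑ m, β m * ((p : ZMod (p ^ N)) ^ ρ * c' m)) S ?_ _ (fun α => by positivity) ?_ _
    (hl1.trans (le_tri l)) hD.1 ?_
  · intro i hi β
    rw [hcomb, ← Finset.sum_add_distrib]
    refine Finset.sum_congr rfl fun m _ => ?_
    obtain ⟨v, hv⟩ := (hS i hi).symm.dvd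
    have hpa : ((p : ℤ) ^ a) ≠ 0 := pow_ne_zero _ (by exact_mod_cast (Fact.out : p.Prime).ne_zero)
    have hvi : (u i - ξ) / (p : ℤ) ^ a = v := by rw [hv, Int.mul_ediv_cancel_left _ hpa]
    have hui : u i = ξ + (p : ℤ) ^ a * v := by linarith
    rw [polyFreq, hvi]
    have := hc m v
    rw [← hui] at this
    rw [this, pow_add]
    ring
  · intro α β
    have key : oscSum (polyFreq p r g u) co S'
        (α + fun j => ∑ m, β m * T m j * (p : ZMod (p ^ N)) ^ (ρ - r j))
        = ZMod.stdAddChar (∑ m, β m * ((p : ZMod (p ^ N)) ^ ρ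
          * ∑ j, T m j * (momentPoly p g j).eval (η : ZMod (p ^ N))))
          * oscSum (polyFreq p r g u) co S' α := by
      unfold oscSum
      rw [Finset.mul_sum]
      refine Finset.sum_congr rfl fun i hi => ?_
      have h1 : ∑ m, (α + fun j => ∑ m, β m * T m j * (p : ZMod (p ^ N)) ^ (ρ - r j)) m
            * polyFreq p r g u i m
          = (∑ m, α m * polyFreq p r g u i m) + ∑ m, β m * ((p : ZMod (p ^ N)) ^ ρ
          * ∑ j, T m j * (momentPoly p g j).eval (η : ZMod (p ^ N))) := by
        have : ∀ m, (p : ZMod (p ^ N)) ^ ρ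
            * ∑ j, T m j * (momentPoly p g j).eval (η : ZMod (p ^ N))
            = (p : ZMod (p ^ N)) ^ ρ
            * ∑ j, T m j * (momentPoly p g j).eval (u i : ZMod (p ^ N)) := fun m =>
          (hT1 m b ρ (u i) hρb (hS' i hi)).symm
        simp only [this]
        rw [← hcomb, ← Finset.sum_add_distrib]
        exact Finset.sum_congr rfl fun m _ => by rw [Pi.add_apply]; ring
      rw [h1, AddChar.map_add_eq_mul]
      ring
    rw [key, norm_mul, norm_stdAddChar, one_mul]
  · intro a'
    refine hD.2 N _ g' _ a' S ?_
    intro m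
    have hm : m.1 + 1 ≤ l := m.2
    have h1 : a * (m.1 + 1) ≤ a * l := Nat.mul_le_mul_left _ hm
    have h2 : a * l + l * (c - a) = l * c := by
      rw [mul_comm a l, ← Nat.mul_add]; congr 1; omega
    omega

theorem zmod_pow_div_eq_iff {p a c : ℕ} (hp : p ≠ 0) (hac : a ≤ c) {x y ξ : ℤ}
    (hx : x ≡ ξ [ZMOD (p : ℤ) ^ a]) (hy : y ≡ ξ [ZMOD (p : ℤ) ^ a]) :
    (((x - ξ) / (p : ℤ) ^ a : ℤ) : ZMod (p ^ (c - a))) = (((y - ξ) / (p : ℤ) ^ a : ℤ) : ZMod _) ↔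
      (x : ZMod (p ^ c)) = (y : ZMod (p ^ c)) := by
  have hpa : ((p : ℤ) ^ a) ≠ 0 := pow_ne_zero _ (by exact_mod_cast hp)
  obtain ⟨v, hv⟩ := hx.symm.dvd
  obtain ⟨w, hw⟩ := hy.symm.dvd
  rw [hv, hw, Int.mul_ediv_cancel_left _ hpa, Int.mul_ediv_cancel_left _ hpa,
    ZMod.intCast_eq_intCast_iff_dvd_sub, ZMod.intCast_eq_intCast_iff_dvd_sub]
  have : y - x = (p : ℤ) ^ a * (w - v) := by linarith
  rw [this, Nat.cast_pow, Nat.cast_pow, ← Nat.sub_add_cancel hac, Nat.add_sub_cancel, pow_add,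
    mul_comm ((p : ℤ) ^ (c - a))]
  exact (mul_dvd_mul_iff_left hpa).symm

theorem wMoment_one {q : ℕ} [NeZero q] {k : ℕ} (ψ : ℤ → Fin k → ZMod q) (a : ℤ → ℂ) (s : ℕ)
    (S : Finset ℤ) : wMoment (fun _ => 1) ψ a s S = moment ψ a s S := by
  simp [wMoment, moment]

theorem moment_le_of_congr {p k n a : ℕ} [Fact p.Prime] (hk1 : 1 ≤ k) (hk : k < p) (ha : 1 ≤ a)
    (han : a ≤ n) {D : ℝ} (hD : DecBound p k (n - a) D) {N : ℕ} (r : Fin k → ℕ)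
    (g : Fin k → (ZMod (p ^ N))[X]) (u : ℤ → ℤ) (co : ℤ → ℂ) (S : Finset ℤ)
    (hr : ∀ m, r m + k * n ≤ N) {ξ : ℤ} (hS : ∀ i ∈ S, u i ≡ ξ [ZMOD (p : ℤ) ^ a]) :
    moment (polyFreq p r g u) co (tri k) S
      ≤ D * classSum (polyFreq p r g u) co (tri k) (p ^ n) u S ^ tri k := by
  have hN : k * n ≤ N := (Nat.le_add_left _ _).trans (hr ⟨0, hk1⟩)
  have h := wMoment_le_of_decBound (S' := ∅) (b := N) (η := 0) (ρ := N - k * n) hk hk1 le_rfl ha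
    han hD r g u co S (fun h => absurd h (lt_irrefl _)) hS (by simp)
    (fun m => by have := hr m; omega) (by omega)
    (by rw [Nat.sub_self]; omega) 0
  simp only [pow_zero, wMoment_one] at h
  refine h.trans (le_of_eq ?_)
  rw [classSum_eq_of_same_fibers _ _ (hk1.trans (le_tri k)) (p ^ n) u]
  intro i hi j hj
  exact (zmod_pow_div_eq_iff (Fact.out : p.Prime).ne_zero han (hS i hi) (hS j hj)).symm

/-- Applying decoupling of degree `l` to the first factor. -/
theorem BilBound.refine_left {p k n l a b c : ℕ} [Fact p.Prime] (hk : k < p) (hl1 : 1 ≤ l)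
    (hl : l < k) (ha : 1 ≤ a) (hac : a ≤ c) (hcn : c ≤ n) (hbn : b ≤ n)
    (hcb : l * c ≤ (k - l + 1) * b) {D M : ℝ} (hD : DecBound p l (c - a) D)
    (hM : BilBound p k n l c b M) : BilBound p k n l a b (D * M) := by
  refine ⟨mul_nonneg hD.1 hM.1, fun N r g u co S S' ξ η hr hξη hS hS' => ?_⟩
  have hl0 : tri l ≠ 0 := by have := le_tri l; omega
  have hp : p ≠ 0 := (Fact.out : p.Prime).ne_zero
  have hN : k * n ≤ N := (Nat.le_add_left _ _).trans (hr ⟨0, by omega⟩)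
  have hkb : (k - l + 1) * b ≤ k * n := Nat.mul_le_mul (by omega) hbn
  refine (wMoment_le_of_decBound (ρ := N - (k - l + 1) * b) hk hl1 hl.le ha hac hD r g u co S S'
    (fun _ => hξη) hS hS' (fun m => by have := hr m; omega) (by omega) (by omega)
    (2 * (tri k - tri l))).trans ?_
  set ψ := polyFreq p r g u
  set π : ℤ → ZMod (p ^ (c - a)) := fun i => (((u i - ξ) / (p : ℤ) ^ a : ℤ) : ZMod (p ^ (c - a)))
  set A' := classSum ψ co (tri k) (p ^ n) u S' with hA'
  have hA'0 : 0 ≤ A' := classSum_nonneg _ _ _ _ _ _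
  set B : ℝ := M * A' ^ (tri k - tri l) with hB
  have hB0 : 0 ≤ B := mul_nonneg hM.1 (pow_nonneg hA'0 _)
  have hy : ∀ y, wMoment (fun α => ‖oscSum ψ co S' α‖ ^ (2 * (tri k - tri l))) ψ co (tri l)
        (S.filter fun i => π i = y) ^ ((tri l : ℝ)⁻¹)
      ≤ B ^ ((tri l : ℝ)⁻¹) * classSum ψ co (tri k) (p ^ n) u (S.filter fun i => π i = y) := by
    intro y
    have h0 : 0 ≤ classSum ψ co (tri k) (p ^ n) u (S.filter fun i => π i = y) :=
      classSum_nonneg _ _ _ _ _ _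
    have hmain : wMoment (fun α => ‖oscSum ψ co S' α‖ ^ (2 * (tri k - tri l))) ψ co (tri l)
        (S.filter fun i => π i = y) ≤ B *
          classSum ψ co (tri k) (p ^ n) u (S.filter fun i => π i = y) ^ tri l := by
      rcases (S.filter fun i => π i = y).eq_empty_or_nonempty with he | ⟨i₀, hi₀⟩
      · rw [he]
        refine (le_of_eq ?_).trans
          (mul_nonneg hB0 (pow_nonneg (classSum_nonneg _ _ _ _ _ _) _))
        simp [wMoment, oscSum_empty, hl0]
      · rw [Finset.mem_filter] at hi₀
        have hξ0 : u i₀ ≡ ξ [ZMOD p] :=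
          (hS i₀ hi₀.1).of_dvd (dvd_pow_self _ (by omega))
        refine (hM.2 N r g u co (S.filter fun i => π i = y) S' (u i₀) η hr
          (fun h => hξη (hξ0.symm.trans h)) ?_ hS').trans (le_of_eq (by rw [hB]; ring))
        intro i hi
        rw [Finset.mem_filter] at hi
        have h1 := (zmod_pow_div_eq_iff hp hac (hS i hi.1) (hS i₀ hi₀.1)).1 (hi.2.trans hi₀.2.symm)
        rw [ZMod.intCast_eq_intCast_iff] at h1
        exact_mod_cast h1
    refine (Real.rpow_le_rpow (wMoment_nonneg _ _ (fun α => by positivity) _ _) hmain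
      (by positivity)).trans (le_of_eq ?_)
    rw [Real.mul_rpow hB0 (pow_nonneg h0 _), Real.pow_rpow_inv_natCast h0 hl0]
  have hsum := Finset.sum_le_sum fun y (_ : y ∈ Finset.univ) => hy y
  rw [← Finset.mul_sum, sum_classSum_filter _ _ (by have := le_tri k; omega)] at hsum
  · calc _ ≤ D * (B ^ ((tri l : ℝ)⁻¹) * classSum ψ co (tri k) (p ^ n) u S) ^ tri l := by
          refine mul_le_mul_of_nonneg_left (pow_le_pow_left₀ ?_ hsum _) hD.1
          exact Finset.sum_nonneg fun y _ =>
            Real.rpow_nonneg (wMoment_nonneg _ _ (fun α => by positivity) _ _) _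
      _ = _ := by
          rw [mul_pow, Real.rpow_inv_natCast_pow hB0 hl0, hB]
          ring
  · intro i hi j hj hij
    refine (zmod_pow_div_eq_iff hp hac (hS i hi) (hS j hj)).2 ?_
    rw [ZMod.intCast_eq_intCast_iff] at hij ⊢
    exact hij.of_dvd (by exact_mod_cast pow_dvd_pow p hcn)

theorem tri_add (l m : ℕ) : tri (l + m) = tri l + tri m + l * m := by
  have h1 := two_mul_tri (l + m)
  have h2 := two_mul_tri l
  have h3 := two_mul_tri m
  nlinarith

/-- Hölder's inequality relates the bilinear estimates for neighbouring exponents. -/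
theorem BilBound.holder {p l m n a b : ℕ} [NeZero p] {M M₁ M₂ : ℝ} (hM : 0 ≤ M)
    (h₁ : BilBound p (l + 1 + m) n m b a M₁) (h₂ : BilBound p (l + 1 + m) n l a b M₂)
    (hMM : M₁ * M₂ ^ m ≤ M ^ (1 + m)) : BilBound p (l + 1 + m) n (l + 1) a b M := by
  refine ⟨hM, fun N r g u co S S' ξ η hr hξη hS hS' => ?_⟩
  have H₁ := h₁.2 N r g u co S' S η ξ hr (fun h => hξη h.symm) hS' hS
  have H₂ := h₂.2 N r g u co S S' ξ η hr hξη hS hS'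
  set ψ := polyFreq p r g u
  set s := tri (l + 1 + m) with hs
  set A := classSum ψ co s (p ^ n) u S with hA
  set B := classSum ψ co s (p ^ n) u S' with hB
  have hA0 : 0 ≤ A := classSum_nonneg _ _ _ _ _ _
  have hB0 : 0 ≤ B := classSum_nonneg _ _ _ _ _ _
  have e0 : s = tri (l + 1) + tri m + (l + 1) * m := tri_add _ _
  have e1 : tri (l + 1) = tri l + (l + 1) := rfl
  obtain ⟨x1, hx1⟩ : ∃ x, s - tri m = x := ⟨_, rfl⟩
  obtain ⟨x2, hx2⟩ : ∃ x, s - tri l = x := ⟨_, rfl⟩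
  obtain ⟨x3, hx3⟩ : ∃ x, s - tri (l + 1) = x := ⟨_, rfl⟩
  rw [hx1] at H₁
  rw [hx2] at H₂
  rw [hx3]
  have y1 : x1 = tri (l + 1) + (l + 1) * m := by omega
  have y2 : x2 = tri m + (l + 1) * m + (l + 1) := by omega
  have y3 : x3 = tri m + (l + 1) * m := by omega
  have z1 : tri (l + 1) * (1 + m) = x1 + tri l * m := by rw [y1, e1]; ring
  have z2 : x3 * (1 + m) = tri m + x2 * m := by rw [y2, y3]; ring
  refine le_of_pow_le_pow_left₀ (n := 1 + m) (by omega)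
    (mul_nonneg hM (mul_nonneg (pow_nonneg hA0 _) (pow_nonneg hB0 _))) ?_
  have hH := sum_pow_le_of_pow_le Finset.univ
    (fun α => ‖oscSum ψ co S' α‖ ^ (2 * x3) * ‖oscSum ψ co S α‖ ^ (2 * tri (l + 1)))
    (fun α => ‖oscSum ψ co S α‖ ^ (2 * x1) * ‖oscSum ψ co S' α‖ ^ (2 * tri m))
    (fun α => ‖oscSum ψ co S' α‖ ^ (2 * x2) * ‖oscSum ψ co S α‖ ^ (2 * tri l))
    (fun _ => by positivity) (fun _ => by positivity) (fun _ => by positivity)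
    (m := m) (n := 1) (by omega) (fun α => le_of_eq (by
      set X := ‖oscSum ψ co S α‖
      set Y := ‖oscSum ψ co S' α‖
      calc (Y ^ (2 * x3) * X ^ (2 * tri (l + 1))) ^ (1 + m)
          = Y ^ (2 * (x3 * (1 + m))) * X ^ (2 * (tri (l + 1) * (1 + m))) := by
            rw [mul_pow, ← pow_mul, ← pow_mul, mul_assoc, mul_assoc]
        _ = _ := by rw [z1, z2]; ring))
  refine hH.trans ?_
  have hbound := mul_le_mul (pow_le_pow_left₀ (Finset.sum_nonneg fun α _ => by positivity) H₁ 1)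
    (pow_le_pow_left₀ (Finset.sum_nonneg fun α _ => by positivity) H₂ m)
    (pow_nonneg (Finset.sum_nonneg fun α _ => by positivity) _)
    (pow_nonneg (mul_nonneg h₁.1 (mul_nonneg (pow_nonneg hB0 _) (pow_nonneg hA0 _))) _)
  refine hbound.trans ?_
  calc _ = (M₁ * M₂ ^ m) * (A ^ (x1 + tri l * m) * B ^ (tri m + x2 * m)) := by ring
    _ ≤ M ^ (1 + m) * (A ^ (x1 + tri l * m) * B ^ (tri m + x2 * m)) :=
        mul_le_mul_of_nonneg_right hMM (mul_nonneg (pow_nonneg hA0 _) (pow_nonneg hB0 _))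
    _ = _ := by rw [← z1, ← z2]; ring

theorem bilBound_zero {p k n a b : ℕ} [Fact p.Prime] (hk1 : 1 ≤ k) (hk : k < p) (hb : 1 ≤ b)
    (hbn : b ≤ n) {D : ℝ} (hD : DecBound p k (n - b) D) : BilBound p k n 0 a b D := by
  refine ⟨hD.1, fun N r g u co S S' ξ η hr hξη hS hS' => ?_⟩
  have h := moment_le_of_congr hk1 hk hb hbn hD r g u co S' hr hS'
  have h0 : tri 0 = 0 := rfl
  simpa [h0, wMoment, moment] using h

theorem bilBound_of_decBound {p k n l a b : ℕ} [NeZero p] (hk1 : 1 ≤ k) (hl : l ≤ k) {D : ℝ}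
    (hD : DecBound p k n D) : BilBound p k n l a b D := by
  refine ⟨hD.1, fun N r g u co S S' ξ η hr hξη hS hS' => ?_⟩
  have H₁ := hD.2 N r g u co S hr
  have H₂ := hD.2 N r g u co S' hr
  have ht : tri l ≤ tri k := tri_mono hl
  have hk0 : 1 ≤ tri k := hk1.trans (le_tri k)
  obtain ⟨t', ht'⟩ : ∃ t', tri k = tri l + t' := ⟨tri k - tri l, by omega⟩
  rw [show tri k - tri l = t' by omega]
  set ψ := polyFreq p r g u
  set A := classSum ψ co (tri k) (p ^ n) u S with hA
  set B := classSum ψ co (tri k) (p ^ n) u S' with hB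
  have hA0 : 0 ≤ A := classSum_nonneg _ _ _ _ _ _
  have hB0 : 0 ≤ B := classSum_nonneg _ _ _ _ _ _
  refine le_of_pow_le_pow_left₀ (n := tri l + t') (by omega)
    (mul_nonneg hD.1 (mul_nonneg (pow_nonneg hA0 _) (pow_nonneg hB0 _))) ?_
  have hH := sum_pow_le_of_pow_le Finset.univ
    (fun α => ‖oscSum ψ co S' α‖ ^ (2 * t') * ‖oscSum ψ co S α‖ ^ (2 * tri l))
    (fun α => ‖oscSum ψ co S α‖ ^ (2 * tri k))
    (fun α => ‖oscSum ψ co S' α‖ ^ (2 * tri k))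
    (fun _ => by positivity) (fun _ => by positivity) (fun _ => by positivity)
    (m := t') (n := tri l) (by omega) (fun α => le_of_eq (by rw [ht']; ring))
  refine hH.trans ?_
  have hbound := mul_le_mul (pow_le_pow_left₀ (moment_nonneg _ _ _ _) H₁ (tri l))
    (pow_le_pow_left₀ (moment_nonneg _ _ _ _) H₂ t') (pow_nonneg (moment_nonneg _ _ _ _) _)
    (pow_nonneg (mul_nonneg hD.1 (pow_nonneg hA0 _)) _)
  refine hbound.trans (le_of_eq ?_)
  rw [ht']; ring

theorem pow_sum_le_card_pow_mul {Y : Type*} (I : Finset Y) (x : Y → ℝ) (hx : ∀ y, 0 ≤ x y)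
    {t : ℕ} (ht : 1 ≤ t) : (∑ y ∈ I, x y) ^ t ≤ (I.card : ℝ) ^ t * ∑ y ∈ I, x y ^ t := by
  rcases I.eq_empty_or_nonempty with rfl | hI
  · simp [show t ≠ 0 by omega]
  obtain ⟨m, rfl⟩ : ∃ m, t = m + 1 := ⟨t - 1, by omega⟩
  have hc : (1 : ℝ) ≤ I.card := by exact_mod_cast hI.card_pos
  have h := pow_sum_div_card_le_sum_pow (s := I) (fun y _ => hx y) m
  rw [div_le_iff₀ (by positivity)] at h
  refine h.trans ?_
  rw [mul_comm]
  exact mul_le_mul_of_nonneg_right (pow_le_pow_right₀ hc (by omega))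
    (Finset.sum_nonneg fun y _ => pow_nonneg (hx y) _)

theorem norm_oscSum_pow_le {q : ℕ} [NeZero q] {k : ℕ} (ψ : ℤ → Fin k → ZMod q) (a : ℤ → ℂ)
    {Y : Type*} [Fintype Y] [DecidableEq Y] (π : ℤ → Y) (S : Finset ℤ) (α : Fin k → ZMod q)
    {t : ℕ} (ht : 1 ≤ t) :
    ‖oscSum ψ a S α‖ ^ t ≤ (Fintype.card Y : ℝ) ^ t
      * ∑ y, ‖oscSum ψ a (S.filter fun i => π i = y) α‖ ^ t := by
  rw [← sum_oscSum_filter ψ a π S α]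
  exact (pow_le_pow_left₀ (norm_nonneg _) (norm_sum_le _ _) _).trans
    (pow_sum_le_card_pow_mul _ _ (fun _ => norm_nonneg _) ht)

/-- A bilinear estimate on small residue classes implies one on large residue classes. -/
theorem BilBound.coarsen {p k n l a b : ℕ} [Fact p.Prime] (hl1 : 1 ≤ l) (hl : l < k)
    (han : a ≤ n) (hbn : b ≤ n) {M : ℝ} (hM : BilBound p k n l a b M) :
    BilBound p k n l 1 1 (((p : ℝ) ^ a) ^ (2 * tri l)
      * ((p : ℝ) ^ b) ^ (2 * (tri k - tri l)) * M) := by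
  refine ⟨mul_nonneg (by positivity) hM.1, fun N r g u co S S' ξ η hr hξη hS hS' => ?_⟩
  have ht : tri l < tri k := by
    have h1 : tri (l + 1) ≤ tri k := tri_mono hl
    rw [tri] at h1; omega
  have hl0 := hl1.trans (le_tri l)
  have hk1 : 1 ≤ tri k := by omega
  set ψ := polyFreq p r g u
  obtain ⟨t', ht'⟩ : ∃ t', tri k - tri l = t' := ⟨_, rfl⟩
  have ht1 : 1 ≤ t' := by omega
  have HM := fun S S' ξ η => hM.2 N r g u co S S' ξ η hr
  rw [ht'] at HM ⊢
  set π : ℤ → ZMod (p ^ a) := fun i => (u i : ZMod (p ^ a)) with hπ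
  set σ : ℤ → ZMod (p ^ b) := fun i => (u i : ZMod (p ^ b)) with hσ
  set A : ZMod (p ^ a) → ℝ := fun y =>
    classSum ψ co (tri k) (p ^ n) u (S.filter fun i => π i = y) with hA
  set B : ZMod (p ^ b) → ℝ := fun z =>
    classSum ψ co (tri k) (p ^ n) u (S'.filter fun i => σ i = z) with hB
  have hA0 : ∀ y, 0 ≤ A y := fun y => classSum_nonneg _ _ _ _ _ _
  have hB0 : ∀ y, 0 ≤ B y := fun y => classSum_nonneg _ _ _ _ _ _
  have hAs : ∑ y, A y = classSum ψ co (tri k) (p ^ n) u S :=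
    sum_classSum_filter _ _ hk1 _ _ _ _ fun i _ j _ hij => by
      rw [ZMod.intCast_eq_intCast_iff] at hij ⊢
      exact hij.of_dvd (by exact_mod_cast pow_dvd_pow p han)
  have hBs : ∑ y, B y = classSum ψ co (tri k) (p ^ n) u S' :=
    sum_classSum_filter _ _ hk1 _ _ _ _ fun i _ j _ hij => by
      rw [ZMod.intCast_eq_intCast_iff] at hij ⊢
      exact hij.of_dvd (by exact_mod_cast pow_dvd_pow p hbn)
  have hpt : ∀ y z, wMoment (fun α => ‖oscSum ψ co (S'.filter fun i => σ i = z) α‖ ^ (2 * t')) ψ co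
      (tri l) (S.filter fun i => π i = y) ≤ M * (A y ^ tri l * B z ^ t') := by
    intro y z
    have hrhs : 0 ≤ M * (A y ^ tri l * B z ^ t') :=
      mul_nonneg hM.1 (mul_nonneg (pow_nonneg (hA0 _) _) (pow_nonneg (hB0 _) _))
    rcases (S.filter fun i => π i = y).eq_empty_or_nonempty with he | ⟨i₀, hi₀⟩
    · refine (le_of_eq ?_).trans hrhs
      rw [he]
      simp [wMoment, oscSum_empty, show tri l ≠ 0 by omega]
    rcases (S'.filter fun i => σ i = z).eq_empty_or_nonempty with he | ⟨j₀, hj₀⟩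
    · refine (le_of_eq ?_).trans hrhs
      rw [he]
      simp [wMoment, oscSum_empty, show t' ≠ 0 by omega]
    rw [Finset.mem_filter] at hi₀ hj₀
    refine HM _ _ (u i₀) (u j₀) ?_ ?_ ?_
    · have h1 := hS i₀ hi₀.1
      have h2 := hS' j₀ hj₀.1
      rw [pow_one] at h1 h2
      exact fun h => hξη (h1.symm.trans (h.trans h2))
    · intro i hi
      rw [Finset.mem_filter] at hi
      have h1 := hi.2.trans hi₀.2.symm
      rw [hπ] at h1
      simp only [ZMod.intCast_eq_intCast_iff] at h1
      exact_mod_cast h1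
    · intro i hi
      rw [Finset.mem_filter] at hi
      have h1 := hi.2.trans hj₀.2.symm
      rw [hσ] at h1
      simp only [ZMod.intCast_eq_intCast_iff] at h1
      exact_mod_cast h1
  calc _ ≤ ∑ α, (((p : ℝ) ^ b) ^ (2 * t')
            * ∑ z, ‖oscSum ψ co (S'.filter fun i => σ i = z) α‖ ^ (2 * t'))
          * (((p : ℝ) ^ a) ^ (2 * tri l)
            * ∑ y, ‖oscSum ψ co (S.filter fun i => π i = y) α‖ ^ (2 * tri l)) := by
        refine Finset.sum_le_sum fun α _ => ?_
        have h1 := norm_oscSum_pow_le ψ co σ S' α (t := 2 * t') (by omega)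
        have h2 := norm_oscSum_pow_le ψ co π S α (t := 2 * tri l) (by omega)
        rw [ZMod.card, Nat.cast_pow] at h1 h2
        exact mul_le_mul h1 h2 (by positivity) (by positivity)
    _ = ((p : ℝ) ^ a) ^ (2 * tri l) * ((p : ℝ) ^ b) ^ (2 * t') * ∑ y, ∑ z,
          wMoment (fun α => ‖oscSum ψ co (S'.filter fun i => σ i = z) α‖ ^ (2 * t')) ψ co
            (tri l) (S.filter fun i => π i = y) := by
        have e : ∀ α, (((p : ℝ) ^ b) ^ (2 * t')
            * ∑ z, ‖oscSum ψ co (S'.filter fun i => σ i = z) α‖ ^ (2 * t'))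
          * (((p : ℝ) ^ a) ^ (2 * tri l)
            * ∑ y, ‖oscSum ψ co (S.filter fun i => π i = y) α‖ ^ (2 * tri l))
          = ((p : ℝ) ^ a) ^ (2 * tri l) * ((p : ℝ) ^ b) ^ (2 * t') * ∑ y, ∑ z,
            (‖oscSum ψ co (S'.filter fun i => σ i = z) α‖ ^ (2 * t')
              * ‖oscSum ψ co (S.filter fun i => π i = y) α‖ ^ (2 * tri l)) := by
          intro α
          rw [Finset.sum_comm, ← Finset.sum_mul_sum]
          ring
        rw [Finset.sum_congr rfl fun α _ => e α, ← Finset.mul_sum]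
        congr 1
        rw [Finset.sum_comm]
        refine Finset.sum_congr rfl fun y _ => ?_
        rw [Finset.sum_comm]
        rfl
    _ ≤ ((p : ℝ) ^ a) ^ (2 * tri l) * ((p : ℝ) ^ b) ^ (2 * t') *
          ∑ y, ∑ z, M * (A y ^ tri l * B z ^ t') :=
        mul_le_mul_of_nonneg_left
          (Finset.sum_le_sum fun y _ => Finset.sum_le_sum fun z _ => hpt y z) (by positivity)
    _ = ((p : ℝ) ^ a) ^ (2 * tri l) * ((p : ℝ) ^ b) ^ (2 * t') * M *
          ((∑ y, A y ^ tri l) * ∑ z, B z ^ t') := by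
        simp only [← Finset.mul_sum]
        rw [Finset.sum_mul_sum]
        simp only [← Finset.mul_sum]
        ring
    _ ≤ _ := by
        refine mul_le_mul_of_nonneg_left ?_ (mul_nonneg (by positivity) hM.1)
        rw [← hAs, ← hBs]
        exact mul_le_mul (sum_pow_le_pow_sum _ _ hA0 hl0) (sum_pow_le_pow_sum _ _ hB0 ht1)
          (Finset.sum_nonneg fun _ _ => pow_nonneg (hB0 _) _)
          (pow_nonneg (Finset.sum_nonneg fun _ _ => hA0 _) _)

/-- The broad-narrow dichotomy. -/
theorem pow_sum_le_narrow_add_broad {Y : Type*} [Fintype Y] [DecidableEq Y] [Nonempty Y]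
    (x : Y → ℝ) (hx : ∀ y, 0 ≤ x y) {τ : ℝ} (hτ : 0 < τ) (T T' : ℕ) :
    (∑ y, x y) ^ (T + T') ≤ (1 + τ) ^ (T + T') * ∑ y, x y ^ (T + T')
      + (Fintype.card Y : ℝ) ^ (T + T') * (Fintype.card Y / τ) ^ T'
        * ∑ y, ∑ z ∈ Finset.univ.erase y, x y ^ T * x z ^ T' := by
  set n : ℝ := (Fintype.card Y : ℝ) with hn
  have hn0 : 0 < n := by rw [hn]; exact_mod_cast Fintype.card_pos
  obtain ⟨y₀, -, hy₀⟩ := Finset.exists_max_image (Finset.univ : Finset Y) x Finset.univ_nonempty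
  have hsplit : ∑ y, x y = x y₀ + ∑ z ∈ Finset.univ.erase y₀, x z :=
    (Finset.add_sum_erase _ _ (Finset.mem_univ y₀)).symm
  have hbroad0 : 0 ≤ ∑ y, ∑ z ∈ Finset.univ.erase y, x y ^ T * x z ^ T' :=
    Finset.sum_nonneg fun y _ => Finset.sum_nonneg fun z _ =>
      mul_nonneg (pow_nonneg (hx _) _) (pow_nonneg (hx _) _)
  have hsum0 : 0 ≤ ∑ y, x y := Finset.sum_nonneg fun y _ => hx y
  by_cases hc : ∑ z ∈ Finset.univ.erase y₀, x z ≤ τ * x y₀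
  · have h1 : (∑ y, x y) ^ (T + T') ≤ (1 + τ) ^ (T + T') * ∑ y, x y ^ (T + T') := by
      calc (∑ y, x y) ^ (T + T') ≤ ((1 + τ) * x y₀) ^ (T + T') :=
            pow_le_pow_left₀ hsum0 (by rw [hsplit]; linarith) _
        _ = (1 + τ) ^ (T + T') * x y₀ ^ (T + T') := mul_pow _ _ _
        _ ≤ _ := mul_le_mul_of_nonneg_left
            (Finset.single_le_sum (f := fun y => x y ^ (T + T'))
              (fun y _ => pow_nonneg (hx y) _) (Finset.mem_univ y₀)) (by positivity)
    have h2 : 0 ≤ n ^ (T + T') * (n / τ) ^ T'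
        * ∑ y, ∑ z ∈ Finset.univ.erase y, x y ^ T * x z ^ T' :=
      mul_nonneg (by positivity) hbroad0
    linarith
  · push Not at hc
    obtain ⟨z, hz, hzx⟩ : ∃ z ∈ Finset.univ.erase y₀, τ * x y₀ / n ≤ x z := by
      by_contra! hcon
      have h1 : ∑ z ∈ Finset.univ.erase y₀, x z ≤ ∑ z : Y, τ * x y₀ / n :=
        (Finset.sum_le_sum fun z hz => (hcon z hz).le).trans
          (Finset.sum_le_sum_of_subset_of_nonneg (Finset.subset_univ _) fun z _ _ =>
            div_nonneg (mul_nonneg hτ.le (hx _)) hn0.le)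
      rw [Finset.sum_const, Finset.card_univ, nsmul_eq_mul, ← hn, mul_div_cancel₀ _ hn0.ne'] at h1
      linarith
    have hxz : x y₀ ≤ n / τ * x z := by
      rw [div_le_iff₀ hn0] at hzx
      rw [div_mul_eq_mul_div, le_div_iff₀ hτ]
      linarith
    have hn1 : ∑ y, x y ≤ n * x y₀ := by
      have := Finset.sum_le_card_nsmul Finset.univ x (x y₀) fun y hy => hy₀ y hy
      rwa [Finset.card_univ, nsmul_eq_mul] at this
    have h1 : x y₀ ^ T * x z ^ T' ≤ ∑ y, ∑ z ∈ Finset.univ.erase y, x y ^ T * x z ^ T' :=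
      (Finset.single_le_sum (f := fun z => x y₀ ^ T * x z ^ T')
        (fun z _ => mul_nonneg (pow_nonneg (hx _) _) (pow_nonneg (hx _) _)) hz).trans
        (Finset.single_le_sum (f := fun y => ∑ z ∈ Finset.univ.erase y, x y ^ T * x z ^ T')
          (fun y _ => Finset.sum_nonneg fun z _ =>
            mul_nonneg (pow_nonneg (hx _) _) (pow_nonneg (hx _) _)) (Finset.mem_univ y₀))
    have h2 : (∑ y, x y) ^ (T + T') ≤ n ^ (T + T') * (n / τ) ^ T'
        * ∑ y, ∑ z ∈ Finset.univ.erase y, x y ^ T * x z ^ T' := by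
      calc (∑ y, x y) ^ (T + T') ≤ (n * x y₀) ^ (T + T') := pow_le_pow_left₀ hsum0 hn1 _
        _ = n ^ (T + T') * (x y₀ ^ T * x y₀ ^ T') := by rw [mul_pow, pow_add (x y₀)]
        _ ≤ n ^ (T + T') * (x y₀ ^ T * (n / τ * x z) ^ T') := by
            have := hx y₀
            gcongr
        _ = n ^ (T + T') * (n / τ) ^ T' * (x y₀ ^ T * x z ^ T') := by rw [mul_pow]; ring
        _ ≤ _ := mul_le_mul_of_nonneg_left h1 (by positivity)
    have h3 : 0 ≤ (1 + τ) ^ (T + T') * ∑ y, x y ^ (T + T') :=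
      mul_nonneg (by positivity) (Finset.sum_nonneg fun y _ => pow_nonneg (hx y) _)
    linarith

/-- Recursion for the decoupling constant, from the broad-narrow dichotomy. -/
theorem DecBound.succ {p k n l : ℕ} [Fact p.Prime] (hk : k < p) (hl : l ≤ k) (hk1 : 1 ≤ k)
    {D M τ : ℝ} (hτ : 0 < τ) (hD : DecBound p k n D) (hM : BilBound p k (n + 1) l 1 1 M) :
    DecBound p k (n + 1) ((1 + τ) ^ (2 * tri k) * D
      + (p : ℝ) ^ (2 * tri k) * (p / τ) ^ (2 * (tri k - tri l)) * p ^ 2 * M) := by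
  refine ⟨add_nonneg (mul_nonneg (by positivity) hD.1) (mul_nonneg (by positivity) hM.1),
    fun N r g u co S hr => ?_⟩
  have ht : tri l ≤ tri k := tri_mono hl
  have hk0 := hk1.trans (le_tri k)
  set ψ := polyFreq p r g u
  set π : ℤ → ZMod p := fun i => (u i : ZMod p) with hπ
  set A : ZMod p → ℝ := fun y =>
    classSum ψ co (tri k) (p ^ (n + 1)) u (S.filter fun i => π i = y) with hA
  have hA0 : ∀ y, 0 ≤ A y := fun y => classSum_nonneg _ _ _ _ _ _
  have hAs : ∑ y, A y = classSum ψ co (tri k) (p ^ (n + 1)) u S :=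
    sum_classSum_filter _ _ hk0 _ _ _ _ fun i _ j _ hij => by
      rw [ZMod.intCast_eq_intCast_iff] at hij ⊢
      exact hij.of_dvd (by exact_mod_cast dvd_pow_self p (Nat.succ_ne_zero n))
  set Q := classSum ψ co (tri k) (p ^ (n + 1)) u S with hQ
  have hAQ : ∀ y, A y ≤ Q := fun y => by
    rw [← hAs]; exact Finset.single_le_sum (fun y _ => hA0 y) (Finset.mem_univ y)
  have hQ0 : 0 ≤ Q := classSum_nonneg _ _ _ _ _ _
  have hsupp : ∀ y, ∀ i ∈ S.filter (fun i => π i = y), u i ≡ (y.val : ℤ) [ZMOD (p : ℤ) ^ 1] := by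
    intro y i hi
    rw [Finset.mem_filter] at hi
    rw [pow_one, ← ZMod.intCast_eq_intCast_iff, Int.cast_natCast, ZMod.natCast_zmod_val]
    exact hi.2
  have hnar : ∀ y, moment ψ co (tri k) (S.filter fun i => π i = y) ≤ D * A y ^ tri k := fun y =>
    moment_le_of_congr hk1 hk le_rfl (by omega) (by simpa using hD) r g u co _ hr (hsupp y)
  have hbr : ∀ y, ∀ z ∈ Finset.univ.erase y,
      wMoment (fun α => ‖oscSum ψ co (S.filter fun i => π i = z) α‖ ^ (2 * (tri k - tri l)))
        ψ co (tri l) (S.filter fun i => π i = y) ≤ M * Q ^ tri k := by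
    intro y z hz
    refine (hM.2 N r g u co _ _ y.val z.val hr ?_ (hsupp y) (hsupp z)).trans ?_
    · rw [← ZMod.intCast_eq_intCast_iff, Int.cast_natCast, Int.cast_natCast,
        ZMod.natCast_zmod_val, ZMod.natCast_zmod_val]
      exact fun h => (Finset.mem_erase.1 hz).1 h.symm
    · refine mul_le_mul_of_nonneg_left ?_ hM.1
      calc _ ≤ Q ^ tri l * Q ^ (tri k - tri l) :=
            mul_le_mul (pow_le_pow_left₀ (hA0 y) (hAQ y) _) (pow_le_pow_left₀ (hA0 z) (hAQ z) _)
              (pow_nonneg (hA0 z) _) (pow_nonneg hQ0 _)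
        _ = _ := by rw [← pow_add]; congr 1; omega
  have hexp : 2 * tri l + 2 * (tri k - tri l) = 2 * tri k := by omega
  set K : ℝ := (p : ℝ) ^ (2 * tri k) * (p / τ) ^ (2 * (tri k - tri l)) with hK
  have hK0 : 0 ≤ K := by positivity
  calc moment ψ co (tri k) S
      ≤ ∑ α, ((1 + τ) ^ (2 * tri k)
            * ∑ y, ‖oscSum ψ co (S.filter fun i => π i = y) α‖ ^ (2 * tri k)
          + K * ∑ y, ∑ z ∈ Finset.univ.erase y,
              ‖oscSum ψ co (S.filter fun i => π i = y) α‖ ^ (2 * tri l)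
              * ‖oscSum ψ co (S.filter fun i => π i = z) α‖ ^ (2 * (tri k - tri l))) := by
        refine Finset.sum_le_sum fun α _ => ?_
        have h := pow_sum_le_narrow_add_broad
          (fun y => ‖oscSum ψ co (S.filter fun i => π i = y) α‖) (fun _ => norm_nonneg _) hτ
          (2 * tri l) (2 * (tri k - tri l))
        rw [hexp, ZMod.card] at h
        refine le_trans ?_ h
        rw [← sum_oscSum_filter ψ co π S α]
        exact pow_le_pow_left₀ (norm_nonneg _) (norm_sum_le _ _) _
    _ = (1 + τ) ^ (2 * tri k) * ∑ y, moment ψ co (tri k) (S.filter fun i => π i = y)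
          + K * ∑ y, ∑ z ∈ Finset.univ.erase y,
            wMoment (fun α => ‖oscSum ψ co (S.filter fun i => π i = z) α‖
              ^ (2 * (tri k - tri l))) ψ co (tri l) (S.filter fun i => π i = y) := by
        rw [Finset.sum_add_distrib, ← Finset.mul_sum, ← Finset.mul_sum, Finset.sum_comm]
        congr 2
        rw [Finset.sum_comm]
        refine Finset.sum_congr rfl fun y _ => ?_
        rw [Finset.sum_comm]
        refine Finset.sum_congr rfl fun z _ => Finset.sum_congr rfl fun α _ => ?_
        rw [mul_comm]
    _ ≤ (1 + τ) ^ (2 * tri k) * ∑ y, D * A y ^ tri k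
          + K * ∑ y : ZMod p, ∑ z : ZMod p, M * Q ^ tri k := by
        refine add_le_add (mul_le_mul_of_nonneg_left (Finset.sum_le_sum fun y _ => hnar y)
          (by positivity)) (mul_le_mul_of_nonneg_left (Finset.sum_le_sum fun y _ => ?_) hK0)
        exact (Finset.sum_le_sum (hbr y)).trans
          (Finset.sum_le_sum_of_subset_of_nonneg (Finset.subset_univ _) fun z _ _ =>
            mul_nonneg hM.1 (pow_nonneg hQ0 _))
    _ ≤ (1 + τ) ^ (2 * tri k) * (D * Q ^ tri k) + K * (p ^ 2 * (M * Q ^ tri k)) := by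
        refine add_le_add (mul_le_mul_of_nonneg_left ?_ (by positivity)) (le_of_eq ?_)
        · rw [← Finset.mul_sum, ← hAs]
          exact mul_le_mul_of_nonneg_left (sum_pow_le_pow_sum _ _ hA0 hk0) hD.1
        · simp only [Finset.sum_const, Finset.card_univ, ZMod.card, nsmul_eq_mul]
          ring
    _ = _ := by ring

/-- The decoupling constants for `p ^ n` are `O(p ^ (η * n))`. -/
def DecExponent (p k : ℕ) [NeZero p] (η : ℝ) : Prop :=
  ∃ C : ℝ, 1 ≤ C ∧ ∀ n : ℕ, DecBound p k n (C * (p : ℝ) ^ (η * n))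

/-- Bilinear estimates with a gain of `p ^ (y l * b)` over the decoupling exponent `η`. -/
def BilGain (p k : ℕ) [NeZero p] (η : ℝ) (r : ℕ) (y : ℕ → ℝ) : Prop :=
  ∃ C : ℝ, 1 ≤ C ∧ ∀ n b l c : ℕ, 1 ≤ b → k.factorial ^ r ∣ b → k ^ r * b ≤ n → 1 ≤ l → l < k →
    l * c = (k - l + 1) * b → BilBound p k n l c b (C * (p : ℝ) ^ (η * n - y l * b))

theorem le_mul_of_mul_eq {k l b c : ℕ} (hl : 1 ≤ l) (hlk : l ≤ k) (h : l * c = (k - l + 1) * b) :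
    c ≤ k * b :=
  calc c ≤ l * c := Nat.le_mul_of_pos_left _ hl
    _ = (k - l + 1) * b := h
    _ ≤ k * b := Nat.mul_le_mul_right _ (by omega)

theorem bilGain_zero {p k : ℕ} [NeZero p] {η : ℝ} (r : ℕ) (hk : 1 ≤ k) (h : DecExponent p k η) :
    BilGain p k η r (fun _ => 0) := by
  obtain ⟨C, hC, h⟩ := h
  refine ⟨C, hC, fun n b l c _ _ _ _ hl _ => ?_⟩
  rw [zero_mul, sub_zero]
  exact bilBound_of_decBound hk hl.le (h n)

theorem bilGain_succ {p k r : ℕ} [Fact p.Prime] (hkp : k < p) {η ε : ℝ} (hε : 0 ≤ ε) (hr : 1 ≤ r)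
    (hη : DecExponent p k η) (hlow : ∀ l, 1 ≤ l → l < k → DecExponent p l ε) {y : ℕ → ℝ}
    (hy0 : y 0 = η) (h : BilGain p k η r y) :
    BilGain p k η (r + 1) (fun l =>
      y (k - l) / l + ((k - l : ℕ) : ℝ) / ((k - l : ℕ) + 1 : ℝ) * y (l - 1) - ε * k ^ 2) := by
  obtain ⟨C, hC, h⟩ := h
  obtain ⟨C₀, hC₀, hη⟩ := hη
  choose! E hE1 hE using hlow
  have hp1 : (1 : ℝ) < p := by exact_mod_cast (Fact.out : p.Prime).one_lt
  have hp0 : (0 : ℝ) < p := by linarith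
  obtain ⟨K, hK1, hKC, hKC₀, hKE⟩ : ∃ K : ℝ, 1 ≤ K ∧ C ≤ K ∧ C₀ ≤ K ∧
      ∀ l, 1 ≤ l → l < k → E l ≤ K := by
    refine ⟨C + C₀ + ∑ l ∈ Finset.Ico 1 k, E l, ?_, ?_, ?_, ?_⟩
    all_goals
      have hs : 0 ≤ ∑ l ∈ Finset.Ico 1 k, E l := Finset.sum_nonneg fun l hl => by
        rw [Finset.mem_Ico] at hl
        linarith [hE1 l hl.1 hl.2]
    · linarith
    · linarith
    · linarith
    · intro l hl1 hl
      have := Finset.single_le_sum (s := Finset.Ico 1 k) (f := E) (fun l hl => by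
        rw [Finset.mem_Ico] at hl
        linarith [hE1 l hl.1 hl.2]) (Finset.mem_Ico.2 ⟨hl1, hl⟩)
      linarith
  have hK0 : 0 < K := by linarith
  refine ⟨K ^ 2, one_le_pow₀ hK1, fun n b l c hb hdvd hbn hl1 hl hlc => ?_⟩
  obtain ⟨m, hm⟩ : ∃ m, k = l + m := ⟨k - l, by omega⟩
  have hm1 : 1 ≤ m := by omega
  have hkm : k - l = m := by omega
  have hk1 : 1 ≤ k := by omega
  rw [hkm] at hlc
  simp only [hkm]
  -- refinement of a bilinear estimate of the inductive level
  have hrefine : ∀ (b' l' a' : ℕ), 1 ≤ b' → k.factorial ^ r ∣ b' → k ^ r * b' ≤ n → 1 ≤ l' →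
      l' < k → 1 ≤ a' → l' * a' ≤ (k - l' + 1) * b' → b' ≤ k * b →
      BilBound p k n l' a' b' (K ^ 2 * (p : ℝ) ^ (ε * k ^ 2 * b + (η * n - y l' * b'))) := by
    intro b' l' a' hb' hd hbn' hl'1 hl' ha' hla hb'b
    have hdl : l' ∣ b' := ((Nat.dvd_factorial hl'1 hl'.le).trans
      (dvd_pow_self _ (by omega))).trans hd
    obtain ⟨e, he⟩ := hdl
    set c' := (k - l' + 1) * e with hc'
    have hlc' : l' * c' = (k - l' + 1) * b' := by rw [hc', he]; ring
    have hc'b : c' ≤ k * b' := le_mul_of_mul_eq hl'1 hl'.le hlc'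
    have hkr : k ≤ k ^ r := Nat.le_self_pow (by omega) k
    have hc'n : c' ≤ n := (hc'b.trans (Nat.mul_le_mul_right _ hkr)).trans hbn'
    have hb'n : b' ≤ n := (Nat.le_mul_of_pos_left _ (by positivity)).trans hbn'
    have hac : a' ≤ c' := Nat.le_of_mul_le_mul_left (hla.trans hlc'.ge) hl'1
    refine ((h n b' l' c' hb' hd hbn' hl'1 hl' hlc').refine_left hkp hl'1 hl' ha' hac hc'n hb'n
      hlc'.le (hE l' hl'1 hl' (c' - a'))).mono ?_
    have h1 : ε * ((c' - a' : ℕ) : ℝ) ≤ ε * k ^ 2 * b := by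
      rw [mul_assoc]
      refine mul_le_mul_of_nonneg_left ?_ hε
      have : c' - a' ≤ k ^ 2 * b := (Nat.sub_le _ _).trans
        (hc'b.trans ((Nat.mul_le_mul_left k hb'b).trans (by rw [← mul_assoc, sq])))
      exact_mod_cast this
    calc E l' * (p : ℝ) ^ (ε * ((c' - a' : ℕ) : ℝ)) * (C * (p : ℝ) ^ (η * n - y l' * b'))
        ≤ K * (p : ℝ) ^ (ε * k ^ 2 * b) * (K * (p : ℝ) ^ (η * n - y l' * b')) := by
          have hEl := hKE l' hl'1 hl'
          have hpl := Real.rpow_le_rpow_of_exponent_le hp1.le h1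
          gcongr
      _ = _ := by rw [Real.rpow_add hp0]; ring
  have hkb : k ^ (r + 1) * b = k ^ r * (k * b) := by ring
  have hcb : c ≤ k * b := le_mul_of_mul_eq hl1 hl.le (by rw [hkm]; exact hlc)
  have hbkb : b ≤ k * b := Nat.le_mul_of_pos_left _ hk1
  have hc1 : 1 ≤ c := by
    rcases Nat.eq_zero_or_pos c with rfl | hc
    · have h0 : 0 < (m + 1) * b := by positivity
      omega
    · exact hc
  have hdb : k.factorial ^ r ∣ b := (pow_dvd_pow _ (by omega)).trans hdvd
  have hdc : k.factorial ^ r ∣ c := by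
    obtain ⟨b', hb'⟩ := hdvd
    obtain ⟨q, hq⟩ := Nat.dvd_factorial hl1 hl.le
    refine ⟨(m + 1) * q * b', ?_⟩
    refine Nat.eq_of_mul_eq_mul_left hl1 ?_
    rw [hlc, hb', pow_succ]
    calc _ = (m + 1) * (k.factorial ^ r * k.factorial * b') := by ring
      _ = (m + 1) * (k.factorial ^ r * (l * q) * b') := by rw [← hq]
      _ = _ := by ring
  have H₁ := hrefine c m b hc1 hdc ((Nat.mul_le_mul_left _ hcb).trans (hkb ▸ hbn)) hm1 (by omega)
    hb (by
      have : k - m + 1 = l + 1 := by omega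
      rw [this]
      nlinarith) hcb
  have H₂ : BilBound p k n (l - 1) c b
      (K ^ 2 * (p : ℝ) ^ (ε * k ^ 2 * b + (η * n - y (l - 1) * b))) := by
    have hbn' : k ^ r * b ≤ n := (Nat.mul_le_mul_left _ hbkb).trans (hkb ▸ hbn)
    rcases Nat.lt_or_ge 1 l with hl2 | hl2
    · refine hrefine b (l - 1) c hb hdb hbn' (by omega) (by omega) hc1 ?_ hbkb
      have : k - (l - 1) + 1 = m + 2 := by omega
      rw [this]
      calc (l - 1) * c ≤ l * c := Nat.mul_le_mul_right _ (by omega)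
        _ = (m + 1) * b := hlc
        _ ≤ _ := Nat.mul_le_mul_right _ (by omega)
    · have hl' : l = 1 := by omega
      have hb'n : b ≤ n := (Nat.le_mul_of_pos_left _ (by positivity)).trans hbn'
      have hl0 : l - 1 = 0 := by omega
      rw [hl0, hy0]
      refine (bilBound_zero hk1 hkp hb hb'n (hη (n - b))).mono ?_
      have hexp : η * ((n - b : ℕ) : ℝ) ≤ ε * k ^ 2 * b + (η * n - η * b) := by
        rw [Nat.cast_sub hb'n]
        have : 0 ≤ ε * k ^ 2 * b := by positivity
        linarith
      have hpl := Real.rpow_le_rpow_of_exponent_le hp1.le hexp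
      have hKK : C₀ ≤ K ^ 2 := hKC₀.trans (by nlinarith)
      gcongr
  obtain ⟨l', rfl⟩ : ∃ l', l = l' + 1 := ⟨l - 1, by omega⟩
  subst hm
  rw [Nat.add_sub_cancel] at H₂ ⊢
  refine BilBound.holder (by positivity) H₁ H₂ (le_of_eq ?_)
  have hpow : ∀ x : ℝ, ∀ j : ℕ, ((p : ℝ) ^ x) ^ j = (p : ℝ) ^ (x * j) := fun x j => by
    rw [Real.rpow_mul hp0.le, Real.rpow_natCast]
  have hcr : (c : ℝ) = (m + 1) * b / (l' + 1 : ℝ) := by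
    have := congrArg (Nat.cast : ℕ → ℝ) hlc
    push_cast at this
    field_simp
    linarith
  rw [mul_pow, mul_pow, hpow, hpow]
  calc _ = (K ^ 2 * (K ^ 2) ^ m) * ((p : ℝ) ^ (ε * ((l' + 1 + m : ℕ) : ℝ) ^ 2 * b
          + (η * n - y m * c)) * (p : ℝ) ^ ((ε * ((l' + 1 + m : ℕ) : ℝ) ^ 2 * b
          + (η * n - y l' * b)) * m)) := by ring
    _ = _ := by
      rw [← Real.rpow_add hp0, hcr]
      congr 1
      · ring
      · congr 1
        push_cast
        field_simp
        ring

theorem sum_gain_recursion (K : ℕ) (y : ℕ → ℝ) (δ : ℝ) :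
    ∑ i ∈ Finset.range K, (y (K + 1 - (i + 1)) / ((i + 1 : ℕ) : ℝ)
        + ((K + 1 - (i + 1) : ℕ) : ℝ) / ((K + 1 - (i + 1) : ℕ) + 1 : ℝ) * y (i + 1 - 1) - δ)
      = ∑ i ∈ Finset.range K, y (i + 1) + (K : ℝ) / (K + 1) * y 0 - K * δ := by
  have h1 : ∑ i ∈ Finset.range K, y (K + 1 - (i + 1)) / ((i + 1 : ℕ) : ℝ)
      = ∑ i ∈ Finset.range K, y (i + 1) / ((K - i : ℕ) : ℝ) := by
    rw [← Finset.sum_range_reflect (fun i => y (i + 1) / ((K - i : ℕ) : ℝ)) K]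
    refine Finset.sum_congr rfl fun i hi => ?_
    rw [Finset.mem_range] at hi
    congr 2 <;> omega
  have h2 : ∑ i ∈ Finset.range K,
      ((K + 1 - (i + 1) : ℕ) : ℝ) / ((K + 1 - (i + 1) : ℕ) + 1 : ℝ) * y (i + 1 - 1)
      = (K : ℝ) / (K + 1) * y 0
        + ∑ i ∈ Finset.range K, ((K - (i + 1) : ℕ) : ℝ) / ((K - i : ℕ) : ℝ) * y (i + 1) := by
    have e := Finset.sum_range_succ (fun i => ((K - i : ℕ) : ℝ) / ((K - i : ℕ) + 1 : ℝ) * y i) K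
    rw [Finset.sum_range_succ'] at e
    simp only [Nat.sub_self, Nat.cast_zero, zero_div, zero_mul, add_zero, Nat.sub_zero] at e
    simp only [Nat.add_sub_add_right, Nat.add_sub_cancel]
    rw [← e, add_comm]
    congr 1
    refine Finset.sum_congr rfl fun i hi => ?_
    rw [Finset.mem_range] at hi
    congr 2
    have : K - i = K - (i + 1) + 1 := by omega
    rw [this]; push_cast; ring
  rw [Finset.sum_sub_distrib, Finset.sum_add_distrib, h1, h2, Finset.sum_const,
    Finset.card_range, nsmul_eq_mul]
  have h3 : ∑ i ∈ Finset.range K, y (i + 1) / ((K - i : ℕ) : ℝ)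
      + ∑ i ∈ Finset.range K, ((K - (i + 1) : ℕ) : ℝ) / ((K - i : ℕ) : ℝ) * y (i + 1)
      = ∑ i ∈ Finset.range K, y (i + 1) := by
    rw [← Finset.sum_add_distrib]
    refine Finset.sum_congr rfl fun i hi => ?_
    rw [Finset.mem_range] at hi
    have : K - i = K - (i + 1) + 1 := by omega
    rw [this]; push_cast; field_simp; ring
  linarith

theorem exists_bilGain {p k : ℕ} [Fact p.Prime] (hk : 2 ≤ k) (hkp : k < p) {η₀ η : ℝ}
    (h0 : 0 < η₀) (hle : η₀ ≤ η) (hlow : ∀ l, 1 ≤ l → l < k → ∀ ε > 0, DecExponent p l ε)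
    (hη : DecExponent p k η) (r : ℕ) :
    ∃ y : ℕ → ℝ, y 0 = η ∧ BilGain p k η (r + 1) y ∧
      r * (η₀ / (2 * k)) ≤ ∑ i ∈ Finset.range (k - 1), y (i + 1) := by
  have hkpos : (0 : ℝ) < k := by exact_mod_cast (by omega : 0 < k)
  induction r with
  | zero =>
    refine ⟨Function.update (fun _ => 0) 0 η, by simp, ?_, by simp⟩
    obtain ⟨C, hC, h⟩ := bilGain_zero 1 (by omega) hη
    refine ⟨C, hC, fun n b l c h1 h2 h3 h4 h5 h6 => ?_⟩
    rw [Function.update_of_ne (by omega)]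
    exact h n b l c h1 h2 h3 h4 h5 h6
  | succ r ih =>
    obtain ⟨y, hy0, hy, hsum⟩ := ih
    have hε : 0 < η₀ / (2 * k) / k ^ 2 := by positivity
    obtain ⟨C, hC, h⟩ := bilGain_succ hkp hε.le (by omega) hη
      (fun l h1 h2 => hlow l h1 h2 _ hε) hy0 hy
    set y' : ℕ → ℝ := fun l => y (k - l) / l
      + ((k - l : ℕ) : ℝ) / ((k - l : ℕ) + 1 : ℝ) * y (l - 1) - η₀ / (2 * k) / k ^ 2 * k ^ 2
      with hy'
    refine ⟨Function.update y' 0 η, by simp, ⟨C, hC, fun n b l c h1 h2 h3 h4 h5 h6 => ?_⟩, ?_⟩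
    · rw [Function.update_of_ne (by omega)]
      exact h n b l c h1 h2 h3 h4 h5 h6
    · have e : ∑ i ∈ Finset.range (k - 1), Function.update y' 0 η (i + 1)
          = ∑ i ∈ Finset.range (k - 1), y' (i + 1) :=
        Finset.sum_congr rfl fun i _ => by rw [Function.update_of_ne (by omega)]
      rw [e]
      obtain ⟨K, rfl⟩ : ∃ K, k = K + 1 := ⟨k - 1, by omega⟩
      rw [Nat.add_sub_cancel] at hsum ⊢
      rw [hy', sum_gain_recursion K y, hy0, div_mul_cancel₀ _ (by positivity)]
      have hK1 : (1 : ℝ) ≤ K := by exact_mod_cast (by omega : 1 ≤ K)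
      push_cast at hsum ⊢
      have h1 : (K : ℝ) / (K + 1) * η - K * (η₀ / (2 * (K + 1)))
          = K * (2 * η - η₀) / (2 * (K + 1)) := by field_simp
      have h2 : η₀ / (2 * ((K : ℝ) + 1)) ≤ K * (2 * η - η₀) / (2 * (K + 1)) := by
        gcongr
        nlinarith
      linarith

theorem decExponent_of_bilBound {p k l : ℕ} [Fact p.Prime] (hk1 : 1 ≤ k) (hkp : k < p)
    (hl : l ≤ k) {θ C : ℝ} (hθ : 0 < θ) (hC : 0 ≤ C)
    (h : ∀ n : ℕ, BilBound p k n l 1 1 (C * (p : ℝ) ^ (θ * n))) : DecExponent p k θ := by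
  have hp1 : (1 : ℝ) < p := by exact_mod_cast (Fact.out : p.Prime).one_lt
  have hp0 : (0 : ℝ) < p := by linarith
  have hs : 0 < tri k := hk1.trans (le_tri k)
  have hs' : (0 : ℝ) < tri k := by exact_mod_cast hs
  set τ : ℝ := (p : ℝ) ^ (θ / (4 * tri k)) - 1 with hτ
  have hτ0 : 0 < τ := by
    rw [hτ, sub_pos]; exact Real.one_lt_rpow hp1 (by positivity)
  have hτp : (1 + τ) ^ (2 * tri k) = (p : ℝ) ^ (θ / 2) := by
    rw [hτ, add_sub_cancel, ← Real.rpow_natCast, ← Real.rpow_mul hp0.le]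
    congr 1; push_cast; field_simp; norm_num
  set C₃ : ℝ := (p : ℝ) ^ (2 * tri k) * (p / τ) ^ (2 * (tri k - tri l)) * p ^ 2 * C with hC₃
  have hC₃0 : 0 ≤ C₃ := by positivity
  set q : ℝ := (p : ℝ) ^ (-(θ / 2)) with hq
  have hq1 : q < 1 := Real.rpow_lt_one_of_one_lt_of_neg hp1 (by linarith)
  have h1q : 0 < 1 - q := by linarith
  refine ⟨1 + C₃ / (1 - q), by have : 0 ≤ C₃ / (1 - q) := by positivity
                               linarith, fun n => ?_⟩
  set B : ℝ := 1 + C₃ / (1 - q) with hB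
  have hBC : B * q + C₃ ≤ B := by
    have : C₃ = (B - 1) * (1 - q) := by rw [hB]; field_simp; ring
    have hq0 : 0 < q := Real.rpow_pos_of_pos hp0 _
    rw [this]
    nlinarith
  induction n with
  | zero =>
    refine (decBound_trivial p 0 hk1).mono ?_
    have : 0 ≤ C₃ / (1 - q) := by positivity
    simp; linarith
  | succ n ih =>
    refine (DecBound.succ hkp hl hk1 hτ0 ih (h (n + 1))).mono ?_
    rw [hτp]
    set P : ℝ := (p : ℝ) ^ (θ * ((n + 1 : ℕ) : ℝ)) with hP
    have hP0 : 0 < P := Real.rpow_pos_of_pos hp0 _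
    have e1 : (p : ℝ) ^ (θ / 2) * (p : ℝ) ^ (θ * (n : ℝ)) = q * P := by
      rw [hq, hP, ← Real.rpow_add hp0, ← Real.rpow_add hp0]
      congr 1; push_cast; ring
    calc _ = B * ((p : ℝ) ^ (θ / 2) * (p : ℝ) ^ (θ * (n : ℝ))) + C₃ * P := by rw [hC₃]; ring
      _ = (B * q + C₃) * P := by rw [e1]; ring
      _ ≤ B * P := mul_le_mul_of_nonneg_right hBC hP0.le

theorem decExponent_improve {p k : ℕ} [Fact p.Prime] (hk : 2 ≤ k) (hkp : k < p)
    (hlow : ∀ l, 1 ≤ l → l < k → ∀ ε > 0, DecExponent p l ε) {η₀ : ℝ} (h0 : 0 < η₀) :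
    ∃ σ > 0, ∀ η, η₀ ≤ η → DecExponent p k η → DecExponent p k (η - σ) := by
  have hkpos : (0 : ℝ) < k := by exact_mod_cast (by omega : 0 < k)
  have hp1 : (1 : ℝ) < p := by exact_mod_cast (Fact.out : p.Prime).one_lt
  have hp0 : (0 : ℝ) < p := by linarith
  set Λ : ℝ := 2 * k * tri k + 1 with hΛ
  obtain ⟨r, hr⟩ := exists_nat_ge ((k * Λ) / (η₀ / (2 * k)))
  rw [div_le_iff₀ (by positivity)] at hr
  set σ : ℝ := min (η₀ / 2) (1 / (k : ℝ) ^ (r + 1)) with hσ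
  have hσ0 : 0 < σ := by rw [hσ]; positivity
  refine ⟨σ, hσ0, fun η hle hη => ?_⟩
  obtain ⟨y, -, ⟨C, hC, hy⟩, hsum⟩ := exists_bilGain hk hkp h0 hle hlow hη r
  obtain ⟨l, hl1, hl, hyl⟩ : ∃ l, 1 ≤ l ∧ l < k ∧ Λ ≤ y l := by
    by_contra! hcon
    have h1 : ∑ i ∈ Finset.range (k - 1), y (i + 1) ≤ ∑ i ∈ Finset.range (k - 1), Λ :=
      Finset.sum_le_sum fun i hi => by
        rw [Finset.mem_range] at hi
        exact (hcon (i + 1) (by omega) (by omega)).le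
    rw [Finset.sum_const, Finset.card_range, nsmul_eq_mul, Nat.cast_sub (by omega)] at h1
    have hΛ0 : 0 < Λ := by rw [hΛ]; positivity
    push_cast at h1
    nlinarith
  obtain ⟨C₀, hC₀, hη⟩ := hη
  set F := k.factorial ^ (r + 1) with hF
  have hF0 : 0 < F := by positivity
  set K := k ^ (r + 1) * F with hK
  have hK0 : 0 < K := by positivity
  have hση : σ ≤ η₀ / 2 := min_le_left _ _
  have hσk : σ ≤ 1 / (k : ℝ) ^ (r + 1) := min_le_right _ _
  refine decExponent_of_bilBound (l := l) (by omega) hkp hl.le (C := (C + C₀) * (p : ℝ) ^ (σ * K + F))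
    (by linarith) (by positivity) fun n => ?_
  rcases lt_or_ge n K with hn | hn
  · refine (bilBound_of_decBound (by omega) hl.le (hη n)).mono ?_
    have hexp : η * n ≤ σ * K + F + (η - σ) * n := by
      have : (n : ℝ) ≤ K := by exact_mod_cast hn.le
      have hF1 : (0 : ℝ) ≤ F := by positivity
      nlinarith
    rw [mul_assoc, ← Real.rpow_add hp0]
    have hpl := Real.rpow_le_rpow_of_exponent_le hp1.le hexp
    have : C₀ ≤ C + C₀ := by linarith
    gcongr
  · set b := F * (n / K) with hb
    have hnK : 1 ≤ n / K := Nat.div_pos hn hK0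
    have hb1 : 1 ≤ b := Nat.mul_pos hF0 hnK
    have hkb : k ^ (r + 1) * b ≤ n := by
      rw [hb, ← mul_assoc]; exact Nat.mul_div_le n K
    obtain ⟨e, he⟩ : l ∣ b := ((Nat.dvd_factorial hl1 hl.le).trans
      (dvd_pow_self _ (by omega))).trans (Dvd.intro _ rfl : F ∣ b)
    have hlc : l * ((k - l + 1) * e) = (k - l + 1) * b := by rw [he]; ring
    set c := (k - l + 1) * e
    have hcb : c ≤ k * b := le_mul_of_mul_eq hl1 hl.le hlc
    have hkr : k ≤ k ^ (r + 1) := Nat.le_self_pow (by omega) k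
    have hcn : c ≤ n := (hcb.trans (Nat.mul_le_mul_right _ hkr)).trans hkb
    have hbn : b ≤ n := (Nat.le_mul_of_pos_left _ (by positivity)).trans hkb
    refine ((hy n b l c hb1 (Dvd.intro _ rfl) hkb hl1 hl hlc).coarsen hl1 hl hcn hbn).mono ?_
    have ht : tri l ≤ tri k := tri_mono hl.le
    have hloss : (c : ℝ) * ((2 * tri l : ℕ) : ℝ) + b * ((2 * (tri k - tri l) : ℕ) : ℝ)
        ≤ 2 * k * tri k * b := by
      have h1 : c * (2 * tri l) + b * (2 * (tri k - tri l)) ≤ 2 * k * tri k * b := by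
        calc c * (2 * tri l) + b * (2 * (tri k - tri l))
            ≤ k * b * (2 * tri l) + k * b * (2 * (tri k - tri l)) :=
              Nat.add_le_add (Nat.mul_le_mul_right _ hcb)
                (Nat.mul_le_mul_right _ (Nat.le_mul_of_pos_left _ (by omega)))
          _ = k * b * (2 * tri k) := by rw [← Nat.mul_add]; congr 1; omega
          _ = _ := by ring
      exact_mod_cast h1
    have hbσ : σ * n ≤ b + F := by
      have h1 : n < k ^ (r + 1) * (b + F) := by
        have := Nat.lt_mul_div_succ n hK0
        calc n < K * (n / K + 1) := this
          _ = _ := by rw [hK, hb]; ring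
      have h2 : (n : ℝ) ≤ (k : ℝ) ^ (r + 1) * (b + F) := by exact_mod_cast h1.le
      calc σ * n ≤ 1 / (k : ℝ) ^ (r + 1) * ((k : ℝ) ^ (r + 1) * (b + F)) := by gcongr
        _ = b + F := by field_simp
    have hpow : ∀ i j : ℕ, ((p : ℝ) ^ i) ^ j = (p : ℝ) ^ ((i : ℝ) * (j : ℝ)) := fun i j => by
      rw [← pow_mul, ← Real.rpow_natCast]; push_cast; rfl
    rw [hpow, hpow, mul_assoc (C + C₀), ← Real.rpow_add hp0, ← Real.rpow_add hp0, mul_left_comm,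
      ← Real.rpow_add hp0]
    have hexp : (c : ℝ) * ((2 * tri l : ℕ) : ℝ) + b * ((2 * (tri k - tri l) : ℕ) : ℝ)
        + (η * n - y l * b) ≤ σ * K + F + (η - σ) * n := by
      have h1 : Λ * b ≤ y l * b := mul_le_mul_of_nonneg_right hyl (by positivity)
      have h2 : 0 ≤ σ * K := by positivity
      rw [hΛ] at h1
      linarith
    have hpl := Real.rpow_le_rpow_of_exponent_le hp1.le hexp
    have : C ≤ C + C₀ := by linarith
    gcongr

theorem DecExponent.mono {p k : ℕ} [NeZero p] {η η' : ℝ} (h : DecExponent p k η) (hle : η ≤ η') :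
    DecExponent p k η' := by
  obtain ⟨C, hC, h⟩ := h
  refine ⟨C, hC, fun n => (h n).mono ?_⟩
  have hp1 : (1 : ℝ) ≤ p := by exact_mod_cast NeZero.one_le
  have hpl := Real.rpow_le_rpow_of_exponent_le hp1
    (mul_le_mul_of_nonneg_right hle (Nat.cast_nonneg (α := ℝ) n))
  gcongr

/-- Decoupling for the moment curve, with an arbitrarily small loss in the exponent. -/
theorem decExponent_of_pos {p : ℕ} [Fact p.Prime] (k : ℕ) (hk1 : 1 ≤ k) (hkp : k < p) (ε : ℝ)
    (hε : 0 < ε) : DecExponent p k ε := by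
  induction k using Nat.strong_induction_on generalizing ε with
  | _ k ih =>
    rcases Nat.lt_or_ge k 2 with hk | hk
    · obtain rfl : k = 1 := by omega
      refine DecExponent.mono (η := 0) ⟨1, le_rfl, fun n => ?_⟩ hε.le
      simpa using decBound_one p n
    by_contra hcon
    obtain ⟨σ, hσ, himp⟩ := decExponent_improve hk hkp
      (fun l h1 h2 ε hε => ih l h2 h1 (h2.trans hkp) ε hε) hε
    have hge : ∀ η, DecExponent p k η → ε ≤ η := fun η hη => by
      by_contra! hlt
      exact hcon (hη.mono hlt.le)
    have htriv : DecExponent p k (tri k) := ⟨1, le_rfl, fun n => (decBound_trivial p n hk1).mono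
      (le_of_eq (by
        rw [one_mul, ← pow_mul, ← Real.rpow_natCast]; congr 1; push_cast; ring))⟩
    have hall : ∀ j : ℕ, DecExponent p k (tri k - j * σ) := by
      intro j
      induction j with
      | zero => simpa using htriv
      | succ j hj =>
        have := himp _ (hge _ hj) hj
        convert this using 1
        push_cast; ring
    obtain ⟨j, hj⟩ := exists_nat_gt ((tri k : ℝ) / σ)
    rw [div_lt_iff₀ hσ] at hj
    have := hge _ (hall j)
    linarith

/-- The number of solutions of the Vinogradov system of degree `k` in `2 * s` integers between
`1` and `M`. -/
noncomputable def vinogradovCount (s k M : ℕ) : ℕ :=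
  #{z ∈ (Fintype.piFinset fun _ : Fin s => Icc (1 : ℤ) M) ×ˢ
      (Fintype.piFinset fun _ : Fin s => Icc (1 : ℤ) M) |
    ∀ m : Fin k, ∑ i, z.1 i ^ (m.1 + 1) = ∑ i, z.2 i ^ (m.1 + 1)}

theorem card_mul_vinogradovCount_le_moment {q : ℕ} [NeZero q] {s k M : ℕ}
    (ψ : ℤ → Fin k → ZMod q) (hψ : ∀ i m, ψ i m = (i : ZMod q) ^ (m.1 + 1)) :
    (Fintype.card (Fin k → ZMod q) : ℝ) * vinogradovCount s k M
      ≤ moment ψ 1 s (Icc (1 : ℤ) M) := by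
  set T := Fintype.piFinset fun _ : Fin s => Icc (1 : ℤ) M with hT
  have h1 : ∀ α : Fin k → ZMod q, ‖oscSum ψ 1 (Icc (1 : ℤ) M) α‖ ^ (2 * s)
      = ‖∑ x ∈ T, (fun _ => (1 : ℂ)) x
          * ZMod.stdAddChar (∑ m, α m * (fun x m => ∑ i, ψ (x i) m) x m)‖ ^ 2 := by
    intro α
    rw [mul_comm, pow_mul, ← norm_pow]
    congr 2
    have := Finset.prod_univ_sum (fun _ : Fin s => Icc (1 : ℤ) M)
      (fun _ j => (ZMod.stdAddChar (∑ m, α m * ψ j m) : ℂ))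
    rw [Finset.prod_const, Finset.card_univ, Fintype.card_fin] at this
    simp only [oscSum, Pi.one_apply, one_mul]
    rw [this]
    refine Finset.sum_congr rfl fun x _ => ?_
    rw [← addChar_map_sum, Finset.sum_comm]
    simp only [Finset.mul_sum]
  have h2 : moment ψ 1 s (Icc (1 : ℤ) M) = (Fintype.card (Fin k → ZMod q) : ℝ)
      * #{z ∈ T ×ˢ T | ∑ i, ψ (z.1 i) = ∑ i, ψ (z.2 i)} := by
    unfold moment
    rw [← Complex.ofReal_inj, Finset.sum_congr rfl fun α _ => h1 α, sum_norm_sq_stdAddChar]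
    push_cast
    congr 1
    rw [Finset.card_filter, Finset.sum_product]
    push_cast
    refine Finset.sum_congr rfl fun x _ => Finset.sum_congr rfl fun y _ => ?_
    simp only [map_one, mul_one]
    refine if_congr ?_ rfl rfl
    simp only [funext_iff, Finset.sum_apply]
  rw [h2]
  refine mul_le_mul_of_nonneg_left ?_ (by positivity)
  rw [Nat.cast_le]
  refine Finset.card_le_card fun z hz => ?_
  rw [Finset.mem_filter] at hz ⊢
  refine ⟨hz.1, funext fun m => ?_⟩
  simp only [Finset.sum_apply, hψ]
  exact_mod_cast congrArg (Int.cast : ℤ → ZMod q) (hz.2 m)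

theorem moment_le_of_card_le_one {q : ℕ} [NeZero q] {s k : ℕ} (hs : 1 ≤ s)
    (ψ : ℤ → Fin k → ZMod q) (S : Finset ℤ) (hS : #S ≤ 1) :
    moment ψ 1 s S ^ ((s : ℝ)⁻¹)
      ≤ (Fintype.card (Fin k → ZMod q) : ℝ) ^ ((s : ℝ)⁻¹) * #S := by
  rcases Nat.le_one_iff_eq_zero_or_eq_one.1 hS with h | h
  · rw [Finset.card_eq_zero] at h
    subst h
    rw [moment_empty _ _ hs, Real.zero_rpow (by positivity)]
    simp
  · obtain ⟨x, rfl⟩ := Finset.card_eq_one.1 h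
    simp [moment, oscSum]

theorem classSum_le_of_lt {q : ℕ} [NeZero q] {s k : ℕ} (hs : 1 ≤ s)
    (ψ : ℤ → Fin k → ZMod q) (Q : ℕ) [NeZero Q] {M : ℕ} (hM : M < Q) :
    classSum ψ 1 s Q id (Icc (1 : ℤ) M)
      ≤ (Fintype.card (Fin k → ZMod q) : ℝ) ^ ((s : ℝ)⁻¹) * M := by
  unfold classSum
  refine (Finset.sum_le_sum fun y _ => moment_le_of_card_le_one hs ψ _ ?_).trans ?_
  · rw [Finset.card_le_one]
    intro a ha b hb
    simp only [Finset.mem_filter, Finset.mem_Icc, id] at ha hb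
    have h := (ZMod.intCast_eq_intCast_iff_dvd_sub a b Q).1 (ha.2.trans hb.2.symm)
    have h2 := Int.eq_zero_of_abs_lt_dvd h (by rw [abs_lt]; constructor <;> omega)
    omega
  · rw [← Finset.mul_sum, ← Nat.cast_sum]
    refine mul_le_mul_of_nonneg_left ?_ (by positivity)
    rw [Finset.sum_card_fiberwise_eq_card_filter]
    simp

/-- The main conjecture in Vinogradov's mean value theorem at the critical exponent. -/
theorem vinogradovCount_le (k : ℕ) (hk : 1 ≤ k) (ε : ℝ) (hε : 0 < ε) :
    ∃ C : ℝ, 1 ≤ C ∧ ∀ M : ℕ, 1 ≤ M →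
      (vinogradovCount (tri k) k M : ℝ) ≤ C * (M : ℝ) ^ (tri k + ε) := by
  obtain ⟨p, hkp, hp⟩ := Nat.exists_infinite_primes (k + 1)
  have : Fact p.Prime := ⟨hp⟩
  obtain ⟨C, hC, h⟩ := decExponent_of_pos (p := p) k hk (by omega) ε hε
  have hp1 : (1 : ℝ) ≤ p := by exact_mod_cast hp.one_lt.le
  have hs : 1 ≤ tri k := hk.trans (le_tri k)
  refine ⟨C * (p : ℝ) ^ ε, one_le_mul_of_one_le_of_one_le hC (Real.one_le_rpow hp1 hε.le),
    fun M hM => ?_⟩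
  set n := Nat.log p M + 1 with hn
  have h1 : M < p ^ n := Nat.lt_pow_succ_log_self hp.one_lt M
  have h2 : p ^ Nat.log p M ≤ M := Nat.pow_log_le_self p (by omega)
  obtain ⟨hD, hdec⟩ := h n
  have h3 := hdec (k * n) 0 0 id 1 (Icc (1 : ℤ) M) (fun m => by simp)
  have h4 := card_mul_vinogradovCount_le_moment (q := p ^ (k * n)) (s := tri k) (M := M)
    (polyFreq p (0 : Fin k → ℕ) 0 id) (fun i m => by simp [polyFreq, momentPoly])
  have h5 := classSum_le_of_lt hs (polyFreq p (N := k * n) (0 : Fin k → ℕ) 0 id) (p ^ n) h1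
  have h6 := pow_le_pow_left₀ (classSum_nonneg _ _ _ _ _ _) h5 (tri k)
  rw [mul_pow, Real.rpow_inv_natCast_pow (by positivity) (by omega)] at h6
  have hG : (0 : ℝ) < Fintype.card (Fin k → ZMod (p ^ (k * n))) := by
    exact_mod_cast Fintype.card_pos
  have h7 : (vinogradovCount (tri k) k M : ℝ) ≤ C * (p : ℝ) ^ (ε * n) * (M : ℝ) ^ tri k := by
    refine le_of_mul_le_mul_left ?_ hG
    calc _ ≤ _ := h4
      _ ≤ _ := h3
      _ ≤ _ := mul_le_mul_of_nonneg_left h6 hD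
      _ = _ := by ring
  have h8 : (p : ℝ) ^ (ε * n) ≤ (p : ℝ) ^ ε * (M : ℝ) ^ ε := by
    have : (p : ℝ) ^ (ε * n) = (p : ℝ) ^ ε * ((p : ℝ) ^ Nat.log p M) ^ ε := by
      rw [← Real.rpow_natCast, ← Real.rpow_mul (by positivity), ← Real.rpow_add (by positivity), hn]
      congr 1; push_cast; ring
    rw [this]
    refine mul_le_mul_of_nonneg_left (Real.rpow_le_rpow (by positivity) ?_ hε.le) (by positivity)
    exact_mod_cast h2
  have hM0 : (0 : ℝ) < M := by exact_mod_cast hM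
  calc _ ≤ _ := h7
    _ ≤ C * ((p : ℝ) ^ ε * (M : ℝ) ^ ε) * (M : ℝ) ^ tri k := by gcongr
    _ = _ := by rw [Real.rpow_add hM0, Real.rpow_natCast]; ring

end meanValue

section minorArcBounds

open Finset

theorem ec_add (x y : ℝ) : ec (x + y) = ec x * ec y := by
  rw [ec, ec, ec, ← Complex.exp_add]; congr 1; push_cast; ring

theorem ec_zero : ec 0 = 1 := by simp [ec]

theorem norm_ec (x : ℝ) : ‖ec x‖ = 1 := by
  rw [ec, show 2 * (Real.pi : ℂ) * Complex.I * x = ((2 * Real.pi * x : ℝ) : ℂ) * Complex.I by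
    push_cast; ring, Complex.norm_exp_ofReal_mul_I]

theorem ec_intCast (n : ℤ) : ec n = 1 := by
  rw [ec, Complex.exp_eq_one_iff]; exact ⟨n, by push_cast; ring⟩

theorem ec_sub_intCast (x : ℝ) (n : ℤ) : ec (x - n) = ec x := by
  rw [sub_eq_add_neg, ec_add, ← Int.cast_neg, ec_intCast, mul_one]

theorem conj_ec (x : ℝ) : (starRingEnd ℂ) (ec x) = ec (-x) := by
  rw [ec, ec, ← Complex.exp_conj]; congr 1; simp [map_ofNat]

theorem ec_mul_natCast (x : ℝ) (n : ℕ) : ec (x * n) = ec x ^ n := by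
  rw [ec, ec, ← Complex.exp_nat_mul]; congr 1; push_cast; ring

theorem ec_sum {ι : Type*} (S : Finset ι) (f : ι → ℝ) : ec (∑ i ∈ S, f i) = ∏ i ∈ S, ec (f i) := by
  classical
  induction S using Finset.induction_on with
  | empty => simp [ec_zero]
  | insert a S ha ih => rw [Finset.sum_insert ha, Finset.prod_insert ha, ec_add, ih]

theorem continuous_ec : Continuous ec := by unfold ec; fun_prop

theorem four_mul_abs_le_norm_ec_sub_one {θ : ℝ} (hθ : |θ| ≤ 1 / 2) : 4 * |θ| ≤ ‖ec θ - 1‖ := by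
  have h := Complex.norm_exp_I_mul_ofReal_sub_one (2 * Real.pi * θ)
  have e : ec θ = Complex.exp (Complex.I * (2 * Real.pi * θ : ℝ)) := by
    rw [ec]; congr 1; push_cast; ring
  rw [e, h, Real.norm_eq_abs, abs_mul, abs_two, show 2 * Real.pi * θ / 2 = Real.pi * θ by ring]
  have h2 := Real.mul_abs_le_abs_sin (x := Real.pi * θ) (by
    rw [abs_mul, abs_of_pos Real.pi_pos]; nlinarith [Real.pi_pos])
  rw [abs_mul, abs_of_pos Real.pi_pos, ← mul_assoc, div_mul_cancel₀ _ Real.pi_ne_zero] at h2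
  linarith

theorem norm_sum_range_ec_le {θ : ℝ} (hθ : |θ| ≤ 1 / 2) (h0 : θ ≠ 0) (U : ℕ) :
    ‖∑ u ∈ range U, ec (θ * u)‖ ≤ 1 / 2 * |θ|⁻¹ := by
  have hpos : 0 < |θ| := abs_pos.2 h0
  have h4 := four_mul_abs_le_norm_ec_sub_one hθ
  have hne : ec θ ≠ 1 := by
    rintro h
    rw [h, sub_self, norm_zero] at h4
    linarith
  simp only [ec_mul_natCast]
  rw [geom_sum_eq hne, norm_div]
  have h2 : ‖ec θ ^ U - 1‖ ≤ 2 := by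
    refine (norm_sub_le _ _).trans ?_
    rw [norm_pow, norm_ec]; norm_num
  calc _ ≤ 2 / (4 * |θ|) := by gcongr
    _ = _ := by field_simp; norm_num

/-- Reciprocal sums over positive `δ`-separated points. -/
theorem sum_inv_le_of_separated {ι : Type*} (I : Finset ι) (θ : ι → ℝ) {δ : ℝ} (hδ : 0 < δ)
    (hδ1 : δ ≤ 1) (hlow : ∀ i ∈ I, δ ≤ θ i) (hup : ∀ i ∈ I, θ i ≤ 1)
    (hsep : ∀ i ∈ I, ∀ j ∈ I, i ≠ j → δ ≤ |θ i - θ j|) :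
    ∑ i ∈ I, (θ i)⁻¹ ≤ δ⁻¹ * (1 + Real.log δ⁻¹) := by
  classical
  have hf : ∀ i ∈ I, 1 ≤ ⌊θ i / δ⌋₊ := fun i hi => by
    rw [Nat.one_le_floor_iff, one_le_div hδ]; exact hlow i hi
  have hle : ∀ i ∈ I, (⌊θ i / δ⌋₊ : ℝ) ≤ θ i / δ := fun i hi =>
    Nat.floor_le (div_nonneg (hδ.le.trans (hlow i hi)) hδ.le)
  have hinj : Set.InjOn (fun i => ⌊θ i / δ⌋₊ - 1) (I : Set ι) := by
    intro i hi j hj hij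
    by_contra hne
    have h1 := hf i hi
    have h2 := hf j hj
    have h3 : ⌊θ i / δ⌋₊ = ⌊θ j / δ⌋₊ := by simp only at hij; omega
    have h4 := hle i hi
    have h5 := hle j hj
    have h6 := Nat.lt_floor_add_one (θ i / δ)
    have h7 := Nat.lt_floor_add_one (θ j / δ)
    rw [h3] at h4 h6
    have h8 : |θ i / δ - θ j / δ| < 1 := by rw [abs_lt]; constructor <;> linarith
    rw [← sub_div, abs_div, abs_of_pos hδ, div_lt_one hδ] at h8
    exact absurd (hsep i hi j hj hne) (not_le.2 h8)
  have hH : ((harmonic ⌊δ⁻¹⌋₊ : ℚ) : ℝ) = ∑ n ∈ range ⌊δ⁻¹⌋₊, ((n : ℝ) + 1)⁻¹ := by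
    simp [harmonic]
  calc ∑ i ∈ I, (θ i)⁻¹ ≤ ∑ i ∈ I, δ⁻¹ * (((⌊θ i / δ⌋₊ - 1 : ℕ) : ℝ) + 1)⁻¹ := by
        refine Finset.sum_le_sum fun i hi => ?_
        have h1 := hf i hi
        have h2 := hle i hi
        have h3 : (1 : ℝ) ≤ ⌊θ i / δ⌋₊ := by exact_mod_cast h1
        rw [Nat.cast_sub h1, Nat.cast_one, sub_add_cancel, ← mul_inv]
        refine inv_anti₀ (by positivity) ?_
        rw [le_div_iff₀ hδ] at h2
        linarith
    _ = δ⁻¹ * ∑ n ∈ I.image (fun i => ⌊θ i / δ⌋₊ - 1), ((n : ℝ) + 1)⁻¹ := by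
        rw [Finset.sum_image hinj, Finset.mul_sum]
    _ ≤ δ⁻¹ * ∑ n ∈ range ⌊δ⁻¹⌋₊, ((n : ℝ) + 1)⁻¹ := by
        refine mul_le_mul_of_nonneg_left ?_ (by positivity)
        refine Finset.sum_le_sum_of_subset_of_nonneg ?_ fun _ _ _ => by positivity
        intro n hn
        obtain ⟨i, hi, rfl⟩ := Finset.mem_image.1 hn
        have h1 := hf i hi
        have h2 : ⌊θ i / δ⌋₊ ≤ ⌊δ⁻¹⌋₊ := Nat.floor_le_floor (by
          rw [div_eq_mul_inv]
          exact mul_le_of_le_one_left (by positivity) (hup i hi))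
        rw [Finset.mem_range]; omega
    _ ≤ _ := by
        rw [← hH]
        exact mul_le_mul_of_nonneg_left (harmonic_floor_le_one_add_log _ (one_le_inv₀ hδ |>.2 hδ1))
          (by positivity)

/-- Points on the circle that are `δ`-separated modulo one. -/
def SepModOne {ι : Type*} (Y : Finset ι) (β : ι → ℝ) (δ : ℝ) : Prop :=
  ∀ y ∈ Y, ∀ z ∈ Y, y ≠ z → ∀ n : ℤ, δ ≤ |β y - β z - n|

theorem sum_norm_geom_le_of_sepModOne {ι : Type*} {Y : Finset ι} {β : ι → ℝ} {δ : ℝ}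
    (h : SepModOne Y β δ) (hδ : 0 < δ) (hδ1 : δ ≤ 1) (U : ℕ) {y : ι} (hy : y ∈ Y) :
    ∑ z ∈ Y, ‖∑ u ∈ range U, ec ((β z - β y) * u)‖ ≤ U + δ⁻¹ * (1 + Real.log δ⁻¹) := by
  classical
  set θ : ι → ℝ := fun z => β z - β y - round (β z - β y) with hθ
  have hec : ∀ z (u : ℕ), ec ((β z - β y) * u) = ec (θ z * u) := fun z u => by
    rw [ec_mul_natCast, ec_mul_natCast, hθ, ec_sub_intCast]
  have hhalf : ∀ z, |θ z| ≤ 1 / 2 := fun z => abs_sub_round _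
  have hlow : ∀ z ∈ Y.erase y, δ ≤ |θ z| := fun z hz =>
    h z (Finset.mem_of_mem_erase hz) y hy (Finset.ne_of_mem_erase hz) _
  have hsep : ∀ z ∈ Y.erase y, ∀ w ∈ Y.erase y, z ≠ w → δ ≤ |θ z - θ w| := by
    intro z hz w hw hzw
    have := h z (Finset.mem_of_mem_erase hz) w (Finset.mem_of_mem_erase hw) hzw
      (round (β z - β y) - round (β w - β y))
    convert this using 2
    simp only [hθ]; push_cast; ring
  have hpos : ∑ z ∈ (Y.erase y).filter (fun z => 0 < θ z), |θ z|⁻¹ ≤ δ⁻¹ * (1 + Real.log δ⁻¹) := by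
    refine (Finset.sum_congr rfl fun z hz => ?_).trans_le
      (sum_inv_le_of_separated _ θ hδ hδ1 (fun z hz => ?_) (fun z hz => ?_) fun z hz w hw hzw => ?_)
    · rw [abs_of_pos (Finset.mem_filter.1 hz).2]
    · have := hlow z (Finset.mem_filter.1 hz).1
      rwa [abs_of_pos (Finset.mem_filter.1 hz).2] at this
    · linarith [le_abs_self (θ z), hhalf z]
    · exact hsep z (Finset.mem_filter.1 hz).1 w (Finset.mem_filter.1 hw).1 hzw
  have hneg : ∑ z ∈ (Y.erase y).filter (fun z => ¬ 0 < θ z), |θ z|⁻¹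
      ≤ δ⁻¹ * (1 + Real.log δ⁻¹) := by
    have hle : ∀ z ∈ (Y.erase y).filter (fun z => ¬ 0 < θ z), |θ z| = - θ z := fun z hz =>
      abs_of_nonpos (not_lt.1 (Finset.mem_filter.1 hz).2)
    refine (Finset.sum_congr rfl fun z hz => ?_).trans_le
      (sum_inv_le_of_separated _ (fun z => - θ z) hδ hδ1 (fun z hz => ?_) (fun z hz => ?_)
        fun z hz w hw hzw => ?_)
    · rw [hle z hz]
    · have := hlow z (Finset.mem_filter.1 hz).1
      rwa [hle z hz] at this
    · linarith [neg_abs_le (θ z), hhalf z]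
    · have := hsep z (Finset.mem_filter.1 hz).1 w (Finset.mem_filter.1 hw).1 hzw
      rwa [show -θ z - -θ w = -(θ z - θ w) by ring, abs_neg]
  have hne : ∀ z ∈ Y.erase y, θ z ≠ 0 := fun z hz h0 => by
    have := hlow z hz
    rw [h0, abs_zero] at this
    linarith
  rw [← Finset.add_sum_erase _ _ hy]
  refine add_le_add ?_ ?_
  · simp [ec_zero]
  · calc _ ≤ ∑ z ∈ Y.erase y, 1 / 2 * |θ z|⁻¹ := Finset.sum_le_sum fun z hz => by
          simp only [hec]
          exact norm_sum_range_ec_le (hhalf z) (hne z hz) U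
      _ ≤ _ := by
          rw [← Finset.mul_sum, ← Finset.sum_filter_add_sum_filter_not _ (fun z => 0 < θ z)]
          linarith

theorem dual_large_sieve {ι : Type*} {Y : Finset ι} {β : ι → ℝ} {δ : ℝ}
    (h : SepModOne Y β δ) (hδ : 0 < δ) (hδ1 : δ ≤ 1) (U : ℕ) (b : ι → ℂ) :
    ∑ u ∈ range U, ‖∑ y ∈ Y, b y * ec (β y * u)‖ ^ 2
      ≤ (U + δ⁻¹ * (1 + Real.log δ⁻¹)) * ∑ y ∈ Y, ‖b y‖ ^ 2 := by
  set D := (U : ℝ) + δ⁻¹ * (1 + Real.log δ⁻¹)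
  set K : ι → ι → ℝ := fun y z => ‖∑ u ∈ range U, ec ((β y - β z) * u)‖ with hK
  have hsym : ∀ y z, K y z = K z y := fun y z => by
    simp only [hK]
    rw [← Complex.norm_conj, map_sum]
    congr 1
    refine Finset.sum_congr rfl fun u _ => ?_
    rw [conj_ec]; congr 1; ring
  have h1 : ((∑ u ∈ range U, ‖∑ y ∈ Y, b y * ec (β y * u)‖ ^ 2 : ℝ) : ℂ)
      = ∑ y ∈ Y, ∑ z ∈ Y, b y * (starRingEnd ℂ) (b z)
          * ∑ u ∈ range U, ec ((β y - β z) * u) := by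
    have : ∀ u : ℕ, ((‖∑ y ∈ Y, b y * ec (β y * u)‖ ^ 2 : ℝ) : ℂ)
        = ∑ y ∈ Y, ∑ z ∈ Y, b y * (starRingEnd ℂ) (b z) * ec ((β y - β z) * u) := by
      intro u
      push_cast
      rw [← Complex.mul_conj', map_sum, Finset.sum_mul_sum]
      refine Finset.sum_congr rfl fun y _ => Finset.sum_congr rfl fun z _ => ?_
      rw [map_mul, conj_ec, sub_mul, sub_eq_add_neg, ec_add]; ring
    rw [Complex.ofReal_sum, Finset.sum_congr rfl fun u _ => this u, Finset.sum_comm]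
    refine Finset.sum_congr rfl fun y _ => ?_
    rw [Finset.sum_comm]
    simp only [Finset.mul_sum]
  have h0 : (0 : ℝ) ≤ ∑ u ∈ range U, ‖∑ y ∈ Y, b y * ec (β y * u)‖ ^ 2 := by positivity
  have h2 := congrArg norm h1
  rw [Complex.norm_of_nonneg h0] at h2
  rw [h2]
  have hrow : ∀ y ∈ Y, ∑ z ∈ Y, ‖b y‖ ^ 2 * K z y ≤ D * ‖b y‖ ^ 2 := fun y hy => by
    rw [← Finset.mul_sum, mul_comm]
    exact mul_le_mul_of_nonneg_right (sum_norm_geom_le_of_sepModOne h hδ hδ1 U hy) (by positivity)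
  calc _ ≤ ∑ y ∈ Y, ∑ z ∈ Y, (‖b y‖ ^ 2 * K z y / 2 + ‖b z‖ ^ 2 * K y z / 2) := by
        refine (norm_sum_le _ _).trans (Finset.sum_le_sum fun y _ => (norm_sum_le _ _).trans
          (Finset.sum_le_sum fun z _ => ?_))
        rw [norm_mul, norm_mul, Complex.norm_conj, hsym z y]
        have hk : 0 ≤ K y z := norm_nonneg _
        change ‖b y‖ * ‖b z‖ * K y z ≤ _
        nlinarith [mul_nonneg hk (sq_nonneg (‖b y‖ - ‖b z‖))]
    _ = ∑ y ∈ Y, ∑ z ∈ Y, ‖b y‖ ^ 2 * K z y := by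
        simp only [Finset.sum_add_distrib]
        rw [Finset.sum_comm (f := fun y z => ‖b z‖ ^ 2 * K y z / 2), ← Finset.sum_add_distrib]
        refine Finset.sum_congr rfl fun y _ => ?_
        rw [← Finset.sum_add_distrib]
        exact Finset.sum_congr rfl fun z _ => by ring
    _ ≤ ∑ y ∈ Y, D * ‖b y‖ ^ 2 := Finset.sum_le_sum hrow
    _ = _ := by rw [Finset.mul_sum]

theorem large_sieve {ι : Type*} {Y : Finset ι} {β : ι → ℝ} {δ : ℝ}
    (h : SepModOne Y β δ) (hδ : 0 < δ) (hδ1 : δ ≤ 1) (U : ℕ) (c : ℕ → ℂ) :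
    ∑ y ∈ Y, ‖∑ u ∈ range U, c u * ec (β y * u)‖ ^ 2
      ≤ (U + δ⁻¹ * (1 + Real.log δ⁻¹)) * ∑ u ∈ range U, ‖c u‖ ^ 2 := by
  set D := (U : ℝ) + δ⁻¹ * (1 + Real.log δ⁻¹)
  set S : ι → ℂ := fun y => ∑ u ∈ range U, c u * ec (β y * u) with hS
  set Q := ∑ y ∈ Y, ‖S y‖ ^ 2 with hQ
  have hQ0 : 0 ≤ Q := by positivity
  have h1 : (Q : ℂ) = ∑ u ∈ range U, c u * ∑ y ∈ Y, (starRingEnd ℂ) (S y) * ec (β y * u) := by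
    rw [hQ]
    push_cast
    simp only [← Complex.conj_mul', Finset.mul_sum]
    rw [Finset.sum_comm]
    refine Finset.sum_congr rfl fun y _ => ?_
    conv_lhs => rw [hS]
    simp only [Finset.mul_sum]
    exact Finset.sum_congr rfl fun u _ => by ring
  have h2 : Q ^ 2 ≤ (∑ u ∈ range U, ‖c u‖ ^ 2) * (D * Q) := by
    have h3 : Q ≤ ∑ u ∈ range U, ‖c u‖ * ‖∑ y ∈ Y, (starRingEnd ℂ) (S y) * ec (β y * u)‖ := by
      have := congrArg norm h1
      rw [Complex.norm_of_nonneg hQ0] at this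
      rw [this]
      refine (norm_sum_le _ _).trans_eq ?_
      simp only [norm_mul]
    calc Q ^ 2 ≤ _ := pow_le_pow_left₀ hQ0 h3 2
      _ ≤ _ := Finset.sum_mul_sq_le_sq_mul_sq _ _ _
      _ ≤ _ := by
        refine mul_le_mul_of_nonneg_left ?_ (by positivity)
        have := dual_large_sieve h hδ hδ1 U fun y => (starRingEnd ℂ) (S y)
        simpa only [Complex.norm_conj] using this
  rcases hQ0.eq_or_lt with h0 | h0
  · rw [← h0]
    have : 0 ≤ Real.log δ⁻¹ := Real.log_nonneg (one_le_inv₀ hδ |>.2 hδ1)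
    positivity
  · refine le_of_mul_le_mul_right ?_ h0
    nlinarith

theorem sum_range_ec_div_mul {M : ℕ} {n : ℤ} (hn : |n| < M) :
    ∑ γ ∈ range M, ec ((n / M : ℝ) * γ) = if n = 0 then (M : ℂ) else 0 := by
  have hM : 0 < M := by have := abs_nonneg n; omega
  have hM0 : (M : ℝ) ≠ 0 := by positivity
  split_ifs with h
  · simp [h, ec_zero]
  · simp only [ec_mul_natCast]
    have hne : ec (n / M : ℝ) ≠ 1 := by
      intro h1
      rw [ec, Complex.exp_eq_one_iff] at h1
      obtain ⟨j, hj⟩ := h1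
      have h2 : ((n / M : ℝ) : ℂ) = j := by
        have : 2 * (Real.pi : ℂ) * Complex.I ≠ 0 := Complex.two_pi_I_ne_zero
        exact mul_left_cancel₀ this (by rw [hj]; ring)
      have h3 : (n : ℝ) / M = j := by exact_mod_cast h2
      rw [div_eq_iff hM0] at h3
      have h4 : n = j * M := by exact_mod_cast h3
      exact h (Int.eq_zero_of_abs_lt_dvd ⟨j, by rw [h4]; ring⟩ hn)
    rw [geom_sum_eq hne, ← ec_mul_natCast, div_mul_cancel₀ _ hM0, ec_intCast, sub_self, zero_div]

/-- The exponential sum obtained from a translated Weyl sum by completion. -/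
noncomputable def shiftSum (k M : ℕ) (α c : ℝ) (y : ℕ) : ℂ :=
  ∑ x ∈ Icc (1 : ℤ) M, ec (c * x + α * ((x : ℝ) - y) ^ k)

/-- The kernel arising in the completion of a sum of length `P` modulo `M`. -/
noncomputable def complKernel (P M γ : ℕ) : ℝ :=
  ‖∑ z ∈ range P, ec ((γ / M : ℝ) * z)‖

theorem norm_sum_Icc_ec_neg (P : ℕ) (c : ℝ) :
    ‖∑ z ∈ Icc 1 P, ec (-(c * z))‖ = ‖∑ z ∈ range P, ec (c * z)‖ := by
  rw [← Complex.norm_conj, map_sum]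
  simp only [conj_ec, neg_neg]
  have : ∑ z ∈ Icc 1 P, ec (c * z) = ec c * ∑ z ∈ range P, ec (c * z) := by
    rw [Finset.mul_sum, Finset.range_eq_Ico]
    have := Finset.sum_Ico_add' (fun z : ℕ => ec (c * z)) 0 P 1
    rw [← Finset.Ico_add_one_right_eq_Icc]
    rw [zero_add] at this
    rw [← this]
    refine Finset.sum_congr rfl fun z _ => ?_
    rw [← ec_add]; congr 1; push_cast; ring
  rw [this, norm_mul, norm_ec, one_mul]

theorem weyl_completion (k : ℕ) {P M y : ℕ} (hyP : y + P ≤ M) (α : ℝ) :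
    (M : ℂ) * ∑ z ∈ Icc 1 P, ec (α * (z : ℝ) ^ k)
      = ∑ γ ∈ range M, ec (-((γ / M : ℝ) * y)) * (∑ z ∈ Icc 1 P, ec (-((γ / M : ℝ) * z)))
          * shiftSum k M α (γ / M) y := by
  have h1 : ∀ z ∈ Icc 1 P, (M : ℂ) * ec (α * (z : ℝ) ^ k)
      = ∑ γ ∈ range M, ec (-((γ / M : ℝ) * y)) * ec (-((γ / M : ℝ) * z))
          * shiftSum k M α (γ / M) y := by
    intro z hz
    rw [Finset.mem_Icc] at hz
    have h2 : ∀ x ∈ Icc (1 : ℤ) M,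
        ∑ γ ∈ range M, ec (((x - (y + z : ℕ) : ℤ) / M : ℝ) * γ) * ec (α * ((x : ℝ) - y) ^ k)
        = if x = (y + z : ℕ) then (M : ℂ) * ec (α * (z : ℝ) ^ k) else 0 := by
      intro x hx
      rw [Finset.mem_Icc] at hx
      rw [← Finset.sum_mul, sum_range_ec_div_mul (by rw [abs_lt]; constructor <;> omega)]
      by_cases h : x = (y + z : ℕ)
      · rw [if_pos (by omega), if_pos h, h]
        congr 3; push_cast; ring
      · rw [if_neg (by omega), if_neg h, zero_mul]
    have h3 := Finset.sum_congr rfl h2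
    rw [Finset.sum_ite_eq', if_pos (by rw [Finset.mem_Icc]; omega), Finset.sum_comm] at h3
    rw [← h3]
    refine Finset.sum_congr rfl fun γ _ => ?_
    rw [shiftSum, Finset.mul_sum]
    refine Finset.sum_congr rfl fun x _ => ?_
    rw [← ec_add, ← ec_add, ← ec_add]
    congr 1; push_cast; ring
  rw [Finset.mul_sum, Finset.sum_congr rfl h1, Finset.sum_comm]
  refine Finset.sum_congr rfl fun γ _ => ?_
  rw [Finset.mul_sum, Finset.sum_mul]

theorem sum_complKernel_le {P M : ℕ} (hM : 1 ≤ M) :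
    ∑ γ ∈ range M, complKernel P M γ ≤ P + M * (1 + Real.log M) := by
  have hM0 : (0 : ℝ) < M := by exact_mod_cast hM
  have hsep : SepModOne (range M) (fun γ : ℕ => (γ / M : ℝ)) (M : ℝ)⁻¹ := by
    intro a ha b hb hab n
    rw [Finset.mem_range] at ha hb
    have e : (a / M : ℝ) - b / M - n = ((a - b - n * M : ℤ) : ℝ) * (M : ℝ)⁻¹ := by
      push_cast; field_simp
    rw [e, abs_mul, abs_of_pos (inv_pos.2 hM0)]
    refine le_mul_of_one_le_left (by positivity) ?_
    have hne : (a - b - n * M : ℤ) ≠ 0 := fun h0 => hab (by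
      have : ((a : ℤ) - b) = 0 := Int.eq_zero_of_abs_lt_dvd (m := M) ⟨n, by linarith⟩
        (by rw [abs_lt]; constructor <;> omega)
      omega)
    rw [← Int.cast_abs]
    exact_mod_cast Int.one_le_abs hne
  have := sum_norm_geom_le_of_sepModOne hsep (by positivity) (inv_le_one_of_one_le₀
    (by exact_mod_cast hM)) P (y := 0) (by rw [Finset.mem_range]; omega)
  simpa [complKernel] using this

theorem norm_weyl_pow_le (k : ℕ) {P M y n : ℕ} (hyP : y + P ≤ M) (α : ℝ) :
    (M : ℝ) ^ (n + 1) * ‖∑ z ∈ Icc 1 P, ec (α * (z : ℝ) ^ k)‖ ^ (n + 1)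
      ≤ (∑ γ ∈ range M, complKernel P M γ) ^ n
        * ∑ γ ∈ range M, complKernel P M γ * ‖shiftSum k M α (γ / M) y‖ ^ (n + 1) := by
  have h := congrArg norm (weyl_completion k hyP α)
  rw [norm_mul, Complex.norm_natCast] at h
  rw [← mul_pow, h]
  have hle : ‖∑ γ ∈ range M, ec (-((γ / M : ℝ) * y)) * (∑ z ∈ Icc 1 P, ec (-((γ / M : ℝ) * z)))
          * shiftSum k M α (γ / M) y‖
        ≤ ∑ γ ∈ range M, complKernel P M γ * ‖shiftSum k M α (γ / M) y‖ := by
    refine (norm_sum_le _ _).trans_eq (Finset.sum_congr rfl fun γ _ => ?_)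
    rw [norm_mul, norm_mul, norm_ec, one_mul, norm_sum_Icc_ec_neg, complKernel]
  refine (pow_le_pow_left₀ (norm_nonneg _) hle _).trans ?_
  have hk0 : ∀ γ, 0 ≤ complKernel P M γ := fun γ => norm_nonneg _
  have := sum_pow_le_of_pow_le (range M)
    (fun γ => complKernel P M γ * ‖shiftSum k M α (γ / M) y‖) (fun γ => complKernel P M γ)
    (fun γ => complKernel P M γ * ‖shiftSum k M α (γ / M) y‖ ^ (n + 1))
    (fun γ => mul_nonneg (hk0 γ) (norm_nonneg _)) hk0
    (fun γ => mul_nonneg (hk0 γ) (by positivity)) (n := n) (m := 1) (by omega)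
    (fun γ => by rw [mul_pow, pow_succ (complKernel P M γ)]; linarith)
  simpa using this

section tuples
variable (s l M : ℕ)

/-- Tuples of integers between `1` and `M`. -/
noncomputable def boxTuples : Finset (Fin s → ℤ) := Fintype.piFinset fun _ => Icc (1 : ℤ) M

variable {s}

/-- The vector of the first `l` power sums of a tuple. -/
def lowPowerSums (x : Fin s → ℤ) : Fin l → ℤ := fun j => ∑ i, x i ^ (j.1 + 1)

variable {l M}

theorem shift_phase_eq (hl : 1 ≤ l) (α c : ℝ) (y : ℕ) : ∃ φ : (Fin l → ℤ) → ℝ,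
    ∀ x : Fin s → ℤ, ∑ i, (c * x i + α * ((x i : ℝ) - y) ^ (l + 2))
      = φ (lowPowerSums l x) + (α * (∑ i, x i ^ (l + 2) : ℤ)
        + (-((l + 2 : ℕ) * α * y)) * (∑ i, x i ^ (l + 1) : ℤ)) := by
  refine ⟨fun w => c * w ⟨0, hl⟩ + α * (s * (-(y : ℝ)) ^ (l + 2)
    + ∑ j : Fin l, (w j : ℝ) * ((-(y : ℝ)) ^ (l + 2 - (j.1 + 1)) * (l + 2).choose (j.1 + 1))),
    fun x => ?_⟩
  have h1 : ∀ t : ℝ, (t - y) ^ (l + 2) = t ^ (l + 2) + (-((l + 2 : ℕ) * (y : ℝ))) * t ^ (l + 1)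
      + ((-(y : ℝ)) ^ (l + 2) + ∑ j : Fin l,
        t ^ (j.1 + 1) * ((-(y : ℝ)) ^ (l + 2 - (j.1 + 1)) * (l + 2).choose (j.1 + 1))) := by
    intro t
    rw [sub_eq_add_neg, add_pow, Finset.sum_range_succ, Finset.sum_range_succ,
      Finset.sum_range_succ', ← Fin.sum_univ_eq_sum_range
        (fun j => t ^ (j + 1) * (-(y : ℝ)) ^ (l + 2 - (j + 1)) * (l + 2).choose (j + 1))]
    have e1 : l + 2 - (l + 1) = 1 := by omega
    simp only [e1, Nat.sub_self, Nat.choose_self, Nat.choose_succ_self_right, pow_zero, pow_one,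
      Nat.choose_zero_right, Nat.sub_zero, mul_assoc]
    push_cast
    ring
  simp only [h1, lowPowerSums, Finset.sum_add_distrib, ← Finset.mul_sum, Finset.sum_const,
    Finset.card_univ, Fintype.card_fin, nsmul_eq_mul]
  push_cast
  simp only [pow_one, Finset.sum_mul]
  rw [Finset.sum_comm (s := (univ : Finset (Fin s)))]
  ring

theorem shiftSum_pow (s : ℕ) (α c : ℝ) (y k : ℕ) :
    shiftSum k M α c y ^ s
      = ∑ x ∈ boxTuples s M, ec (∑ i, (c * x i + α * ((x i : ℝ) - y) ^ k)) := by
  have := Finset.prod_univ_sum (fun _ : Fin s => Icc (1 : ℤ) M)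
      (fun _ x => ec (c * x + α * ((x : ℝ) - y) ^ k))
  rw [Finset.prod_const, Finset.card_univ, Fintype.card_fin] at this
  rw [shiftSum, this, boxTuples]
  exact Finset.sum_congr rfl fun x _ => (ec_sum _ _).symm

theorem norm_shiftSum_pow_le (s : ℕ) (hl : 1 ≤ l) (α c : ℝ) (y : ℕ) :
    ‖shiftSum (l + 2) M α c y‖ ^ (2 * s)
      ≤ #((boxTuples s M).image (lowPowerSums l)) * ∑ w ∈ (boxTuples s M).image (lowPowerSums l),
        ‖∑ x ∈ boxTuples s M with lowPowerSums l x = w, ec (α * (∑ i, x i ^ (l + 2) : ℤ))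
          * ec ((-((l + 2 : ℕ) * α * y)) * (∑ i, x i ^ (l + 1) : ℤ))‖ ^ 2 := by
  obtain ⟨φ, hφ⟩ := shift_phase_eq (s := s) hl α c y
  rw [mul_comm, pow_mul, ← norm_pow, shiftSum_pow]
  rw [← Finset.sum_fiberwise_of_maps_to (t := (boxTuples s M).image (lowPowerSums l))
    (g := lowPowerSums l) (fun x hx => Finset.mem_image_of_mem _ hx)]
  refine (pow_le_pow_left₀ (norm_nonneg _) (norm_sum_le _ _) 2).trans
    (sq_sum_le_card_mul_sum_sq.trans_eq ?_)
  congr 1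
  refine Finset.sum_congr rfl fun w _ => ?_
  congr 1
  rw [← one_mul ‖∑ x ∈ boxTuples s M with lowPowerSums l x = w, ec (α * (∑ i, x i ^ (l + 2) : ℤ))
    * ec ((-((l + 2 : ℕ) * α * y)) * (∑ i, x i ^ (l + 1) : ℤ))‖, ← norm_ec (φ w), ← norm_mul,
    Finset.mul_sum]
  refine congrArg norm (Finset.sum_congr rfl fun x hx => ?_)
  rw [hφ, (Finset.mem_filter.1 hx).2, ec_add, ec_add]

theorem sum_pow_mem_Icc {x : Fin s → ℤ} (hx : x ∈ boxTuples s M) (j : ℕ) :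
    ∑ i, x i ^ j ∈ Icc (0 : ℤ) ((s * M ^ j : ℕ) : ℤ) := by
  rw [boxTuples, Fintype.mem_piFinset] at hx
  simp only [Finset.mem_Icc] at hx
  rw [Finset.mem_Icc]
  refine ⟨Finset.sum_nonneg fun i _ => pow_nonneg (by linarith [(hx i).1]) _, ?_⟩
  refine (Finset.sum_le_card_nsmul _ _ ((M : ℤ) ^ j) fun i _ =>
    pow_le_pow_left₀ (by linarith [(hx i).1]) (hx i).2 _).trans_eq ?_
  simp

theorem card_image_lowPowerSums_le (hs : 1 ≤ s) (hM : 1 ≤ M) :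
    #((boxTuples s M).image (lowPowerSums l)) ≤ (2 * s) ^ l * M ^ tri l := by
  have h1 : (boxTuples s M).image (lowPowerSums l)
      ⊆ Fintype.piFinset fun j : Fin l => Icc (0 : ℤ) ((s * M ^ (j.1 + 1) : ℕ) : ℤ) := by
    intro w hw
    obtain ⟨x, hx, rfl⟩ := Finset.mem_image.1 hw
    rw [Fintype.mem_piFinset]
    exact fun j => sum_pow_mem_Icc hx _
  refine (Finset.card_le_card h1).trans ?_
  rw [Fintype.card_piFinset]
  have h2 : ∀ j : Fin l, #(Icc (0 : ℤ) ((s * M ^ (j.1 + 1) : ℕ) : ℤ))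
      ≤ 2 * s * M ^ (j.1 + 1) := fun j => by
    have : 1 ≤ s * M ^ (j.1 + 1) := Nat.mul_pos hs (Nat.pow_pos hM)
    rw [Int.card_Icc, mul_assoc]
    omega
  refine (Finset.prod_le_prod' fun j _ => h2 j).trans_eq ?_
  rw [Finset.prod_mul_distrib, Finset.prod_const, Finset.card_univ, Fintype.card_fin,
    Finset.prod_pow_eq_pow_sum, Fin.sum_univ_eq_sum_range (fun j => j + 1)]
  congr 2
  clear h1 h2
  induction l with
  | zero => rfl
  | succ l ih => rw [Finset.sum_range_succ, tri, ih]

/-- The tuples with prescribed low power sums and prescribed power sum of degree `l + 1`. -/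
noncomputable def tupleFibre (s l M : ℕ) (w : Fin l → ℤ) (t : ℕ) : Finset (Fin s → ℤ) :=
  {x ∈ boxTuples s M | lowPowerSums l x = w ∧ (∑ i, x i ^ (l + 1)).toNat = t}

/-- The majorant of the Weyl sum on the minor arcs furnished by the large sieve. -/
noncomputable def sieveMajorant (s l M : ℕ) (α : ℝ) : ℝ :=
  ∑ w ∈ (boxTuples s M).image (lowPowerSums l), ∑ t ∈ range (s * M ^ (l + 1) + 1),
    ‖∑ x ∈ tupleFibre s l M w t, ec (α * (∑ i, x i ^ (l + 2) : ℤ))‖ ^ 2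

theorem sum_norm_shiftSum_pow_le (s : ℕ) (hl : 1 ≤ l) (α c : ℝ) (Y : Finset ℕ) {δ : ℝ}
    (hY : SepModOne Y (fun y : ℕ => -((l + 2 : ℕ) * α * y)) δ) (hδ : 0 < δ) (hδ1 : δ ≤ 1) :
    ∑ y ∈ Y, ‖shiftSum (l + 2) M α c y‖ ^ (2 * s)
      ≤ #((boxTuples s M).image (lowPowerSums l))
        * ((((s * M ^ (l + 1) + 1 : ℕ) : ℝ) + δ⁻¹ * (1 + Real.log δ⁻¹)) * sieveMajorant s l M α) := by
  refine (Finset.sum_le_sum fun y _ => norm_shiftSum_pow_le s hl α c y).trans ?_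
  rw [← Finset.mul_sum]
  refine mul_le_mul_of_nonneg_left ?_ (by positivity)
  rw [Finset.sum_comm, sieveMajorant, Finset.mul_sum]
  refine Finset.sum_le_sum fun w _ => ?_
  have h := large_sieve hY hδ hδ1 (s * M ^ (l + 1) + 1)
    fun t => ∑ x ∈ tupleFibre s l M w t, ec (α * (∑ i, x i ^ (l + 2) : ℤ))
  refine le_of_eq_of_le (Finset.sum_congr rfl fun y _ => ?_) h
  congr 2
  rw [← Finset.sum_fiberwise_of_maps_to (t := range (s * M ^ (l + 1) + 1))
    (g := fun x : Fin s → ℤ => (∑ i, x i ^ (l + 1)).toNat) (fun x hx => ?_)]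
  · refine Finset.sum_congr rfl fun t _ => ?_
    rw [Finset.sum_mul, Finset.filter_filter]
    refine Finset.sum_congr rfl fun x hx => ?_
    have hx' := (Finset.mem_filter.1 hx)
    have h0 := (Finset.mem_Icc.1 (sum_pow_mem_Icc hx'.1 (l + 1))).1
    rw [← hx'.2.2]
    congr 3
    exact_mod_cast (Int.toNat_of_nonneg h0).symm
  · have h0 := Finset.mem_Icc.1 (sum_pow_mem_Icc (Finset.mem_filter.1 hx).1 (l + 1))
    rw [Finset.mem_range]
    omega

theorem continuous_sieveMajorant (s l M : ℕ) : Continuous (sieveMajorant s l M) := by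
  unfold sieveMajorant
  refine continuous_finsetSum _ fun w _ => continuous_finsetSum _ fun t _ => ?_
  refine Continuous.pow (Continuous.norm ?_) 2
  exact continuous_finsetSum _ fun x _ => continuous_ec.comp (by fun_prop)

theorem sieveMajorant_nonneg (s l M : ℕ) (α : ℝ) : 0 ≤ sieveMajorant s l M α := by
  unfold sieveMajorant; positivity

theorem intervalIntegral_ec_mul_int (n : ℤ) :
    ∫ α in (0 : ℝ)..1, ec (α * n) = if n = 0 then 1 else 0 := by
  split_ifs with h
  · simp [h, ec_zero]
  · have hn : (2 * Real.pi * Complex.I * n : ℂ) ≠ 0 := by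
      exact mul_ne_zero Complex.two_pi_I_ne_zero (by exact_mod_cast h)
    have e : ∀ α : ℝ, ec (α * n) = Complex.exp ((2 * Real.pi * Complex.I * n) * α) := fun α => by
      rw [ec]; congr 1; push_cast; ring
    simp only [e]
    rw [integral_exp_mul_complex hn]
    have := ec_intCast n
    rw [ec] at this
    push_cast at this ⊢
    rw [mul_one, this]
    simp

theorem intervalIntegral_norm_sq_sum_ec {ι : Type*} (A : Finset ι) (v : ι → ℤ) :
    ∫ α in (0 : ℝ)..1, ‖∑ x ∈ A, ec (α * v x)‖ ^ 2 = #{z ∈ A ×ˢ A | v z.1 = v z.2} := by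
  have h1 : ∀ α : ℝ, ((‖∑ x ∈ A, ec (α * v x)‖ ^ 2 : ℝ) : ℂ)
      = ∑ x ∈ A, ∑ y ∈ A, ec (α * (v x - v y : ℤ)) := by
    intro α
    push_cast
    rw [← Complex.mul_conj', map_sum, Finset.sum_mul_sum]
    refine Finset.sum_congr rfl fun x _ => Finset.sum_congr rfl fun y _ => ?_
    rw [conj_ec, ← ec_add]; congr 1; ring
  have hec : ∀ n : ℤ, Continuous fun α : ℝ => ec (α * n) :=
    fun n => continuous_ec.comp (by fun_prop)
  rw [← Complex.ofReal_inj, ← intervalIntegral.integral_ofReal]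
  simp only [h1]
  rw [intervalIntegral.integral_finsetSum fun x _ =>
    (continuous_finsetSum _ fun y _ => hec _).intervalIntegrable _ _]
  simp only [intervalIntegral.integral_finsetSum fun y _ => (hec _).intervalIntegrable _ _]
  simp only [intervalIntegral_ec_mul_int]
  rw [Finset.card_filter, Finset.sum_product]
  push_cast
  refine Finset.sum_congr rfl fun x _ => Finset.sum_congr rfl fun y _ => ?_
  simp only [sub_eq_zero]
  split_ifs <;> simp

theorem intervalIntegral_sieveMajorant_le (s l M : ℕ) :
    ∫ α in (0 : ℝ)..1, sieveMajorant s l M α ≤ vinogradovCount s (l + 2) M := by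
  have hc : ∀ w t, Continuous fun α : ℝ =>
      ‖∑ x ∈ tupleFibre s l M w t, ec (α * (∑ i, x i ^ (l + 2) : ℤ))‖ ^ 2 := fun w t => by
    refine Continuous.pow (Continuous.norm ?_) 2
    exact continuous_finsetSum _ fun x _ => continuous_ec.comp (by fun_prop)
  unfold sieveMajorant
  rw [intervalIntegral.integral_finsetSum fun w _ =>
    (continuous_finsetSum _ fun t _ => hc w t).intervalIntegrable _ _]
  simp only [intervalIntegral.integral_finsetSum fun t _ => (hc _ t).intervalIntegrable _ _]
  simp only [intervalIntegral_norm_sq_sum_ec _ fun x : Fin s → ℤ => ∑ i, x i ^ (l + 2)]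
  rw [← Finset.sum_product', ← Nat.cast_sum, Nat.cast_le]
  rw [← Finset.card_sigma]
  refine Finset.card_le_card_of_injOn (fun z => z.2) (fun z hz => ?_) ?_
  · simp only [Finset.coe_sigma, Set.mem_sigma_iff, Finset.mem_coe, Finset.mem_filter,
      Finset.mem_product, tupleFibre] at hz
    obtain ⟨_, ⟨⟨hx, hx1, hx2⟩, hy, hy1, hy2⟩, hv⟩ := hz
    simp only [Finset.coe_filter, Set.mem_ofPred_eq, Finset.mem_product]
    refine ⟨⟨hx, hy⟩, fun m => ?_⟩
    rcases lt_trichotomy m.1 l with h | h | h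
    · exact congrFun (hx1.trans hy1.symm) ⟨m.1, h⟩
    · have h1 := (Finset.mem_Icc.1 (sum_pow_mem_Icc hx (l + 1))).1
      have h2 := (Finset.mem_Icc.1 (sum_pow_mem_Icc hy (l + 1))).1
      rw [h]
      omega
    · have : m.1 = l + 1 := by omega
      rw [this]
      exact hv
  · rintro ⟨⟨w, t⟩, x, y⟩ hz ⟨⟨w', t'⟩, x', y'⟩ hz' h
    simp only [Prod.mk.injEq] at h
    obtain ⟨rfl, rfl⟩ := h
    simp only [Finset.coe_sigma, Set.mem_sigma_iff, Finset.mem_coe, Finset.mem_filter,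
      Finset.mem_product, tupleFibre] at hz hz'
    obtain ⟨_, ⟨⟨_, rfl, rfl⟩, _⟩, _⟩ := hz
    obtain ⟨_, ⟨⟨_, rfl, rfl⟩, _⟩, _⟩ := hz'
    rfl

end tuples

theorem measurableSet_minorArcs (k : ℕ) (X : ℝ) : MeasurableSet (minorArcs k X) := by
  refine measurableSet_Ico.inter (measurableSet_setOfPred.2 ?_)
  refine Measurable.forall fun a => Measurable.forall fun q => measurable_const.imp
    (measurable_const.imp (Measurable.imp ?_ measurable_const))
  exact measurableSet_setOfPred.1 (measurableSet_le (by fun_prop) measurable_const)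

theorem lt_abs_mul_sub_of_mem_minorArcs {k : ℕ} {X α : ℝ} (hα : α ∈ minorArcs k X) {q : ℕ}
    (hq : 0 < q) (hqX : (q : ℝ) ≤ (2 * (k : ℝ))⁻¹ * X) (n : ℤ) :
    (2 * (k : ℝ))⁻¹ * X ^ (1 - (k : ℝ)) < |q * α - n| := by
  by_contra! hle
  set d := Int.gcd n q with hd
  have hd0 : 0 < d := Int.gcd_pos_of_ne_zero_right _ (by exact_mod_cast hq.ne')
  obtain ⟨q', hq'⟩ : d ∣ q := by exact_mod_cast Int.gcd_dvd_right n (q : ℤ)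
  obtain ⟨n', hn'⟩ : (d : ℤ) ∣ n := Int.gcd_dvd_left n (q : ℤ)
  have hq'0 : 0 < q' := Nat.pos_of_ne_zero (by rintro rfl; omega)
  have hcop : Int.gcd n' q' = 1 := by
    have h1 : Int.gcd n q = d * Int.gcd n' q' := by
      conv_lhs => rw [hn', hq']
      push_cast
      rw [Int.gcd_mul_left, Int.natAbs_natCast]
    exact Nat.eq_of_mul_eq_mul_left hd0 (by rw [← h1, mul_one])
  have hd1 : (1 : ℝ) ≤ d := by exact_mod_cast hd0
  have h2 : |(q' : ℝ) * α - n'| ≤ |q * α - n| := by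
    have : (q : ℝ) * α - n = d * (q' * α - n') := by
      rw [hn', hq']; push_cast; ring
    rw [this, abs_mul, abs_of_nonneg (zero_le_one.trans hd1)]
    exact le_mul_of_one_le_left (abs_nonneg _) hd1
  have h3 := hα.2 n' q' hq'0 hcop (h2.trans hle)
  have h4 : (q' : ℝ) ≤ q := by
    rw [hq']; push_cast
    exact le_mul_of_one_le_left (by positivity) hd1
  linarith

theorem sepModOne_of_mem_minorArcs {k : ℕ} (hk : 1 ≤ k) {X α : ℝ} (hα : α ∈ minorArcs k X)
    {Y : ℕ} (hY : (k : ℝ) * Y ≤ (2 * (k : ℝ))⁻¹ * X) :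
    SepModOne (Icc 1 Y) (fun y : ℕ => -((k : ℕ) * α * y))
      ((2 * (k : ℝ))⁻¹ * X ^ (1 - (k : ℝ))) := by
  have key : ∀ y ∈ Icc 1 Y, ∀ z ∈ Icc 1 Y, y < z → ∀ n : ℤ,
      (2 * (k : ℝ))⁻¹ * X ^ (1 - (k : ℝ)) ≤ |-((k : ℕ) * α * y) - -((k : ℕ) * α * z) - n| := by
    intro y hy z hz hyz n
    rw [Finset.mem_Icc] at hy hz
    have hq : 0 < k * (z - y) := Nat.mul_pos hk (by omega)
    have h1 : ((k * (z - y) : ℕ) : ℝ) ≤ (2 * (k : ℝ))⁻¹ * X := by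
      refine le_trans ?_ hY
      exact_mod_cast Nat.mul_le_mul_left k (by omega)
    refine (lt_abs_mul_sub_of_mem_minorArcs hα hq h1 n).le.trans_eq (congrArg abs ?_)
    rw [Nat.cast_mul, Nat.cast_sub hyz.le]; ring
  intro y hy z hz hne n
  rcases lt_or_gt_of_ne hne with h | h
  · exact key y hy z hz h n
  · rw [← abs_neg]
    refine (key z hz y hy h (-n)).trans_eq (congrArg abs ?_)
    push_cast; ring

theorem card_mul_norm_gk_pow_le {l s : ℕ} (hl : 1 ≤ l) (hs : 1 ≤ s) {X α δ : ℝ} (hX : 1 ≤ X)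
    (hδ : δ = (2 * ((l + 2 : ℕ) : ℝ))⁻¹ * X ^ (1 - ((l + 2 : ℕ) : ℝ)))
    (hα : α ∈ minorArcs (l + 2) X) {Y : ℕ} (hYX : Y ≤ ⌊X⌋₊)
    (hY : ((l + 2 : ℕ) : ℝ) * Y ≤ (2 * ((l + 2 : ℕ) : ℝ))⁻¹ * X) :
    Y * ‖gk (l + 2) X α‖ ^ (2 * s) ≤ (2 + Real.log (2 * ⌊X⌋₊ : ℕ)) ^ (2 * s)
      * (((2 * s) ^ l * (2 * ⌊X⌋₊) ^ tri l : ℕ)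
        * ((((s * (2 * ⌊X⌋₊) ^ (l + 1) + 1 : ℕ) : ℝ) + δ⁻¹ * (1 + Real.log δ⁻¹))
          * sieveMajorant s l (2 * ⌊X⌋₊) α)) := by
  set P := ⌊X⌋₊
  set M := 2 * P with hMdef
  have hP : 1 ≤ P := (Nat.one_le_floor_iff _).2 hX
  have hM : 1 ≤ M := by omega
  have hM1 : (1 : ℝ) ≤ M := by exact_mod_cast hM
  have hδ0 : 0 < δ := by rw [hδ]; positivity
  have hδ1 : δ ≤ 1 := by
    rw [hδ]
    refine mul_le_one₀ (inv_le_one_of_one_le₀ ?_) (by positivity)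
      (Real.rpow_le_one_of_one_le_of_nonpos hX ?_)
    · push_cast; linarith
    · push_cast; linarith
  have hlogδ : 0 ≤ Real.log δ⁻¹ := Real.log_nonneg (one_le_inv₀ hδ0 |>.2 hδ1)
  have hlogM : 0 ≤ Real.log M := Real.log_nonneg hM1
  have hsep := sepModOne_of_mem_minorArcs (by omega) hα hY
  rw [← hδ] at hsep
  set E := ((s * M ^ (l + 1) + 1 : ℕ) : ℝ) + δ⁻¹ * (1 + Real.log δ⁻¹) with hE
  set F := sieveMajorant s l M α
  set W : ℕ := #((boxTuples s M).image (lowPowerSums l)) with hW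
  have hF : 0 ≤ F := sieveMajorant_nonneg _ _ _ _
  have hE0 : 0 ≤ E := by positivity
  set κ := ∑ γ ∈ range M, complKernel P M γ with hκ
  have hk0 : ∀ γ, 0 ≤ complKernel P M γ := fun γ => norm_nonneg _
  have hκ0 : 0 ≤ κ := Finset.sum_nonneg fun γ _ => hk0 γ
  have hκle : κ ≤ M * (2 + Real.log M) := by
    refine (sum_complKernel_le hM).trans ?_
    have : (P : ℝ) ≤ M := by exact_mod_cast (by omega : P ≤ M)
    linarith
  obtain ⟨n, hn⟩ : ∃ n, 2 * s = n + 1 := ⟨2 * s - 1, by omega⟩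
  have h1 : ∀ y ∈ Icc 1 Y, (M : ℝ) ^ (2 * s) * ‖gk (l + 2) X α‖ ^ (2 * s)
      ≤ κ ^ n * ∑ γ ∈ range M, complKernel P M γ * ‖shiftSum (l + 2) M α (γ / M) y‖ ^ (2 * s) := by
    intro y hy
    rw [Finset.mem_Icc] at hy
    rw [hn]
    exact norm_weyl_pow_le (l + 2) (by omega) α
  have h2 := Finset.sum_le_sum h1
  rw [Finset.sum_const, Nat.card_Icc, nsmul_eq_mul, Nat.add_sub_cancel, ← Finset.mul_sum,
    Finset.sum_comm] at h2
  have h3 : ∑ γ ∈ range M, ∑ y ∈ Icc 1 Y,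
      complKernel P M γ * ‖shiftSum (l + 2) M α (γ / M) y‖ ^ (2 * s) ≤ κ * (W * (E * F)) := by
    rw [hκ, Finset.sum_mul]
    refine Finset.sum_le_sum fun γ _ => ?_
    rw [← Finset.mul_sum]
    exact mul_le_mul_of_nonneg_left (sum_norm_shiftSum_pow_le s hl α _ _ hsep hδ0 hδ1) (hk0 γ)
  have hMp : (0 : ℝ) < (M : ℝ) ^ (2 * s) := by positivity
  refine le_of_mul_le_mul_left ?_ hMp
  have hWle : (W : ℝ) ≤ (((2 * s) ^ l * M ^ tri l : ℕ) : ℝ) := by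
    exact_mod_cast card_image_lowPowerSums_le hs hM
  calc _ = Y * ((M : ℝ) ^ (2 * s) * ‖gk (l + 2) X α‖ ^ (2 * s)) := by ring
    _ ≤ _ := h2
    _ ≤ κ ^ n * (κ * (W * (E * F))) := mul_le_mul_of_nonneg_left h3 (by positivity)
    _ = κ ^ (2 * s) * (W * (E * F)) := by rw [hn]; ring
    _ ≤ (M * (2 + Real.log M)) ^ (2 * s) * ((((2 * s) ^ l * M ^ tri l : ℕ) : ℝ) * (E * F)) := by
        gcongr
    _ = _ := by rw [mul_pow]; ring

theorem continuous_gk (k : ℕ) (X : ℝ) : Continuous (gk k X) := by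
  unfold gk
  exact continuous_finsetSum _ fun x _ => continuous_ec.comp (by fun_prop)

theorem integrableOn_minorArcs {f : ℝ → ℝ} (hf : Continuous f) (k : ℕ) (X : ℝ) :
    MeasureTheory.IntegrableOn f (minorArcs k X) :=
  (hf.integrableOn_Icc (a := 0) (b := 1)).mono_set fun _ hα => Set.Ico_subset_Icc_self hα.1

theorem integral_minorArcs_le_intervalIntegral {f : ℝ → ℝ} (hf : Continuous f)
    (h0 : ∀ α, 0 ≤ f α) (k : ℕ) (X : ℝ) :
    ∫ α in minorArcs k X, f α ≤ ∫ α in (0 : ℝ)..1, f α := by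
  rw [intervalIntegral.integral_of_le zero_le_one, ← MeasureTheory.integral_Icc_eq_integral_Ioc]
  exact MeasureTheory.setIntegral_mono_set hf.integrableOn_Icc
    (Filter.Eventually.of_forall h0) (Filter.Eventually.of_forall fun _ hα =>
      Set.Ico_subset_Icc_self hα.1)

theorem card_mul_integral_minorArcs_le {l s : ℕ} (hl : 1 ≤ l) (hs : 1 ≤ s) {X δ : ℝ} (hX : 1 ≤ X)
    (hδ : δ = (2 * ((l + 2 : ℕ) : ℝ))⁻¹ * X ^ (1 - ((l + 2 : ℕ) : ℝ))) (hδ1 : 1 ≤ δ⁻¹)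
    {Y : ℕ} (hYX : Y ≤ ⌊X⌋₊)
    (hY : ((l + 2 : ℕ) : ℝ) * Y ≤ (2 * ((l + 2 : ℕ) : ℝ))⁻¹ * X) :
    Y * ∫ α in minorArcs (l + 2) X, ‖gk (l + 2) X α‖ ^ (2 * s)
      ≤ (2 + Real.log (2 * ⌊X⌋₊ : ℕ)) ^ (2 * s) * (((2 * s) ^ l * (2 * ⌊X⌋₊) ^ tri l : ℕ)
        * ((((s * (2 * ⌊X⌋₊) ^ (l + 1) + 1 : ℕ) : ℝ) + δ⁻¹ * (1 + Real.log δ⁻¹))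
          * vinogradovCount s (l + 2) (2 * ⌊X⌋₊))) := by
  have h1 := MeasureTheory.setIntegral_mono_on
    (integrableOn_minorArcs (((continuous_gk (l + 2) X).norm.pow (2 * s)).const_mul (Y : ℝ)) _ X)
    (integrableOn_minorArcs ((((continuous_sieveMajorant s l (2 * ⌊X⌋₊)).const_mul _).const_mul
      _).const_mul _) _ X) (measurableSet_minorArcs (l + 2) X)
    (fun α hα => card_mul_norm_gk_pow_le hl hs hX hδ hα hYX hY)
  simp only [MeasureTheory.integral_const_mul] at h1
  refine h1.trans ?_
  have hlog : 0 ≤ Real.log δ⁻¹ := Real.log_nonneg hδ1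
  have h2 := (integral_minorArcs_le_intervalIntegral (continuous_sieveMajorant s l (2 * ⌊X⌋₊))
    (sieveMajorant_nonneg _ _ _) (l + 2) X).trans (intervalIntegral_sieveMajorant_le s l _)
  gcongr

theorem one_add_log_le_rpow {z e : ℝ} (hz : 1 ≤ z) (he : 0 < e) :
    1 + Real.log z ≤ (1 + e⁻¹) * z ^ e := by
  have h1 := Real.log_le_rpow_div (zero_le_one.trans hz) he
  have h2 := Real.one_le_rpow hz he.le
  rw [div_eq_inv_mul] at h1
  linarith

/-- The mean value of the Weyl sum of critical order over the minor arcs. -/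
theorem integral_minorArcs_critical_le {l : ℕ} (hl : 1 ≤ l) {ε : ℝ} (hε : 0 < ε) :
    ∃ C : ℝ, 0 < C ∧ ∀ X : ℝ, 4 * ((l + 2 : ℕ) : ℝ) ^ 2 ≤ X →
      ∫ α in minorArcs (l + 2) X, ‖gk (l + 2) X α‖ ^ (2 * tri (l + 2))
        ≤ C * X ^ (((l + 2 : ℕ) : ℝ) ^ 2 - 1 + ε) := by
  set k := l + 2 with hk
  set s := tri k with hs
  have hs1 : 1 ≤ s := (by omega : 1 ≤ k).trans (le_tri k)
  set e := ε / (2 * s + l + 2) with he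
  have he0 : 0 < e := by positivity
  obtain ⟨C₀, hC₀, hJ⟩ := vinogradovCount_le k (by omega) e he0
  have hkR : (0 : ℝ) < k := by positivity
  set c₁ : ℝ := 3 * (1 + e⁻¹)
  set c₂ : ℝ := (2 * s) ^ l * 2 ^ tri l
  set c₃ : ℝ := (s * 2 ^ (l + 1) + 1) + (1 + e⁻¹) * (2 * k : ℝ) ^ (1 + e)
  set c₄ : ℝ := C₀ * 2 ^ (tri k + e)
  refine ⟨4 * (k : ℝ) ^ 2 * (c₁ ^ (2 * s) * (c₂ * (c₃ * c₄))), by positivity, fun X hX => ?_⟩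
  have hk1 : (1 : ℝ) ≤ k := by exact_mod_cast (by omega : 1 ≤ k)
  have hX1 : 1 ≤ X := by nlinarith
  have hX0 : 0 < X := by linarith
  set δ := (2 * (k : ℝ))⁻¹ * X ^ (1 - (k : ℝ)) with hδ
  have hδinv : δ⁻¹ = 2 * k * X ^ ((l : ℝ) + 1) := by
    rw [hδ, mul_inv, inv_inv, ← Real.rpow_neg hX0.le]
    congr 2; rw [hk]; push_cast; ring
  have hδ1 : 1 ≤ δ⁻¹ := by
    rw [hδinv]
    exact one_le_mul_of_one_le_of_one_le (by linarith) (Real.one_le_rpow hX1 (by positivity))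
  set Y := ⌊X / (2 * (k : ℝ) ^ 2)⌋₊ with hY
  have hYle : (Y : ℝ) ≤ X / (2 * (k : ℝ) ^ 2) := Nat.floor_le (by positivity)
  have hYge : X / (4 * (k : ℝ) ^ 2) ≤ Y := by
    have h1 := Nat.lt_floor_add_one (X / (2 * (k : ℝ) ^ 2))
    have h2 : 1 ≤ X / (4 * (k : ℝ) ^ 2) := by rw [one_le_div (by positivity)]; exact hX
    have h3 : X / (2 * (k : ℝ) ^ 2) = X / (4 * (k : ℝ) ^ 2) + X / (4 * (k : ℝ) ^ 2) := by
      field_simp; norm_num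
    rw [← hY] at h1
    linarith
  have hYX : Y ≤ ⌊X⌋₊ := Nat.floor_le_floor (div_le_self hX0.le (by nlinarith))
  have hkY : (k : ℝ) * Y ≤ (2 * (k : ℝ))⁻¹ * X := by
    calc (k : ℝ) * Y ≤ k * (X / (2 * (k : ℝ) ^ 2)) := by gcongr
      _ = _ := by field_simp
  have main := card_mul_integral_minorArcs_le hl hs1 hX1 hδ hδ1 hYX hkY
  set I := ∫ α in minorArcs (l + 2) X, ‖gk (l + 2) X α‖ ^ (2 * s)
  set M := 2 * ⌊X⌋₊ with hM
  have hM1 : 1 ≤ M := by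
    have := (Nat.one_le_floor_iff _).2 hX1
    omega
  have hMR : (1 : ℝ) ≤ M := by exact_mod_cast hM1
  have hMX : (M : ℝ) ≤ 2 * X := by
    rw [hM]; push_cast
    linarith [Nat.floor_le hX0.le]
  have hlog : 2 + Real.log M ≤ c₁ * X ^ e := by
    have h1 : Real.log M ≤ Real.log 2 + Real.log X := by
      rw [← Real.log_mul two_ne_zero hX0.ne']
      exact Real.log_le_log (by linarith) hMX
    have h2 := one_add_log_le_rpow hX1 he0
    have h3 := Real.log_two_lt_d9
    have h4 := Real.log_nonneg hX1
    simp only [c₁]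
    linarith
  have hlog0 : 0 ≤ 2 + Real.log M := add_nonneg zero_le_two (Real.log_natCast_nonneg _)
  have hW : (((2 * s) ^ l * M ^ tri l : ℕ) : ℝ) ≤ c₂ * X ^ (tri l : ℝ) := by
    rw [Real.rpow_natCast]
    push_cast
    rw [mul_assoc, ← mul_pow]
    gcongr
  have hE1 : ((s * M ^ (l + 1) + 1 : ℕ) : ℝ) ≤ (s * 2 ^ (l + 1) + 1) * X ^ ((l + 1) * (1 + e)) := by
    have h1 : X ^ (l + 1) ≤ X ^ ((l + 1) * (1 + e)) := by
      rw [← Real.rpow_natCast]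
      refine Real.rpow_le_rpow_of_exponent_le hX1 ?_
      push_cast
      nlinarith [mul_nonneg (Nat.cast_nonneg (α := ℝ) l) he0.le]
    have h2 : (1 : ℝ) ≤ X ^ ((l + 1) * (1 + e)) := Real.one_le_rpow hX1 (by positivity)
    have h3 : (M : ℝ) ^ (l + 1) ≤ 2 ^ (l + 1) * X ^ ((l + 1) * (1 + e)) := by
      calc (M : ℝ) ^ (l + 1) ≤ (2 * X) ^ (l + 1) := by gcongr
        _ = 2 ^ (l + 1) * X ^ (l + 1) := mul_pow _ _ _
        _ ≤ _ := by gcongr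
    push_cast
    have h4 := mul_le_mul_of_nonneg_left h3 (Nat.cast_nonneg (α := ℝ) s)
    linarith
  have hE2 : δ⁻¹ * (1 + Real.log δ⁻¹)
      ≤ ((1 + e⁻¹) * (2 * k : ℝ) ^ (1 + e)) * X ^ ((l + 1) * (1 + e)) := by
    have hδ0 : 0 < δ⁻¹ := by linarith
    calc _ ≤ δ⁻¹ * ((1 + e⁻¹) * δ⁻¹ ^ e) :=
          mul_le_mul_of_nonneg_left (one_add_log_le_rpow hδ1 he0) hδ0.le
      _ = (1 + e⁻¹) * δ⁻¹ ^ (1 + e) := by rw [Real.rpow_add hδ0, Real.rpow_one]; ring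
      _ = _ := by
        rw [hδinv, Real.mul_rpow (by positivity) (by positivity), ← Real.rpow_mul hX0.le]; ring
  have hE : ((s * M ^ (l + 1) + 1 : ℕ) : ℝ) + δ⁻¹ * (1 + Real.log δ⁻¹)
      ≤ c₃ * X ^ ((l + 1) * (1 + e)) := by
    simp only [c₃]; linarith
  have hV : (vinogradovCount s k M : ℝ) ≤ c₄ * X ^ (tri k + e) := by
    refine (hJ M hM1).trans ?_
    simp only [c₄]
    rw [mul_assoc, ← Real.mul_rpow (by norm_num) hX0.le]
    gcongr
  have hI0 : 0 ≤ I := MeasureTheory.integral_nonneg fun _ => by positivity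
  have hE0 : 0 ≤ 1 + Real.log δ⁻¹ := add_nonneg zero_le_one (Real.log_nonneg hδ1)
  have hfin : X / (4 * (k : ℝ) ^ 2) * I
      ≤ (c₁ * X ^ e) ^ (2 * s) * ((c₂ * X ^ (tri l : ℝ)) * ((c₃ * X ^ ((l + 1) * (1 + e)))
        * (c₄ * X ^ (tri k + e)))) := by
    calc _ ≤ Y * I := by gcongr
      _ ≤ _ := main
      _ ≤ _ := by
        have : (0 : ℝ) ≤ δ⁻¹ := by linarith
        gcongr
  have htri : (tri l : ℝ) + (l + 1) + tri k = (k : ℝ) ^ 2 := by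
    have h1 : (2 * tri l : ℝ) = l * (l + 1) := by exact_mod_cast two_mul_tri l
    have h2 : (2 * tri k : ℝ) = k * (k + 1) := by exact_mod_cast two_mul_tri k
    have h3 : (k : ℝ) = l + 2 := by rw [hk]; push_cast; ring
    rw [h3] at h2 ⊢
    linarith
  have hexp : (c₁ * X ^ e) ^ (2 * s) * ((c₂ * X ^ (tri l : ℝ)) * ((c₃ * X ^ ((l + 1) * (1 + e)))
        * (c₄ * X ^ (tri k + e))))
      = (c₁ ^ (2 * s) * (c₂ * (c₃ * c₄))) * (X * X ^ ((k : ℝ) ^ 2 - 1 + ε)) := by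
    have h1 : X * X ^ ((k : ℝ) ^ 2 - 1 + ε) = (X ^ e) ^ (2 * s) * X ^ (tri l : ℝ)
        * X ^ ((l + 1) * (1 + e)) * X ^ (tri k + e) := by
      rw [← Real.rpow_natCast (X ^ e), ← Real.rpow_mul hX0.le, ← Real.rpow_add hX0, ← Real.rpow_add hX0,
        ← Real.rpow_add hX0, ← Real.rpow_one_add' hX0.le (by nlinarith)]
      congr 1
      have : e * (2 * s + l + 2) = ε := by rw [he]; field_simp
      push_cast
      rw [← htri, ← this]
      ring
    rw [h1, mul_pow]; ring
  rw [hexp, div_mul_eq_mul_div, div_le_iff₀ (by positivity)] at hfin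
  refine le_of_mul_le_mul_left (hfin.trans_eq ?_) hX0
  ring

theorem mem_boxTuples_floor {v : ℕ} {X : ℝ} (hX : 0 ≤ X) {x : Fin v → ℤ} :
    x ∈ boxTuples v ⌊X⌋₊ ↔ ∀ i, 1 ≤ x i ∧ (x i : ℝ) ≤ X := by
  rw [boxTuples, Fintype.mem_piFinset]
  refine forall_congr' fun i => ?_
  rw [Finset.mem_Icc, Int.natCast_floor_eq_floor hX, Int.le_floor]

theorem card_boxTuples (v M : ℕ) : #(boxTuples v M) = M ^ v := by
  simp [boxTuples]

theorem Jcount_le (v w : ℕ) {X : ℝ} (hX : 0 ≤ X) : Jcount v w X ≤ ⌊X⌋₊ ^ (2 * v) := by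
  have h : Set.ncard ((boxTuples v ⌊X⌋₊ ×ˢ boxTuples v ⌊X⌋₊ :
      Finset ((Fin v → ℤ) × (Fin v → ℤ))) : Set ((Fin v → ℤ) × (Fin v → ℤ)))
      = ⌊X⌋₊ ^ (2 * v) := by
    rw [Set.ncard_coe_finset, Finset.card_product, card_boxTuples]; ring
  rw [← h, Jcount]
  refine Set.ncard_le_ncard (fun z hz => ?_) (Finset.finite_toSet _)
  rw [Finset.mem_coe, Finset.mem_product, mem_boxTuples_floor hX, mem_boxTuples_floor hX]
  exact ⟨hz.1, hz.2.1⟩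

theorem pow_le_Jcount (v w : ℕ) {X : ℝ} (hX : 0 ≤ X) : ⌊X⌋₊ ^ v ≤ Jcount v w X := by
  rw [← card_boxTuples, ← Set.ncard_coe_finset, Jcount]
  refine Set.ncard_le_ncard_of_injOn (fun x => (x, x)) (fun x hx => ?_) (fun x _ y _ h => ?_)
    ((Finset.finite_toSet (boxTuples v ⌊X⌋₊ ×ˢ boxTuples v ⌊X⌋₊)).subset fun z hz => ?_)
  · rw [Finset.mem_coe, mem_boxTuples_floor hX] at hx
    exact ⟨hx, hx, fun j _ => by simp⟩
  · exact (Prod.mk.inj h).1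
  · rw [Finset.mem_coe, Finset.mem_product, mem_boxTuples_floor hX, mem_boxTuples_floor hX]
    exact ⟨hz.1, hz.2.1⟩

theorem etaExp_nonneg (v w : ℕ) : 0 ≤ etaExp v w := Real.sInf_nonneg fun _ h => h.1.le

theorem le_etaExp (v w : ℕ) : (w : ℝ) * (w + 1) / 2 - v ≤ etaExp v w := by
  refine le_csInf ⟨(w : ℝ) * (w + 1) / 2 + 1, by positivity, fun ε hε =>
    ⟨1, 1, one_pos, fun X hX => ?_⟩⟩ fun η hη => ?_
  · have hX0 : 0 ≤ X := by linarith
    have h1 : (Jcount v w X : ℝ) ≤ X ^ (2 * v) := by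
      calc (Jcount v w X : ℝ) ≤ ((⌊X⌋₊ ^ (2 * v) : ℕ) : ℝ) := by exact_mod_cast Jcount_le v w hX0
        _ ≤ X ^ (2 * v) := by
          push_cast
          exact pow_le_pow_left₀ (Nat.cast_nonneg _) (Nat.floor_le hX0) _
    rw [one_mul]
    refine h1.trans ?_
    rw [← Real.rpow_natCast]
    refine Real.rpow_le_rpow_of_exponent_le hX ?_
    push_cast
    linarith
  · by_contra! hlt
    set d := (w : ℝ) * (w + 1) / 2 - v - η with hd
    have hd0 : 0 < d := by linarith
    obtain ⟨C, X₀, hC, h⟩ := hη.2 (d / 2) (by positivity)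
    have htend := tendsto_rpow_atTop (y := d / 2) (by positivity)
    obtain ⟨X, hX⟩ := ((htend.eventually_gt_atTop (C * 2 ^ v)).and
      ((Filter.eventually_ge_atTop X₀).and (Filter.eventually_ge_atTop 1))).exists
    obtain ⟨hbig, hX0, hX1⟩ := hX
    have hXpos : 0 < X := by linarith
    have hfl : X / 2 ≤ ⌊X⌋₊ := by
      have h1 : (1 : ℝ) ≤ ⌊X⌋₊ := by exact_mod_cast (Nat.one_le_floor_iff _).2 hX1
      have h2 := Nat.lt_floor_add_one X
      linarith
    have h1 : (X / 2) ^ v ≤ C * X ^ ((v : ℝ) - d / 2) := by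
      calc (X / 2) ^ v ≤ (⌊X⌋₊ : ℝ) ^ v := pow_le_pow_left₀ (by positivity) hfl _
        _ ≤ Jcount v w X := by exact_mod_cast pow_le_Jcount v w hXpos.le
        _ ≤ _ := h X hX0
        _ = _ := by congr 2; rw [hd]; ring
    rw [Real.rpow_sub hXpos, Real.rpow_natCast, div_pow, mul_div_assoc', div_le_div_iff₀
      (by positivity) (by positivity)] at h1
    have hXv : 0 < X ^ v := by positivity
    have h2 : X ^ v * X ^ (d / 2) ≤ X ^ v * (C * 2 ^ v) := by linarith
    exact absurd (le_of_mul_le_mul_left h2 hXv) (not_le.2 hbig)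

theorem le_s0C {k v w : ℕ} (hw : 1 ≤ w) (hwk : w ≤ k - 1) :
    (k : ℝ) ^ 2 + k - 2 ≤ s0C k v w := by
  have hΔ0 : 0 ≤ DstarC k v := (etaExp_nonneg v (k - 1)).trans (le_max_right _ _)
  have hΔ : (k : ℝ) * (k + 1) / 2 - 1 - v ≤ DstarC k v := by
    refine le_trans ?_ (le_max_left _ _)
    linarith [le_etaExp v k]
  have hw1 : (1 : ℝ) ≤ w := by exact_mod_cast hw
  have hwk' : (w : ℝ) + 1 ≤ k := by exact_mod_cast (by omega : w + 1 ≤ k)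
  unfold s0C
  generalize DstarC k v = Δ at *
  set t : ℝ := (k : ℝ) * (k + 1) / 2 - 1 - v with ht
  have hB : 2 * (k : ℝ) ^ 2 - 2 - (2 * (v : ℝ) + (w : ℝ) ^ 2 - w)
      = ((k : ℝ) ^ 2 - k) + 2 * t - w * (w - 1) := by rw [ht]; ring
  have hD : (w : ℝ) * (w + 1) ≤ (k : ℝ) ^ 2 - k := by nlinarith
  have key : (2 * (k : ℝ) ^ 2 - 2 - (2 * (v : ℝ) + (w : ℝ) ^ 2 - w)) / (1 + Δ / w)
      ≤ (k : ℝ) ^ 2 - k := by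
    rw [hB, div_le_iff₀ (by positivity)]
    set D := (k : ℝ) ^ 2 - k
    have hw0 : (0 : ℝ) < w := by linarith
    refine le_of_mul_le_mul_right ?_ hw0
    have e : D * (1 + Δ / w) * w = D * w + D * Δ := by field_simp
    rw [e]
    have hD0 : 0 ≤ D := le_trans (by positivity) hD
    have hww : 0 ≤ (w : ℝ) * (w - 1) := mul_nonneg hw0.le (by linarith)
    rcases le_or_gt t 0 with h | h
    · nlinarith [mul_nonneg hD0 hΔ0, mul_nonneg hww hw0.le, mul_nonneg (neg_nonneg.2 h) hw0.le]
    · have h1 : t * (w * (w + 1)) ≤ D * Δ := by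
        calc t * (w * (w + 1)) ≤ Δ * D := mul_le_mul hΔ hD (by positivity) hΔ0
          _ = _ := mul_comm _ _
      have h2 : 0 ≤ t * (w * (w - 1)) := mul_nonneg h.le hww
      nlinarith [mul_nonneg hww hw0.le]
  linarith

theorem le_of_s1C_lt {k s : ℕ} (hk : 3 ≤ k) (hs : s1C k < s) : k * (k + 1) ≤ s + 1 := by
  have hk3 : (3 : ℝ) ≤ k := by exact_mod_cast hk
  obtain ⟨x, ⟨v, w, hw, hwk, _, _, rfl⟩, hx⟩ := exists_lt_of_csInf_lt
    (s := {x : ℝ | ∃ v w : ℕ, 1 ≤ w ∧ w ≤ k-1 ∧ 1 ≤ v ∧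
      2*(v:ℝ) + (w:ℝ)^2 - (w:ℝ) < 2*(k:ℝ)^2 - 2 ∧ x = s0C k v w})
    ⟨_, 1, 1, le_rfl, by omega, le_rfl, by push_cast; nlinarith, rfl⟩ hs
  have h := (le_s0C (v := v) hw hwk).trans_lt hx
  have h2 : (k : ℝ) * (k + 1) < s + 2 := by linarith
  have h3 : k * (k + 1) < s + 2 := by exact_mod_cast h2
  omega

theorem norm_gk_le (k : ℕ) {X : ℝ} (hX : 0 ≤ X) (α : ℝ) : ‖gk k X α‖ ≤ X := by
  refine (norm_sum_le _ _).trans ?_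
  simp only [norm_ec]
  simpa using Nat.floor_le hX

theorem volume_real_minorArcs_le (k : ℕ) (X : ℝ) :
    MeasureTheory.volume.real (minorArcs k X) ≤ 1 := by
  have h := MeasureTheory.measureReal_mono (μ := MeasureTheory.volume)
    (fun _ hα => hα.1 : minorArcs k X ⊆ Set.Ico (0 : ℝ) 1) (by simp)
  simpa using h

theorem pow_le_inv_mul_pow_add {t T : ℝ} (ht : 0 ≤ t) (hT : 0 < T) (n : ℕ) :
    t ^ n ≤ T⁻¹ * t ^ (n + 1) + T ^ n := by
  rcases le_or_gt t T with h | h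
  · have := pow_le_pow_left₀ ht h n
    have h2 : 0 ≤ T⁻¹ * t ^ (n + 1) := by positivity
    linarith
  · have h1 : t ^ n ≤ T⁻¹ * t ^ (n + 1) := by
      rw [inv_mul_eq_div, le_div_iff₀ hT, pow_succ]
      exact mul_le_mul_of_nonneg_left h.le (by positivity)
    have h2 : 0 ≤ T ^ n := by positivity
    linarith

theorem minor_arc_bound {k s : ℕ} (hk : 3 ≤ k) (hs : k * (k + 1) ≤ s + 1) :
    ∃ δ : ℝ, 0 < δ ∧ ∃ C : ℝ, 0 < C ∧ ∃ X₀ : ℝ, ∀ X : ℝ, X₀ ≤ X →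
      (∫ α in minorArcs k X, ‖gk k X α‖^s) ≤ C * X ^ ((s:ℝ) - (k:ℝ) - δ) := by
  obtain ⟨l, rfl⟩ : ∃ l, k = l + 2 := ⟨k - 2, by omega⟩
  obtain ⟨C, hC, hmain⟩ := integral_minorArcs_critical_le (l := l) (by omega)
    (ε := 1 / 4) (by norm_num)
  rw [two_mul_tri] at hmain
  set k := l + 2 with hkdef
  have hk3 : (3 : ℝ) ≤ k := by exact_mod_cast hk
  refine ⟨1 / 4, by norm_num, C + 1, by linarith, 4 * (k : ℝ) ^ 2, fun X hX => ?_⟩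
  have hX1 : 1 ≤ X := by nlinarith
  have hX0 : 0 < X := by linarith
  have hI := hmain X hX
  have hcont : ∀ n : ℕ, Continuous fun α => ‖gk k X α‖ ^ n := fun n => (continuous_gk k X).norm.pow n
  rcases Nat.lt_or_ge s (k * (k + 1)) with hlt | hge
  · have hs' : k * (k + 1) = s + 1 := by omega
    have hsR : (k : ℝ) * (k + 1) = s + 1 := by exact_mod_cast hs'
    rw [hs'] at hI
    set T := X ^ (1 / 2 : ℝ) with hT
    have hT0 : 0 < T := by positivity
    have h1 : ∫ α in minorArcs k X, ‖gk k X α‖ ^ s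
        ≤ ∫ α in minorArcs k X, (T⁻¹ * ‖gk k X α‖ ^ (s + 1) + T ^ s) :=
      MeasureTheory.setIntegral_mono_on (integrableOn_minorArcs (hcont s) k X)
        (integrableOn_minorArcs (((hcont (s + 1)).const_mul _).add_const _) k X)
        (measurableSet_minorArcs k X)
        fun α _ => pow_le_inv_mul_pow_add (norm_nonneg _) hT0 s
    rw [MeasureTheory.integral_add (integrableOn_minorArcs ((hcont (s + 1)).const_mul _) k X)
      (integrableOn_minorArcs continuous_const k X), MeasureTheory.integral_const_mul,
      MeasureTheory.setIntegral_const, smul_eq_mul] at h1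
    have h2 : T⁻¹ * ∫ α in minorArcs k X, ‖gk k X α‖ ^ (s + 1)
        ≤ C * X ^ ((s : ℝ) - k - 1 / 4) := by
      calc _ ≤ T⁻¹ * (C * X ^ ((k : ℝ) ^ 2 - 1 + 1 / 4)) := by gcongr
        _ = C * X ^ ((s : ℝ) - k - 1 / 4) := by
          rw [hT, ← Real.rpow_neg hX0.le, mul_left_comm, ← Real.rpow_add hX0]
          congr 2
          linarith
    have h3 : T ^ s ≤ X ^ ((s : ℝ) - k - 1 / 4) := by
      rw [hT, ← Real.rpow_natCast, ← Real.rpow_mul hX0.le]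
      refine Real.rpow_le_rpow_of_exponent_le hX1 ?_
      nlinarith
    have h4 : MeasureTheory.volume.real (minorArcs k X) * T ^ s ≤ T ^ s :=
      mul_le_of_le_one_left (by positivity) (volume_real_minorArcs_le k X)
    linarith
  · have h1 : ∫ α in minorArcs k X, ‖gk k X α‖ ^ s
        ≤ ∫ α in minorArcs k X, X ^ (s - k * (k + 1)) * ‖gk k X α‖ ^ (k * (k + 1)) := by
      refine MeasureTheory.setIntegral_mono_on (integrableOn_minorArcs (hcont s) k X)
        (integrableOn_minorArcs ((hcont _).const_mul _) k X)
        (measurableSet_minorArcs k X) fun α _ => ?_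
      calc ‖gk k X α‖ ^ s = ‖gk k X α‖ ^ (s - k * (k + 1)) * ‖gk k X α‖ ^ (k * (k + 1)) := by
            rw [← pow_add, Nat.sub_add_cancel hge]
        _ ≤ _ := by
            have := norm_gk_le k hX0.le α
            gcongr
    rw [MeasureTheory.integral_const_mul] at h1
    calc _ ≤ _ := h1
      _ ≤ X ^ (s - k * (k + 1)) * (C * X ^ ((k : ℝ) ^ 2 - 1 + 1 / 4)) := by gcongr
      _ = C * X ^ ((s : ℝ) - k - 3 / 4) := by
          rw [← Real.rpow_natCast, mul_left_comm, ← Real.rpow_add hX0, Nat.cast_sub hge]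
          congr 2
          push_cast; ring
      _ ≤ (C + 1) * X ^ ((s : ℝ) - k - 1 / 4) := by
          refine mul_le_mul (by linarith) (Real.rpow_le_rpow_of_exponent_le hX1 (by linarith))
            (by positivity) (by linarith)

end minorArcBounds

/-- Theorem 9.2: for k ≥ 3 and s > s₁(k) there is δ > 0 with
∫_𝔪 |g_k(α;X)|^s dα ≤ C X^{s-k-δ}. -/
theorem theorem9_2 (k s : ℕ) (hk : 3 ≤ k) (hs : s1C k < (s:ℝ)) :
    ∃ δ : ℝ, 0 < δ ∧ ∃ C : ℝ, 0 < C ∧ ∃ X₀ : ℝ, ∀ X : ℝ, X₀ ≤ X →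
      (∫ α in minorArcs k X, ‖gk k X α‖^s) ≤ C * X ^ ((s:ℝ) - (k:ℝ) - δ) := by
  exact minor_arc_bound hk (le_of_s1C_lt hk hs)
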